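/- arXiv:1312.0471 — 3 statements merged into one kernel-verified Lean document; each statement's English description precedes it below -/
import Mathlib

section
/- Let $\varphi$ be an automorphism of $\mathbb{B}_N$ whose only fixed point in $\overline{\mathbb{B}_N}$ is $e_1 = (1,0,\dots,0) \in S_N$. Then for all $z \in \mathbb{B}_N$, $\frac{|1-\varphi_1(z)|^2}{1-\|\varphi(z)\|^2} = \frac{|1-z_1|^2}{1-\|z\|^2}$, where $\varphi_1(z)$ and $z_1$ denote first components. -/
open Metric

section WolffAux
open Filter Topology
variable {E : Type*} [NormedAddCommGroup E] [InnerProductSpace ℂ E]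

noncomputable def mobS (a : E) : ℝ := Real.sqrt (1 - ‖a‖ ^ 2)

noncomputable def mob (a z : E) : E :=
  (1 - inner ℂ a z)⁻¹ • (a - (mobS a : ℂ) • z - (inner ℂ a z / (1 + (mobS a : ℂ))) • a)

lemma one_sub_ne {a z : E} (ha : ‖a‖ ≤ 1) (hz : ‖z‖ < 1) : (1 : ℂ) - inner ℂ a z ≠ 0 := by
  intro h
  have h1 : (inner ℂ a z : ℂ) = 1 := (sub_eq_zero.mp h).symm
  have h2 := norm_inner_le_norm (𝕜 := ℂ) a z
  rw [h1, norm_one] at h2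
  nlinarith [norm_nonneg a, norm_nonneg z]

lemma mobS_pos {a : E} (ha : ‖a‖ < 1) : 0 < mobS a := by
  apply Real.sqrt_pos.mpr
  nlinarith [norm_nonneg a]

lemma mobS_sq {a : E} (ha : ‖a‖ < 1) : mobS a ^ 2 = 1 - ‖a‖ ^ 2 := by
  apply Real.sq_sqrt
  nlinarith [norm_nonneg a]

lemma mob_norm {a z : E} (ha : ‖a‖ < 1) (hz : ‖z‖ < 1) :
    1 - ‖mob a z‖ ^ 2 = (1 - ‖a‖ ^ 2) * (1 - ‖z‖ ^ 2) / ‖(1 : ℂ) - inner ℂ a z‖ ^ 2 := by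
  have hne := one_sub_ne ha.le hz
  have hs := mobS_pos ha
  have hs2 := mobS_sq ha
  have hn : ‖(1 : ℂ) - inner ℂ a z‖ ^ 2 ≠ 0 := by positivity
  rw [mob, norm_smul, norm_inv, mul_pow, inv_pow, eq_div_iff hn, sub_mul, mul_comm (_⁻¹), mul_assoc,
    inv_mul_cancel₀ hn]
  have key : a - (mobS a : ℂ) • z - (inner ℂ a z / (1 + (mobS a : ℂ))) • a
     = (1 - inner ℂ a z / (1 + (mobS a : ℂ))) • a - (mobS a : ℂ) • z := by
    rw [sub_smul, one_smul]; abel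
  rw [key, @norm_sub_sq ℂ E _ _ _ (_ • a), norm_smul, norm_smul, inner_smul_left, inner_smul_right]
  generalize (inner ℂ a z : ℂ) = u at *
  generalize mobS a = s at *
  have e1 : (1 : ℂ) - u / (1 + (s : ℂ)) = ⟨1 - u.re / (1 + s), - (u.im / (1 + s))⟩ := by
    have : (1 : ℂ) + (s : ℂ) = ((1 + s : ℝ) : ℂ) := by push_cast; rfl
    rw [this]
    apply Complex.ext <;> simp [-Complex.ofReal_add, Complex.div_ofReal_re, Complex.div_ofReal_im]
  rw [e1, mul_pow, mul_pow, ← Complex.normSq_eq_norm_sq, ← Complex.normSq_eq_norm_sq,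
    ← Complex.normSq_eq_norm_sq]
  have hA : ‖a‖ ^ 2 = 1 - s ^ 2 := by linarith
  rw [hA]
  simp [Complex.normSq_apply]
  field_simp
  ring

lemma mob_lt {a z : E} (ha : ‖a‖ < 1) (hz : ‖z‖ < 1) : ‖mob a z‖ < 1 := by
  have h := mob_norm ha hz
  have hne := one_sub_ne ha.le hz
  have h1 : 0 < 1 - ‖a‖ ^ 2 := by nlinarith [norm_nonneg a]
  have h2 : 0 < 1 - ‖z‖ ^ 2 := by nlinarith [norm_nonneg z]
  have : 0 < 1 - ‖mob a z‖ ^ 2 := by rw [h]; positivity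
  nlinarith [norm_nonneg (mob a z)]

lemma mob_zero (a : E) : mob a 0 = a := by simp [mob]

lemma one_add_ne {a : E} (ha : ‖a‖ < 1) : (1 : ℂ) + (mobS a : ℂ) ≠ 0 := by
  have := mobS_pos ha
  have h : (1 : ℂ) + (mobS a : ℂ) = ((1 + mobS a : ℝ) : ℂ) := by push_cast; rfl
  rw [h]
  exact_mod_cast (by positivity : (1 + mobS a) ≠ 0)

lemma inner_self_mob {a : E} (ha : ‖a‖ < 1) : (inner ℂ a a : ℂ) = 1 - (mobS a : ℂ) ^ 2 := by
  rw [inner_self_eq_norm_sq_to_K]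
  have := mobS_sq ha
  have h : ‖a‖ ^ 2 = 1 - mobS a ^ 2 := by linarith
  have h' := congrArg (fun x : ℝ => (x : ℂ)) h
  push_cast at h'
  exact h'

lemma mob_inner {a z : E} (ha : ‖a‖ < 1) (hz : ‖z‖ < 1) :
    (1 : ℂ) - inner ℂ a (mob a z) = (mobS a : ℂ) ^ 2 / (1 - inner ℂ a z) := by
  have hne := one_sub_ne ha.le hz
  have h1 := one_add_ne ha
  rw [mob, inner_smul_right, inner_sub_right, inner_sub_right, inner_smul_right, inner_smul_right,
    inner_self_mob ha]
  field_simp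
  ring

lemma mob_mob {a z : E} (ha : ‖a‖ < 1) (hz : ‖z‖ < 1) : mob a (mob a z) = z := by
  have hne := one_sub_ne ha.le hz
  have h1 := one_add_ne ha
  have hs : (mobS a : ℂ) ≠ 0 := by exact_mod_cast (mobS_pos ha).ne'
  have h2 := mob_inner ha hz
  have h3 : (inner ℂ a (mob a z) : ℂ) = 1 - (mobS a : ℂ) ^ 2 / (1 - inner ℂ a z) := by
    rw [← h2]; ring
  rw [mob, h2, h3]
  unfold mob
  match_scalars
  · field_simp
    ring
  · field_simp

lemma mob_self {a : E} (ha : ‖a‖ < 1) : mob a a = 0 := by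
  have := mob_mob ha (z := 0) (by simp)
  rwa [mob_zero] at this

lemma mob_diff {a : E} (ha : ‖a‖ < 1) : DifferentiableOn ℂ (mob a) (ball 0 1) := by
  have hi : Differentiable ℂ (fun z : E => (inner ℂ a z : ℂ)) :=
    (innerSL ℂ a).differentiable
  unfold mob
  apply DifferentiableOn.smul
  · apply DifferentiableOn.inv
    · exact ((differentiable_const _).sub hi).differentiableOn
    · intro z hz
      exact one_sub_ne ha.le (by simpa using hz)
  · apply Differentiable.differentiableOn
    have h2 : Differentiable ℂ (fun z : E => (inner ℂ a z / (1 + (mobS a : ℂ)) : ℂ)) := by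
      simp only [div_eq_mul_inv]
      exact hi.mul_const _
    fun_prop

/-- strict Schwarz-Pick -/
lemma schwarz_pick {g : E → E} {r : ℝ} (hr : r < 1) (hg : DifferentiableOn ℂ g (ball 0 1))
    (hm : ∀ z ∈ ball (0 : E) 1, ‖g z‖ ≤ r) {a z : E} (ha : ‖a‖ < 1) (hz : ‖z‖ < 1) (hne : a ≠ z) :
    ‖mob (g a) (g z)‖ < ‖mob a z‖ := by
  have hb : ∀ z : E, ‖z‖ < 1 → z ∈ ball (0 : E) 1 := fun z hz => by simpa using hz
  have hga : ‖g a‖ < 1 := (hm a (hb a ha)).trans_lt hr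
  have hr0 : 0 ≤ r := (norm_nonneg _).trans (hm a (hb a ha))
  set δ : ℝ := (1 - ‖g a‖ ^ 2) * (1 - r ^ 2) / 4 with hδ
  have hA : 0 < 1 - ‖g a‖ ^ 2 := by nlinarith [norm_nonneg (g a)]
  have hR : 0 < 1 - r ^ 2 := by nlinarith
  have hδ0 : 0 < δ := by positivity
  have hbound : ∀ w : E, ‖w‖ < 1 → ‖mob (g a) (g w)‖ ^ 2 ≤ 1 - δ := by
    intro w hw
    have hgw := hm w (hb w hw)
    have hgw1 := hgw.trans_lt hr
    have h := mob_norm hga hgw1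
    have hne := one_sub_ne hga.le hgw1
    have hle : ‖(1 : ℂ) - inner ℂ (g a) (g w)‖ ≤ 2 := by
      refine (norm_sub_le _ _).trans ?_
      have := norm_inner_le_norm (𝕜 := ℂ) (g a) (g w)
      rw [norm_one]
      nlinarith [norm_nonneg (g a), norm_nonneg (g w)]
    have hp : 0 < ‖(1 : ℂ) - inner ℂ (g a) (g w)‖ := norm_pos_iff.mpr hne
    have : δ ≤ (1 - ‖g a‖ ^ 2) * (1 - ‖g w‖ ^ 2) / ‖(1 : ℂ) - inner ℂ (g a) (g w)‖ ^ 2 := by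
      rw [hδ]
      apply div_le_div₀
      · have : 0 < 1 - ‖g w‖ ^ 2 := by nlinarith [norm_nonneg (g w)]
        positivity
      · apply mul_le_mul_of_nonneg_left _ hA.le
        nlinarith [norm_nonneg (g w)]
      · positivity
      · nlinarith
    linarith
  have hδ1 : 0 ≤ 1 - δ := (sq_nonneg _).trans (hbound a ha)
  set R := Real.sqrt (1 - δ) with hRdef
  have hR1 : R < 1 := by
    rw [hRdef, Real.sqrt_lt' one_pos]; linarith
  have hbound' : ∀ w : E, ‖w‖ < 1 → ‖mob (g a) (g w)‖ ≤ R := fun w hw =>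
    Real.le_sqrt_of_sq_le (hbound w hw)
  let F : E → E := fun w => mob (g a) (g (mob a w))
  have hF0 : F 0 = 0 := by simp only [F, mob_zero, mob_self hga]
  have hFd : DifferentiableOn ℂ F (ball 0 1) := by
    have h1 : DifferentiableOn ℂ (fun w => g (mob a w)) (ball 0 1) :=
      hg.comp (mob_diff ha) (fun w hw => hb _ (mob_lt ha (by simpa using hw)))
    exact (mob_diff hga).comp h1
      (fun w hw => hb _ ((hm _ (hb _ (mob_lt ha (by simpa using hw)))).trans_lt hr))
  have hFm : Set.MapsTo F (ball 0 1) (closedBall (F 0) R) := by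
    intro w hw
    rw [hF0]
    simpa [F] using hbound' _ (mob_lt ha (z := w) (by simpa using hw))
  have hS := Complex.dist_le_div_mul_dist_of_mapsTo_ball hFd hFm (hb _ (mob_lt ha hz))
  rw [hF0, dist_zero_right, dist_zero_right] at hS
  simp only [F, mob_mob ha hz] at hS
  have hpos : 0 < ‖mob a z‖ := by
    rw [norm_pos_iff]
    intro h0
    have := mob_mob ha hz
    rw [h0, mob_zero] at this
    exact hne this
  calc _ ≤ R / 1 * ‖mob a z‖ := hS
    _ < 1 * ‖mob a z‖ := by gcongr; simpa using hR1
    _ = _ := one_mul _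

lemma mob_cont {g : E → E} {r : ℝ} (hr : r < 1) (hg : ContinuousOn g (ball 0 1))
    (hm : ∀ z ∈ ball (0 : E) 1, ‖g z‖ ≤ r) :
    ContinuousOn (fun z => ‖mob z (g z)‖) (closedBall 0 r) := by
  have hsub : closedBall (0 : E) r ⊆ ball 0 1 := closedBall_subset_ball hr
  have hg' := hg.mono hsub
  have hi : ContinuousOn (fun z => (inner ℂ z (g z) : ℂ)) (closedBall 0 r) :=
    continuousOn_id.inner hg'
  have hs : Continuous (fun z : E => (mobS z : ℂ)) := by
    unfold mobS; fun_prop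
  apply ContinuousOn.norm
  unfold mob
  apply ContinuousOn.smul
  · apply ContinuousOn.inv₀ (continuousOn_const.sub hi)
    intro z hz
    have := hsub hz
    exact one_sub_ne (by simpa using (mem_ball.mp this).le) ((hm z this).trans_lt hr)
  · refine (continuousOn_id.sub (hs.continuousOn.smul hg')).sub (ContinuousOn.smul ?_ continuousOn_id)
    refine hi.div (continuousOn_const.add hs.continuousOn) ?_
    intro z hz
    have := hsub hz
    exact one_add_ne (by simpa using this)

lemma exists_fixed [ProperSpace E] {g : E → E} {r : ℝ} (hr : r < 1)
    (hg : DifferentiableOn ℂ g (ball 0 1))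
    (hm : ∀ z ∈ ball (0 : E) 1, ‖g z‖ ≤ r) : ∃ a : E, ‖a‖ < 1 ∧ g a = a := by
  have hr0 : 0 ≤ r := (norm_nonneg _).trans (hm 0 (by simp))
  obtain ⟨a, ha, hmin⟩ := (isCompact_closedBall (0 : E) r).exists_isMinOn
    ⟨0, by simpa using hr0⟩ (mob_cont hr hg.continuousOn hm)
  have ha1 : ‖a‖ < 1 := lt_of_le_of_lt (by simpa using ha) hr
  refine ⟨a, ha1, ?_⟩
  by_contra hne
  have hga := hm a (by simpa using ha1)
  have h1 := schwarz_pick hr hg hm ha1 (hga.trans_lt hr) (Ne.symm hne)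
  have h2 : ‖mob a (g a)‖ ≤ ‖mob (g a) (g (g a))‖ :=
    hmin (show g a ∈ closedBall (0 : E) r by simpa using hga)
  linarith

lemma wolff [ProperSpace E] {f : E → E} (hf : DifferentiableOn ℂ f (ball 0 1))
    (hm : Set.MapsTo f (ball 0 1) (ball 0 1)) {e : E} (he : ‖e‖ ≤ 1)
    (H : ∀ (r : ℕ → ℝ) (a : ℕ → E) (ξ : E), Tendsto r atTop (𝓝 1) → (∀ n, 0 < r n) →
      (∀ n, a n ∈ ball (0 : E) 1) → (∀ n, (r n : ℂ) • f (a n) = a n) → Tendsto a atTop (𝓝 ξ) →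
      ξ = e) {z : E} (hz : z ∈ ball (0 : E) 1) :
    ‖(1 : ℂ) - inner ℂ e (f z)‖ ^ 2 / (1 - ‖f z‖ ^ 2)
      ≤ ‖(1 : ℂ) - inner ℂ e z‖ ^ 2 / (1 - ‖z‖ ^ 2) := by
  let r : ℕ → ℝ := fun n => 1 - 1 / ((n : ℝ) + 2)
  have hr0 : ∀ n, 0 < r n := fun n => by
    have : 1 / ((n : ℝ) + 2) < 1 := by
      rw [div_lt_one (by positivity)]; linarith [(Nat.cast_nonneg n : (0 : ℝ) ≤ n)]
    simp only [r]; linarith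
  have hr1 : ∀ n, r n < 1 := fun n => by
    have : 0 < 1 / ((n : ℝ) + 2) := by positivity
    simp only [r]; linarith
  have hrt : Tendsto r atTop (𝓝 1) := by
    have h := (tendsto_one_div_add_atTop_nhds_zero_nat (𝕜 := ℝ)).comp (tendsto_add_atTop_nat 1)
    have h2 := (tendsto_const_nhds (x := (1 : ℝ))).sub h
    rw [sub_zero] at h2
    refine h2.congr fun n => ?_
    simp only [r, Function.comp]
    push_cast
    ring
  have hgd : ∀ n, DifferentiableOn ℂ (fun z => (r n : ℂ) • f z) (ball 0 1) :=
    fun n => hf.const_smul _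
  have hgm : ∀ n, ∀ z ∈ ball (0 : E) 1, ‖(r n : ℂ) • f z‖ ≤ r n := by
    intro n z hz
    have h1 : ‖f z‖ < 1 := by simpa using hm hz
    rw [norm_smul, Complex.norm_real, Real.norm_of_nonneg (hr0 n).le]
    nlinarith [hr0 n]
  choose a ha hfa using fun n => exists_fixed (hr1 n) (hgd n) (hgm n)
  obtain ⟨ξ, -, ψ, hψ, hlim⟩ := (isCompact_closedBall (0 : E) 1).tendsto_subseq
    (x := a) (fun n => by simpa using (ha n).le)
  have hξ : ξ = e := H (r ∘ ψ) (a ∘ ψ) ξ (hrt.comp hψ.tendsto_atTop) (fun n => hr0 _)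
    (fun n => by simpa using ha _) (fun n => hfa _) hlim
  subst hξ
  have hz1 : ‖z‖ < 1 := by simpa using hz
  have hfz1 : ‖f z‖ < 1 := by simpa using hm hz
  have hZ : 0 < 1 - ‖z‖ ^ 2 := by nlinarith [norm_nonneg z]
  have hFZ : 0 < 1 - ‖f z‖ ^ 2 := by nlinarith [norm_nonneg (f z)]
  have hineq : ∀ n, (1 - ‖z‖ ^ 2) * ‖(1 : ℂ) - inner ℂ (a n) ((r n : ℂ) • f z)‖ ^ 2
      ≤ (1 - ‖(r n : ℂ) • f z‖ ^ 2) * ‖(1 : ℂ) - inner ℂ (a n) z‖ ^ 2 := by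
    intro n
    rcases eq_or_ne (a n) z with heq | hne
    · have := hfa n
      simp only [heq] at this
      rw [this]
    have h := schwarz_pick (hr1 n) (hgd n) (hgm n) (ha n) hz1 hne
    simp only [hfa n] at h
    have hg1 : ‖(r n : ℂ) • f z‖ < 1 := (hgm n z hz).trans_lt (hr1 n)
    have h1 := mob_norm (ha n) hz1
    have h2 := mob_norm (ha n) hg1
    have h3 : 1 - ‖mob (a n) z‖ ^ 2 ≤ 1 - ‖mob (a n) ((r n : ℂ) • f z)‖ ^ 2 := by
      have := pow_le_pow_left₀ (norm_nonneg _) h.le 2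
      linarith
    rw [h1, h2] at h3
    have p1 : 0 < ‖(1 : ℂ) - inner ℂ (a n) z‖ := norm_pos_iff.mpr (one_sub_ne (ha n).le hz1)
    have p2 : 0 < ‖(1 : ℂ) - inner ℂ (a n) ((r n : ℂ) • f z)‖ :=
      norm_pos_iff.mpr (one_sub_ne (ha n).le hg1)
    rw [div_le_div_iff₀ (by positivity) (by positivity), mul_assoc, mul_assoc] at h3
    have hA : 0 < 1 - ‖a n‖ ^ 2 := by nlinarith [norm_nonneg (a n), ha n]
    exact le_of_mul_le_mul_left h3 hA
  have hrc : Tendsto (fun n => (r (ψ n) : ℂ) • f z) atTop (𝓝 (f z)) := by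
    have h1 : Tendsto (fun n => (r (ψ n) : ℂ)) atTop (𝓝 ((1 : ℝ) : ℂ)) :=
      (Complex.continuous_ofReal.tendsto 1).comp (hrt.comp hψ.tendsto_atTop)
    simpa using h1.smul_const (f z)
  have L1 : Tendsto (fun n => (1 - ‖z‖ ^ 2) *
      ‖(1 : ℂ) - inner ℂ (a (ψ n)) ((r (ψ n) : ℂ) • f z)‖ ^ 2) atTop
      (𝓝 ((1 - ‖z‖ ^ 2) * ‖(1 : ℂ) - inner ℂ ξ (f z)‖ ^ 2)) :=
    ((tendsto_const_nhds.sub (Filter.Tendsto.inner hlim hrc)).norm.pow 2).const_mul _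
  have L2 : Tendsto (fun n => (1 - ‖(r (ψ n) : ℂ) • f z‖ ^ 2) *
      ‖(1 : ℂ) - inner ℂ (a (ψ n)) z‖ ^ 2) atTop
      (𝓝 ((1 - ‖f z‖ ^ 2) * ‖(1 : ℂ) - inner ℂ ξ z‖ ^ 2)) :=
    (tendsto_const_nhds.sub (hrc.norm.pow 2)).mul
      ((tendsto_const_nhds.sub (Filter.Tendsto.inner hlim tendsto_const_nhds)).norm.pow 2)
  have := le_of_tendsto_of_tendsto' L1 L2 (fun n => hineq (ψ n))
  rw [div_le_div_iff₀ hFZ hZ]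
  linarith

end WolffAux

/-- If `φ` is an automorphism of `𝔹_N` whose only fixed point in the closed ball is
`e₁ = (1,0,…,0)`, then `|1-φ(z)₁|²/(1-‖φ(z)‖²) = |1-z₁|²/(1-‖z‖²)` for all `z ∈ 𝔹_N`. -/
theorem stmt11 {N : ℕ}
    (φ φinv : EuclideanSpace ℂ (Fin (N + 1)) → EuclideanSpace ℂ (Fin (N + 1)))
    (e₁ : EuclideanSpace ℂ (Fin (N + 1))) (he₁ : e₁ = EuclideanSpace.single 0 1)
    (hφc : ContinuousOn φ (closedBall 0 1))
    (hφ : DifferentiableOn ℂ φ (ball 0 1))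
    (hφinv : DifferentiableOn ℂ φinv (ball 0 1))
    (hφm : Set.MapsTo φ (ball 0 1) (ball 0 1))
    (hφinvm : Set.MapsTo φinv (ball 0 1) (ball 0 1))
    (hleft : ∀ z ∈ ball (0 : EuclideanSpace ℂ (Fin (N + 1))) 1, φinv (φ z) = z)
    (hright : ∀ z ∈ ball (0 : EuclideanSpace ℂ (Fin (N + 1))) 1, φ (φinv z) = z)
    (hfix : φ e₁ = e₁)
    (honly : ∀ z ∈ closedBall (0 : EuclideanSpace ℂ (Fin (N + 1))) 1, φ z = z → z = e₁) :
    ∀ z ∈ ball (0 : EuclideanSpace ℂ (Fin (N + 1))) 1,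
      ‖(1 : ℂ) - φ z 0‖ ^ 2 / (1 - ‖φ z‖ ^ 2) = ‖(1 : ℂ) - z 0‖ ^ 2 / (1 - ‖z‖ ^ 2) := by
  have hin : ∀ w : EuclideanSpace ℂ (Fin (N + 1)), (inner ℂ e₁ w : ℂ) = w 0 := by
    intro w
    rw [he₁, EuclideanSpace.inner_single_left]; simp
  have he : ‖e₁‖ ≤ 1 := by rw [he₁]; simp
  have hcl : ∀ (a : ℕ → EuclideanSpace ℂ (Fin (N + 1))) (ξ),
      (∀ n, a n ∈ ball (0 : EuclideanSpace ℂ (Fin (N + 1))) 1) →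
      Filter.Tendsto a Filter.atTop (nhds ξ) → ξ ∈ closedBall (0 : EuclideanSpace ℂ (Fin (N + 1))) 1 ∧
      Filter.Tendsto (fun n => φ (a n)) Filter.atTop (nhds (φ ξ)) := by
    intro a ξ ha hlim
    have hξ : ξ ∈ closedBall (0 : EuclideanSpace ℂ (Fin (N + 1))) 1 :=
      isClosed_closedBall.mem_of_tendsto hlim
        (Filter.Eventually.of_forall fun n => ball_subset_closedBall (ha n))
    refine ⟨hξ, (hφc ξ hξ).tendsto.comp (tendsto_nhdsWithin_iff.mpr ⟨hlim, ?_⟩)⟩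
    exact Filter.Eventually.of_forall fun n => ball_subset_closedBall (ha n)
  intro z hz
  apply le_antisymm
  · have := wolff hφ hφm he (fun r a ξ hr hr0 ha hfa hlim => ?_) hz
    · simpa only [hin] using this
    obtain ⟨hξ, ht⟩ := hcl a ξ ha hlim
    apply honly ξ hξ
    have hrc : Filter.Tendsto (fun n => (r n : ℂ)) Filter.atTop (nhds ((1 : ℝ) : ℂ)) :=
      (Complex.continuous_ofReal.tendsto 1).comp hr
    have h2 := hrc.smul ht
    simp only [hfa, Complex.ofReal_one, one_smul] at h2
    exact tendsto_nhds_unique h2 hlim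
  · have := wolff hφinv hφinvm he (fun r a ξ hr hr0 ha hfa hlim => ?_) (hφm hz)
    · simpa only [hin, hleft z hz] using this
    have hrc : Filter.Tendsto (fun n => (r n : ℂ)) Filter.atTop (nhds ((1 : ℝ) : ℂ)) :=
      (Complex.continuous_ofReal.tendsto 1).comp hr
    have hb : ∀ n, φinv (a n) = (r n : ℂ)⁻¹ • a n := by
      intro n
      have h0 : (r n : ℂ) ≠ 0 := by exact_mod_cast (hr0 n).ne'
      rw [eq_inv_smul_iff₀ h0]
      exact hfa n
    have h2 : Filter.Tendsto (fun n => φinv (a n)) Filter.atTop (nhds ξ) := by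
      have := (hrc.inv₀ (by simp)).smul hlim
      simpa [hb] using this
    obtain ⟨hξ, ht⟩ := hcl (fun n => φinv (a n)) ξ (fun n => hφinvm (ha n)) h2
    apply honly ξ hξ
    have h3 : Filter.Tendsto a Filter.atTop (nhds (φ ξ)) :=
      ht.congr fun n => hright _ (ha n)
    exact tendsto_nhds_unique h3 hlim
end

section
/- Let $\varphi$ be an automorphism of $\mathbb{B}_N$ fixing only $e_1 \in S_N$, and let $\psi$ be continuous on $\overline{\mathbb{B}_N}$, holomorphic on $\mathbb{B}_N$, and bounded away from zero. Define $\psi_{(n)} = \prod_{j=0}^{n-1}\psi\circ\varphi_j$ where $\varphi_j$ is the $j$-th iterate. Then $\lim_{n\to\infty}\|\psi_{(n)}\|_\infty^{1/n} = |\psi(e_1)|$, where $\|\cdot\|_\infty$ denotes the supremum over $\overline{\mathbb{B}_N}$. -/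
open Metric Filter

section aux
variable {E : Type*} [NormedAddCommGroup E] [InnerProductSpace ℂ E]

/-- invariant -/
noncomputable def Kf (z w : E) : ℝ := ‖1 - inner ℂ w z‖^2 / ((1-‖z‖^2)*(1-‖w‖^2))

/-- involution -/
noncomputable def Tf (a z : E) : E :=
  (1 - inner ℂ a z)⁻¹ • ((1 - inner ℂ a z / (1 + (Real.sqrt (1-‖a‖^2) : ℂ))) • a
    - (Real.sqrt (1-‖a‖^2) : ℂ) • z)

lemma one_sub_pos {z : E} (hz : z ∈ ball (0:E) 1) : 0 < 1 - ‖z‖^2 := by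
  have : ‖z‖ < 1 := by simpa using hz
  nlinarith [norm_nonneg z]

lemma inner_lt {z w : E} (hz : z ∈ ball (0:E) 1) (hw : w ∈ closedBall (0:E) 1) :
    ‖inner ℂ w z‖ < 1 := by
  have h1 : ‖z‖ < 1 := by simpa using hz
  have h2 : ‖w‖ ≤ 1 := by simpa using hw
  have := norm_inner_le_norm (𝕜 := ℂ) w z
  nlinarith [norm_nonneg z, norm_nonneg w]

lemma one_sub_inner_ne {z w : E} (hz : z ∈ ball (0:E) 1) (hw : w ∈ closedBall (0:E) 1) :
    1 - inner ℂ w z ≠ 0 := by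
  intro h
  have h1 := inner_lt hz hw
  rw [← sub_eq_zero.1 h] at h1
  simp at h1

lemma num_identity (a z : E) (s : ℝ) (hs : 0 ≤ s) (hs2 : s^2 = 1 - ‖a‖^2) :
    ‖1 - inner ℂ a z‖^2 - ‖(1 - inner ℂ a z / (1 + (s : ℂ))) • a - (s : ℂ) • z‖^2
      = s^2 * (1 - ‖z‖^2) := by
  set c := inner ℂ a z with hc
  have h1s : (1 + s) ≠ 0 := by positivity
  have hα : (1 - c / (1 + (s : ℂ))) = ⟨1 - c.re/(1+s), - c.im/(1+s)⟩ := by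
    have : c / (1 + (s : ℂ)) = c / (((1 + s : ℝ)) : ℂ) := by push_cast; rfl
    rw [this]
    apply Complex.ext
    · rw [Complex.sub_re, Complex.div_ofReal_re]; simp
    · rw [Complex.sub_im, Complex.div_ofReal_im]; simp; ring
  rw [hα, @norm_sub_sq ℂ E, inner_smul_left, inner_smul_right, ← hc, norm_smul, norm_smul, mul_pow, mul_pow,
    ← Complex.normSq_eq_norm_sq, ← Complex.normSq_eq_norm_sq, ← Complex.normSq_eq_norm_sq]
  have hA : ‖a‖^2 = 1 - s^2 := by linarith
  rw [hA]
  simp [Complex.normSq_apply]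
  field_simp
  ring

lemma Tf_identity {a z : E} (ha : a ∈ ball (0:E) 1) (hz : z ∈ ball (0:E) 1) :
    1 - ‖Tf a z‖^2 = (Kf z a)⁻¹ := by
  have h0 := one_sub_inner_ne hz (ball_subset_closedBall ha)
  have h1 := one_sub_pos ha
  have := num_identity a z (Real.sqrt (1-‖a‖^2)) (Real.sqrt_nonneg _) (Real.sq_sqrt h1.le)
  rw [Real.sq_sqrt h1.le] at this
  have h2 : ‖1 - inner ℂ a z‖ ≠ 0 := by simpa using h0
  rw [Tf, Kf, norm_smul, mul_pow, norm_inv, inv_div]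
  field_simp
  rw [this]

lemma Kf_pos {z w : E} (hz : z ∈ ball (0:E) 1) (hw : w ∈ ball (0:E) 1) : 0 < Kf z w := by
  have h0 := one_sub_inner_ne hz (ball_subset_closedBall hw)
  have h1 := one_sub_pos hz
  have h2 := one_sub_pos hw
  have : 0 < ‖1 - inner ℂ w z‖ := by positivity
  unfold Kf; positivity

lemma Tf_mem {a z : E} (ha : a ∈ ball (0:E) 1) (hz : z ∈ ball (0:E) 1) :
    Tf a z ∈ ball (0:E) 1 := by
  have h := Tf_identity ha hz
  have := inv_pos.2 (Kf_pos hz ha)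
  rw [mem_ball_zero_iff]
  nlinarith [norm_nonneg (Tf a z)]

lemma Tf_zero (a : E) : Tf a 0 = a := by simp [Tf]

lemma Tf_invol {a z : E} (ha : a ∈ ball (0:E) 1) (hz : z ∈ ball (0:E) 1) :
    Tf a (Tf a z) = z := by
  have h0 := one_sub_inner_ne hz (ball_subset_closedBall ha)
  have h0' := one_sub_inner_ne (Tf_mem ha hz) (ball_subset_closedBall ha)
  have h1 := one_sub_pos ha
  have hs := Real.sq_sqrt h1.le
  have hsp : 0 < Real.sqrt (1-‖a‖^2) := Real.sqrt_pos.2 h1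
  set s := Real.sqrt (1-‖a‖^2) with hsdef
  have hsC : ((s:ℂ))^2 = 1 - (‖a‖:ℂ)^2 := by rw [← Complex.ofReal_pow, hs]; push_cast; rfl
  have hs1 : (1 + (s:ℂ)) ≠ 0 := by
    have : (((1 + s : ℝ)):ℂ) ≠ 0 := Complex.ofReal_ne_zero.2 (by positivity)
    simpa using this
  have hs0 : (s:ℂ) ≠ 0 := Complex.ofReal_ne_zero.2 hsp.ne'
  have haa : inner ℂ a a = 1 - (s:ℂ)^2 := by
    rw [inner_self_eq_norm_sq_to_K, hsC]; simp
  set c := inner ℂ a z with hc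
  have hTa : inner ℂ a (Tf a z) = (1 - (s:ℂ)^2 - c) / (1 - c) := by
    rw [Tf, ← hsdef, inner_smul_right, inner_sub_right, inner_smul_right, inner_smul_right, haa, ← hc]
    field_simp
    ring
  have h3 : 1 - inner ℂ a (Tf a z) = s^2 / (1-c) := by
    rw [hTa]; field_simp; ring
  rw [Tf, ← hsdef, h3, hTa]
  rw [Tf, ← hsdef, ← hc]
  match_scalars
  · field_simp
    ring
  · field_simp

lemma Tf_diff {a : E} (ha : a ∈ ball (0:E) 1) : DifferentiableOn ℂ (Tf a) (ball 0 1) := by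
  unfold Tf
  have hi : Differentiable ℂ (fun z : E => inner ℂ a z) := (innerSL ℂ a).differentiable
  apply DifferentiableOn.smul
  · apply DifferentiableOn.inv
    · exact (hi.const_sub 1).differentiableOn
    · intro z hz; exact one_sub_inner_ne hz (ball_subset_closedBall ha)
  · apply Differentiable.differentiableOn
    apply Differentiable.sub
    · apply Differentiable.smul_const
      simp only [div_eq_mul_inv]
      exact (hi.mul_const _).const_sub 1
    · exact differentiable_id.const_smul _

lemma one_le_Kf {z w : E} (hz : z ∈ ball (0:E) 1) (hw : w ∈ ball (0:E) 1) : 1 ≤ Kf z w := by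
  have h := Tf_identity hw hz
  have h2 : (Kf z w)⁻¹ ≤ 1 := by nlinarith [sq_nonneg ‖Tf w z‖]
  exact (inv_le_one₀ (Kf_pos hz hw)).1 h2

lemma Kf_self {z : E} (hz : z ∈ ball (0:E) 1) : Kf z z = 1 := by
  have := one_sub_pos hz
  have h : ‖1 - inner ℂ z z‖ = 1 - ‖z‖^2 := by
    rw [inner_self_eq_norm_sq_to_K]
    have : (1 : ℂ) - ((‖z‖:ℝ) : ℂ)^2 = ((1 - ‖z‖^2 : ℝ) : ℂ) := by push_cast; rfl
    rw [RCLike.ofReal_eq_complex_ofReal, this, Complex.norm_real, Real.norm_of_nonneg]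
    positivity
  rw [Kf, h, ← sq, div_self]
  positivity

lemma norm_one_sub_inner_symm (z w : E) : ‖1 - inner ℂ w z‖ = ‖1 - inner ℂ z w‖ := by
  rw [← inner_conj_symm, ← Complex.norm_conj]; simp

lemma Kf_symm (z w : E) : Kf z w = Kf w z := by
  rw [Kf, Kf, norm_one_sub_inner_symm, mul_comm]

lemma Kf_eq_one {z w : E} (hz : z ∈ ball (0:E) 1) (hw : w ∈ ball (0:E) 1) (h : Kf z w = 1) :
    z = w := by
  have h1 := Tf_identity hw hz
  rw [h] at h1
  have h2 : Tf w z = 0 := by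
    have : ‖Tf w z‖^2 = 0 := by linarith [inv_one (G := ℝ)]
    simpa using this
  rw [← Tf_invol hw hz, h2, Tf_zero]

lemma Kf_zero (z : E) : Kf z 0 = (1 - ‖z‖^2)⁻¹ := by simp [Kf]

lemma schwarz_pick_s15 {f : E → E} (hf : DifferentiableOn ℂ f (ball 0 1))
    (hm : Set.MapsTo f (ball 0 1) (ball 0 1)) {z w : E}
    (hz : z ∈ ball (0:E) 1) (hw : w ∈ ball (0:E) 1) : Kf (f z) (f w) ≤ Kf z w := by
  have hTw : Set.MapsTo (Tf w) (ball (0:E) 1) (ball 0 1) := fun x hx => Tf_mem hw hx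
  have hTf : Set.MapsTo (Tf (f w)) (ball (0:E) 1) (ball 0 1) := fun x hx => Tf_mem (hm hw) hx
  have hd : DifferentiableOn ℂ (fun u => Tf (f w) (f (Tf w u))) (ball 0 1) :=
    (Tf_diff (hm hw)).comp (hf.comp (Tf_diff hw) hTw) (hm.comp hTw)
  have h0 : Tf (f w) (f (Tf w 0)) = 0 := by
    have := Tf_invol (hm hw) (mem_ball_self (x := (0:E)) one_pos)
    rw [Tf_zero] at this ⊢
    exact this
  have key := Complex.norm_le_norm_of_mapsTo_ball (f := fun u => Tf (f w) (f (Tf w u)))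
    (z := Tf w z) hd
    (fun x hx => ball_subset_closedBall (hTf (hm (hTw hx)))) h0 (by simpa using hTw hz)
  simp only [Tf_invol hw hz] at key
  have h1 := Tf_identity hw hz
  have h2 := Tf_identity (hm hw) (hm hz)
  have h3 : (Kf z w)⁻¹ ≤ (Kf (f z) (f w))⁻¹ := by
    rw [← h1, ← h2]
    have := pow_le_pow_left₀ (norm_nonneg _) key 2
    linarith
  exact (inv_le_inv₀ (Kf_pos hz hw) (Kf_pos (hm hz) (hm hw))).1 h3

lemma midpoint_exists {z w : E} (hz : z ∈ ball (0:E) 1) (hw : w ∈ ball (0:E) 1) (hne : z ≠ w) :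
    ∃ θ : ℝ, 0 < θ ∧ θ < 1 ∧ ∃ m ∈ ball (0:E) 1, ∀ s ∈ ball (0:E) 1, ∀ M : ℝ,
      Kf z s ≤ M → Kf w s ≤ M → Kf m s ≤ θ * M := by
  have hK1 : 1 < Kf z w := lt_of_le_of_ne (one_le_Kf hz hw) fun h => hne (Kf_eq_one hz hw h.symm)
  have hA := one_sub_pos hz
  have hB := one_sub_pos hw
  set A := 1 - ‖z‖^2 with hAdef
  set B := 1 - ‖w‖^2 with hBdef
  set k := Real.sqrt (Kf z w) with hk
  have hk1 : 1 < k := by rw [hk]; exact Real.lt_sqrt_of_sq_lt (by simpa using hK1)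
  have hk2 : k^2 * (A * B) = ‖1 - inner ℂ w z‖^2 := by
    rw [hk, Real.sq_sqrt (by linarith), Kf, ← hAdef, ← hBdef]; field_simp
  set p := (1:ℂ) - inner ℂ w z with hp
  have hp0 : p ≠ 0 := one_sub_inner_ne hz (ball_subset_closedBall hw)
  set r := Real.sqrt (A / B) with hr
  have hr0 : 0 < r := Real.sqrt_pos.2 (by positivity)
  have hr2 : r^2 = A/B := Real.sq_sqrt (by positivity)
  have hpn : 0 < ‖p‖ := norm_pos_iff.2 hp0
  have hkp : r * ‖p‖ = k * A := by
    have : (r * ‖p‖)^2 = (k*A)^2 := by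
      rw [mul_pow, hr2, ← hk2]; field_simp
    exact (pow_left_inj₀ (by positivity) (by positivity) two_ne_zero).1 this
  obtain ⟨t, ht⟩ : ∃ t : ℂ, t = (r / ‖p‖ : ℝ) * p := ⟨_, rfl⟩
  have htn : ‖t‖ = r := by
    rw [ht, norm_mul, Complex.norm_real, Real.norm_of_nonneg (by positivity)]; field_simp
  have htp : (starRingEnd ℂ t) * p = ((k * A : ℝ) : ℂ) := by
    rw [ht, map_mul, Complex.conj_ofReal, mul_assoc, ← Complex.normSq_eq_conj_mul_self,
      Complex.normSq_eq_norm_sq, ← Complex.ofReal_mul, ← hkp]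
    congr 1; field_simp
  have hid : ‖1 + t‖^2 - ‖z + t • w‖^2 = 2 * A * (1 + k) := by
    have e1 : ‖1+t‖^2 = 1 + 2 * (starRingEnd ℂ t).re + r^2 := by
      rw [← htn, ← Complex.normSq_eq_norm_sq, ← Complex.normSq_eq_norm_sq]
      simp [Complex.normSq_apply]; ring
    have e2 : ‖z + t • w‖^2 = ‖z‖^2 + 2 * (starRingEnd ℂ t * inner ℂ w z).re + r^2 * ‖w‖^2 := by
      rw [@norm_add_sq ℂ E, norm_smul, htn, mul_pow, inner_smul_right, ← inner_conj_symm z w]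
      simp only [RCLike.re_eq_complex_re, Complex.mul_re, Complex.conj_re, Complex.conj_im]
      ring
    have e3 : (starRingEnd ℂ t).re - (starRingEnd ℂ t * inner ℂ w z).re = k * A := by
      have : (starRingEnd ℂ t) * p = starRingEnd ℂ t - starRingEnd ℂ t * inner ℂ w z := by
        rw [hp]; ring
      rw [← Complex.sub_re, ← this, htp, Complex.ofReal_re]
    have e4 : r^2 * (1 - ‖w‖^2) = A := by rw [← hBdef, hr2]; field_simp
    rw [e1, e2]
    nlinarith
  have h1t : 1 + t ≠ 0 := by
    intro h
    rw [h] at hid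
    have : 0 < 2 * A * (1+k) := by positivity
    simp at hid
    nlinarith [sq_nonneg ‖z + t • w‖]
  have h1tn : 0 < ‖1+t‖ := norm_pos_iff.2 h1t
  set m := (1+t)⁻¹ • (z + t • w) with hm
  have hmm : 1 - ‖m‖^2 = 2 * A * (1+k) / ‖1+t‖^2 := by
    rw [hm, norm_smul, norm_inv, mul_pow, ← hid]; field_simp
  have hmb : m ∈ ball (0:E) 1 := by
    rw [mem_ball_zero_iff]
    have : 0 < 2 * A * (1 + k) / ‖1+t‖^2 := by positivity
    nlinarith [norm_nonneg m]
  refine ⟨2 / (1+k), by positivity, by rw [div_lt_one (by positivity)]; linarith, m, hmb, ?_⟩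
  intro s hs M h1 h2
  have hS := one_sub_pos hs
  have e : ‖1 - inner ℂ s m‖ * ‖1+t‖ ≤ ‖1 - inner ℂ s z‖ + r * ‖1 - inner ℂ s w‖ := by
    rw [← htn, ← norm_mul, ← norm_mul]
    refine le_trans (le_of_eq ?_) (norm_add_le _ _)
    congr 1
    rw [hm, inner_smul_right, inner_add_right, inner_smul_right]
    field_simp
    ring
  rw [Kf, div_le_iff₀ (by positivity)] at h1 h2
  rw [Kf, div_le_iff₀ (by rw [hmm]; positivity), hmm]
  rw [← hAdef] at h1
  rw [← hBdef] at h2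
  have h3 : (r * ‖1 - inner ℂ s w‖)^2 ≤ M * (A * (1 - ‖s‖^2)) := by
    rw [mul_pow, hr2]
    calc A / B * ‖1 - inner ℂ s w‖^2 ≤ A / B * (M * (B * (1 - ‖s‖^2))) := by gcongr
      _ = _ := by field_simp
  have h4 : (‖1 - inner ℂ s m‖ * ‖1+t‖)^2 ≤ 4 * (M * (A * (1 - ‖s‖^2))) := by
    calc _ ≤ (‖1 - inner ℂ s z‖ + r * ‖1 - inner ℂ s w‖)^2 := by gcongr
      _ ≤ _ := by nlinarith [sq_nonneg (‖1 - inner ℂ s z‖ - r * ‖1 - inner ℂ s w‖)]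
  have h5 : 2 / (1 + k) * M * (2 * A * (1 + k) / ‖1 + t‖ ^ 2 * (1 - ‖s‖ ^ 2))
     = 4 * (M * (A * (1 - ‖s‖^2))) / ‖1+t‖^2 := by field_simp; ring
  rw [h5, le_div_iff₀ (by positivity), ← mul_pow]
  exact h4

lemma norm_sub_sq_le {u v : E} (hu : u ∈ closedBall (0:E) 1) (hv : v ∈ closedBall (0:E) 1) :
    ‖u - v‖^2 ≤ 2 * ‖1 - inner ℂ v u‖ := by
  have h1 : ‖u‖ ≤ 1 := by simpa using hu
  have h2 : ‖v‖ ≤ 1 := by simpa using hv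
  have h3 := Complex.re_le_norm (1 - inner ℂ v u)
  rw [norm_sub_rev, @norm_sub_sq ℂ E]
  simp at h3 ⊢
  nlinarith [norm_nonneg u, norm_nonneg v]

lemma Kf_zero_le {u w : E} (hu : u ∈ ball (0:E) 1) (hw : w ∈ ball (0:E) 1) :
    Kf u 0 ≤ Kf u w / (1 - ‖w‖)^2 := by
  have h1 := one_sub_pos hu
  have h2 := one_sub_pos hw
  have hu' : ‖u‖ < 1 := by simpa using hu
  have hw' : ‖w‖ < 1 := by simpa using hw
  have h3 : 0 < 1 - ‖w‖ := by linarith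
  have h4 : 1 - ‖w‖ ≤ ‖1 - inner ℂ w u‖ := by
    have := norm_sub_norm_le (1:ℂ) (inner ℂ w u)
    have h5 := norm_inner_le_norm (𝕜 := ℂ) w u
    simp at this
    nlinarith [norm_nonneg w, norm_nonneg u]
  rw [Kf_zero, Kf, le_div_iff₀ (by positivity), le_div_iff₀ (by positivity)]
  have h6 : (1 - ‖w‖)^2 ≤ ‖1 - inner ℂ w u‖^2 := by gcongr
  calc _ = (1-‖w‖)^2 * (1 - ‖w‖^2) := by field_simp
    _ ≤ (1-‖w‖)^2 * 1 := by gcongr; nlinarith [norm_nonneg w]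
    _ ≤ _ := by linarith

lemma Kf_continuousAt {y : E} (hy : y ∈ ball (0:E) 1) :
    ContinuousAt (fun p : E × E => Kf p.1 p.2) (y, y) := by
  unfold Kf
  have := one_sub_pos hy
  apply ContinuousAt.div
  · fun_prop
  · fun_prop
  · simp only; positivity

section dyn
variable {φ g : E → E}

lemma iter_inv (hm : Set.MapsTo φ (ball (0:E) 1) (ball 0 1))
    (hK : ∀ z ∈ ball (0:E) 1, ∀ w ∈ ball (0:E) 1, Kf (φ z) (φ w) = Kf z w) (n : ℕ) :
    ∀ z ∈ ball (0:E) 1, ∀ w ∈ ball (0:E) 1, Kf (φ^[n] z) (φ^[n] w) = Kf z w := by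
  induction n with
  | zero => simp
  | succ n ih =>
    intro z hz w hw
    rw [Function.iterate_succ_apply, Function.iterate_succ_apply, ih _ (hm hz) _ (hm hw), hK z hz w hw]

lemma fixed_of_bounded [ProperSpace E] (hm : Set.MapsTo φ (ball (0:E) 1) (ball 0 1))
    (hgm : Set.MapsTo g (ball (0:E) 1) (ball 0 1))
    (hr : ∀ z ∈ ball (0:E) 1, φ (g z) = z)
    (hK : ∀ z ∈ ball (0:E) 1, ∀ w ∈ ball (0:E) 1, Kf (φ z) (φ w) = Kf z w)
    (R : ℝ) (hR : ∀ n, Kf (φ^[n] 0) 0 ≤ R) : ∃ z ∈ ball (0:E) 1, φ z = z := by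
  have z0 : (0:E) ∈ ball (0:E) 1 := mem_ball_self one_pos
  set S : Set E := {s | s ∈ ball (0:E) 1 ∧ ∃ n, φ^[n] s = 0 ∨ φ^[n] 0 = s} with hS
  have hS0 : (0:E) ∈ S := ⟨z0, 0, Or.inl rfl⟩
  have hSpre : ∀ s ∈ S, ∃ s' ∈ S, φ s' = s := by
    rintro s ⟨hs, n, h | h⟩
    · refine ⟨g s, ⟨hgm hs, n+1, Or.inl ?_⟩, hr s hs⟩
      rw [Function.iterate_succ_apply, hr s hs, h]
    · cases n with
      | zero =>
        refine ⟨g s, ⟨hgm hs, 1, Or.inl ?_⟩, hr s hs⟩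
        simp only [Function.iterate_zero, id] at h
        rw [Function.iterate_one, hr s hs, h]
      | succ n =>
        refine ⟨φ^[n] 0, ⟨hm.iterate n z0, n, Or.inr rfl⟩, ?_⟩
        rw [← h, Function.iterate_succ_apply']
  have hSR : ∀ s ∈ S, Kf 0 s ≤ R := by
    rintro s ⟨hs, n, h | h⟩
    · rw [← iter_inv hm hK n 0 z0 s hs, h]; exact hR n
    · rw [← h, Kf_symm]; exact hR n
  set F : ℝ → Set E := fun c => {z | ∀ s ∈ S, ‖1 - inner ℂ s z‖^2 ≤ c * ((1-‖z‖^2)*(1-‖s‖^2))}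
    with hF
  have hFball : ∀ c, 0 < c → ∀ z ∈ F c, z ∈ ball (0:E) 1 := by
    intro c hc z hz
    have := hz 0 hS0
    simp at this
    rw [mem_ball_zero_iff]
    by_contra! hcon
    have : 1 - ‖z‖^2 ≤ 0 := by nlinarith
    nlinarith
  have hFiff : ∀ c, ∀ z ∈ ball (0:E) 1, (z ∈ F c ↔ ∀ s ∈ S, Kf z s ≤ c) := by
    intro c z hz
    refine forall₂_congr fun s hs => ?_
    have h1 := one_sub_pos hz
    have h2 := one_sub_pos hs.1
    rw [Kf, div_le_iff₀ (by positivity)]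
  have hFclosed : ∀ c, IsClosed (F c) := by
    intro c
    simp only [hF, Set.ofPred_forall]
    refine isClosed_iInter fun s => isClosed_iInter fun _ => ?_
    exact isClosed_le (by fun_prop) (by fun_prop)
  have hFcomp : ∀ c, 0 < c → IsCompact (F c) := fun c hc =>
    (isCompact_closedBall (0:E) 1).of_isClosed_subset (hFclosed c)
      fun z hz => ball_subset_closedBall (hFball c hc z hz)
  have hF1 : ∀ c, 0 < c → (F c).Nonempty → 1 ≤ c := by
    rintro c hc ⟨z, hz⟩
    have hzb := hFball c hc z hz
    exact (one_le_Kf hzb z0).trans ((hFiff c z hzb).1 hz 0 hS0)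
  set D : Set ℝ := {c | 0 < c ∧ (F c).Nonempty} with hD
  have hRD : R ∈ D := by
    refine ⟨?_, 0, (hFiff R 0 z0).2 hSR⟩
    have := (one_le_Kf z0 z0).trans (hSR 0 hS0)
    linarith
  have hDb : BddBelow D := ⟨1, fun c hc => hF1 c hc.1 hc.2⟩
  set M := sInf D with hM
  have hM1 : 1 ≤ M := le_csInf ⟨R, hRD⟩ fun c hc => hF1 c hc.1 hc.2
  have hFmono : ∀ c d, c ≤ d → 0 < c → F c ⊆ F d := by
    intro c d hcd hc z hz
    have hzb := hFball c hc z hz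
    rw [hFiff _ _ hzb] at hz ⊢
    exact fun s hs => (hz s hs).trans hcd
  have hMne : (F M).Nonempty := by
    have hpos : ∀ k : ℕ, (0:ℝ) < 1 / ((k:ℝ) + 1) := fun k => by positivity
    have : (⋂ k : ℕ, F (M + 1 / ((k:ℝ)+1))).Nonempty := by
      apply IsCompact.nonempty_iInter_of_sequence_nonempty_isCompact_isClosed
      · intro k
        apply hFmono
        · have : (1:ℝ) / (((k+1 : ℕ):ℝ)+1) ≤ 1 / ((k:ℝ)+1) := by
            apply one_div_le_one_div_of_le <;> push_cast <;> [positivity; linarith]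
          linarith
        · have := hpos (k+1); linarith
      · intro k
        obtain ⟨c, hc, hcl⟩ := exists_lt_of_csInf_lt ⟨R, hRD⟩ (show sInf D < M + 1 / ((k:ℝ)+1) by
          have := hpos k; rw [← hM]; linarith)
        exact hc.2.mono (hFmono _ _ hcl.le hc.1)
      · apply hFcomp
        have := hpos 0; linarith
      · exact fun k => hFclosed _
    obtain ⟨z, hz⟩ := this
    rw [Set.mem_iInter] at hz
    have hzb : z ∈ ball (0:E) 1 := hFball _ (by have := hpos 0; linarith) z (hz 0)
    refine ⟨z, (hFiff _ _ hzb).2 fun s hs => ?_⟩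
    have ht : Tendsto (fun k : ℕ => M + 1 / ((k:ℝ)+1)) atTop (nhds (M + 0)) :=
      tendsto_const_nhds.add tendsto_one_div_add_atTop_nhds_zero_nat
    rw [add_zero] at ht
    exact ge_of_tendsto' ht fun k => (hFiff _ _ hzb).1 (hz k) s hs
  obtain ⟨z, hz⟩ := hMne
  have hzb := hFball M (by linarith) z hz
  refine ⟨z, hzb, ?_⟩
  by_contra hne
  obtain ⟨θ, hθ0, hθ1, m, hmb, hmid⟩ := midpoint_exists (hm hzb) hzb hne
  rw [hFiff _ _ hzb] at hz
  have hφz : ∀ s ∈ S, Kf (φ z) s ≤ M := by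
    intro s hs
    obtain ⟨s', hs', rfl⟩ := hSpre s hs
    rw [hK z hzb s' hs'.1]
    exact hz s' hs'
  have : θ * M ∈ D := ⟨by positivity, m, (hFiff _ _ hmb).2 fun s hs =>
    hmid s hs.1 M (hφz s hs) (hz s hs)⟩
  have := csInf_le hDb this
  rw [← hM] at this
  nlinarith

lemma bounded_of_recurrent [ProperSpace E] (hm : Set.MapsTo φ (ball (0:E) 1) (ball 0 1))
    (hK : ∀ z ∈ ball (0:E) 1, ∀ w ∈ ball (0:E) 1, Kf (φ z) (φ w) = Kf z w)
    (R : ℝ) (hR2 : 2 ≤ R) (hR : ∃ᶠ n in atTop, Kf (φ^[n] 0) 0 ≤ R) :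
    ∃ B, ∀ n, Kf (φ^[n] 0) 0 ≤ B := by
  have z0 : (0:E) ∈ ball (0:E) 1 := mem_ball_self one_pos
  set x : ℕ → E := fun n => φ^[n] 0 with hx
  have hxb : ∀ n, x n ∈ ball (0:E) 1 := fun n => hm.iterate n z0
  have hxadd : ∀ i j, x (i + j) = φ^[i] (x j) := fun i j => Function.iterate_add_apply φ i j 0
  set C : Set E := {z | 1 ≤ R * (1 - ‖z‖^2)} with hC
  have hCb : C ⊆ ball (0:E) 1 := by
    intro z hz
    rw [mem_ball_zero_iff]
    by_contra! hcon
    have : 1 - ‖z‖^2 ≤ 0 := by nlinarith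
    have : (1:ℝ) ≤ R * (1 - ‖z‖^2) := hz
    nlinarith
  have hCc : IsCompact C := (isCompact_closedBall (0:E) 1).of_isClosed_subset
    (isClosed_le (by fun_prop) (by fun_prop)) (hCb.trans ball_subset_closedBall)
  have hCiff : ∀ n, x n ∈ C ↔ Kf (x n) 0 ≤ R := by
    intro n
    have := one_sub_pos (hxb n)
    rw [Kf_zero, inv_le_iff_one_le_mul₀ this]; rfl
  obtain ⟨L, hL⟩ : ∃ L : ℕ, ∀ n, L ≤ n → x n ∈ C → ∃ k, 1 ≤ k ∧ k ≤ L ∧ Kf (x n) (x k) ≤ R := by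
    apply hCc.induction_on (p := fun S => ∃ L : ℕ, ∀ n, L ≤ n → x n ∈ S →
      ∃ k, 1 ≤ k ∧ k ≤ L ∧ Kf (x n) (x k) ≤ R)
    · exact ⟨0, fun n _ h => absurd h (Set.notMem_empty _)⟩
    · rintro s t hst ⟨L, hL⟩
      exact ⟨L, fun n hn h => hL n hn (hst h)⟩
    · rintro s t ⟨L, hL⟩ ⟨L', hL'⟩
      refine ⟨max L L', fun n hn h => ?_⟩
      rcases h with h | h
      · obtain ⟨k, h1, h2, h3⟩ := hL n ((le_max_left _ _).trans hn) h
        exact ⟨k, h1, h2.trans (le_max_left _ _), h3⟩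
      · obtain ⟨k, h1, h2, h3⟩ := hL' n ((le_max_right _ _).trans hn) h
        exact ⟨k, h1, h2.trans (le_max_right _ _), h3⟩
    · intro y hy
      have hc := Kf_continuousAt (hCb hy)
      have : ∀ᶠ p : E × E in nhds (y, y), Kf p.1 p.2 < R := by
        apply hc.eventually_lt_const
        simp only [Kf_self (hCb hy)]; linarith
      rw [nhds_prod_eq] at this
      obtain ⟨t, ht, h⟩ := (eventually_prod_self_iff (r := fun a b : E => Kf a b < R)).1 this
      refine ⟨t, mem_nhdsWithin_of_mem_nhds ht, ?_⟩
      by_cases hk : ∃ k, 1 ≤ k ∧ x k ∈ t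
      · obtain ⟨k, hk1, hk⟩ := hk
        exact ⟨k, fun n _ hn => ⟨k, hk1, le_rfl, (h _ hn _ hk).le⟩⟩
      · exact ⟨1, fun n hn1 hn => absurd ⟨n, hn1, hn⟩ hk⟩
  have hdesc : ∀ m n, m ≤ n → x n ∈ C → ∃ n', x n' ∈ C ∧ n' ≤ m ∧ m ≤ n' + L := by
    intro m n
    induction n using Nat.strong_induction_on with
    | _ n ih =>
      intro hmn hn
      by_cases hnL : n ≤ L
      · refine ⟨0, ?_, Nat.zero_le _, by omega⟩
        simp [hx, hC]; linarith
      · obtain ⟨k, h1, h2, h3⟩ := hL n (by omega) hn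
        have hk : x (n - k) ∈ C := by
          rw [hCiff]
          have e1 : x n = φ^[k] (x (n-k)) := by rw [← hxadd]; congr 1; omega
          have e2 : x k = φ^[k] 0 := rfl
          rw [e1, e2, iter_inv hm hK k _ (hxb _) _ z0] at h3
          exact h3
        by_cases hnk : n - k ≤ m
        · exact ⟨n - k, hk, hnk, by omega⟩
        · exact ih (n-k) (by omega) (by omega) hk
  refine ⟨∑ r ∈ Finset.range (L+1), R / (1 - ‖x r‖)^2, fun m => ?_⟩
  obtain ⟨n, hmn, hn⟩ := (frequently_atTop.1 hR) m
  obtain ⟨n', h1, h2, h3⟩ := hdesc m n hmn ((hCiff n).2 hn)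
  have e1 : φ^[m] 0 = φ^[m-n'] (x n') := by
    rw [← hxadd]; change x m = _; congr 1; omega
  have hb : φ^[m-n'] (x n') ∈ ball (0:E) 1 := hm.iterate _ (hxb n')
  rw [e1]
  refine (Kf_zero_le hb (hxb (m-n'))).trans ?_
  have e2 : Kf (φ^[m-n'] (x n')) (x (m-n')) ≤ R := by
    change Kf (φ^[m-n'] (x n')) (φ^[m-n'] 0) ≤ R
    rw [iter_inv hm hK _ _ (hxb _) _ z0]
    exact (hCiff n').1 h1
  calc _ ≤ R / (1 - ‖x (m-n')‖)^2 := by gcongr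
    _ ≤ _ := Finset.single_le_sum (f := fun r => R / (1 - ‖x r‖)^2) (fun i _ => by positivity)
      (Finset.mem_range.2 (by omega))

lemma orbit_tendsto_norm [ProperSpace E] (hm : Set.MapsTo φ (ball (0:E) 1) (ball 0 1))
    (hgm : Set.MapsTo g (ball (0:E) 1) (ball 0 1))
    (hr : ∀ z ∈ ball (0:E) 1, φ (g z) = z)
    (hK : ∀ z ∈ ball (0:E) 1, ∀ w ∈ ball (0:E) 1, Kf (φ z) (φ w) = Kf z w)
    (hno : ∀ z ∈ ball (0:E) 1, φ z ≠ z) :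
    Tendsto (fun n => 1 - ‖φ^[n] 0‖^2) atTop (nhds 0) := by
  have z0 : (0:E) ∈ ball (0:E) 1 := mem_ball_self one_pos
  rw [tendsto_order]
  refine ⟨fun a ha => Eventually.of_forall fun n => ha.trans (one_sub_pos (hm.iterate n z0)), ?_⟩
  intro ε hε
  by_contra hcon
  rw [not_eventually] at hcon
  obtain ⟨B, hB⟩ := bounded_of_recurrent hm hK (max 2 ε⁻¹) (le_max_left _ _) (hcon.mono fun n hn => by
    rw [Kf_zero]
    exact (inv_anti₀ hε (not_lt.1 hn)).trans (le_max_right _ _))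
  obtain ⟨z, hz, h⟩ := fixed_of_bounded hm hgm hr hK B hB
  exact hno z hz h

lemma conv_of [ProperSpace E] {e : E} (hφc : ContinuousOn φ (closedBall 0 1))
    (honly : ∀ z ∈ closedBall (0:E) 1, φ z = z → z = e)
    (u v : ℕ → E) (hu : ∀ n, u n ∈ ball (0:E) 1) (hv : ∀ n, v n ∈ ball (0:E) 1)
    (huv : ∀ n, φ (u n) = v n) (k : ℝ) (hk : ∀ n, Kf (u n) (v n) = k)
    (hu1 : Tendsto (fun n => 1 - ‖u n‖^2) atTop (nhds 0)) : Tendsto u atTop (nhds e) := by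
  have h1 : ∀ n, ‖φ (u n) - u n‖^4 ≤ 4 * (k * (1 - ‖u n‖^2)) := by
    intro n
    have a1 := one_sub_pos (hu n)
    have a2 := one_sub_pos (hv n)
    have a3 := norm_sub_sq_le (ball_subset_closedBall (hu n)) (ball_subset_closedBall (hv n))
    have a4 : ‖1 - inner ℂ (v n) (u n)‖^2 = k * ((1 - ‖u n‖^2) * (1 - ‖v n‖^2)) := by
      rw [← hk n, Kf]; field_simp
    have a5 : 0 < k := by rw [← hk n]; exact Kf_pos (hu n) (hv n)
    rw [huv, norm_sub_rev]
    calc ‖u n - v n‖^4 = (‖u n - v n‖^2)^2 := by ring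
      _ ≤ (2 * ‖1 - inner ℂ (v n) (u n)‖)^2 := by gcongr
      _ = 4 * (k * ((1 - ‖u n‖^2) * (1 - ‖v n‖^2))) := by rw [mul_pow, a4]; ring
      _ ≤ 4 * (k * ((1 - ‖u n‖^2) * 1)) := by gcongr; nlinarith [norm_nonneg (v n)]
      _ = _ := by ring
  have h2 : Tendsto (fun n => 4 * (k * (1 - ‖u n‖^2))) atTop (nhds 0) := by
    simpa using (hu1.const_mul k).const_mul 4
  rw [Metric.tendsto_atTop']
  intro ε hε
  have hcomp : IsCompact (closedBall (0:E) 1 \ ball e ε) := (isCompact_closedBall 0 1).diff isOpen_ball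
  by_cases hne : (closedBall (0:E) 1 \ ball e ε).Nonempty
  · obtain ⟨p, hp, hmin⟩ := hcomp.exists_isMinOn hne
      (f := fun z => ‖φ z - z‖) (((hφc.mono Set.sdiff_subset).sub continuousOn_id).norm)
    have hpos : 0 < ‖φ p - p‖ := by
      rw [norm_pos_iff, sub_ne_zero]
      intro h
      have := honly p hp.1 h
      exact hp.2 (by rw [this]; exact mem_ball_self hε)
    have := h2.eventually_lt_const (show 0 < ‖φ p - p‖^4 by positivity)
    obtain ⟨N, hN⟩ := eventually_atTop.1 this
    refine ⟨N, fun n hn => ?_⟩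
    by_contra hcon
    have h3 : ‖φ p - p‖ ≤ ‖φ (u n) - u n‖ := hmin ⟨ball_subset_closedBall (hu n), hcon⟩
    have h4 := (h1 n).trans_lt (hN n hn.le)
    have := pow_le_pow_left₀ (norm_nonneg _) h3 4
    linarith
  · refine ⟨0, fun n _ => ?_⟩
    by_contra hcon
    exact hne ⟨u n, ball_subset_closedBall (hu n), hcon⟩

lemma iter_tendsto [ProperSpace E] {e : E} (he : ‖e‖ = 1) (hfix : φ e = e)
    (hφc : ContinuousOn φ (closedBall 0 1))
    (hcm : Set.MapsTo φ (closedBall (0:E) 1) (closedBall 0 1))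
    (hm : Set.MapsTo φ (ball (0:E) 1) (ball 0 1))
    (hgm : Set.MapsTo g (ball (0:E) 1) (ball 0 1))
    (hr : ∀ z ∈ ball (0:E) 1, φ (g z) = z)
    (hK : ∀ z ∈ ball (0:E) 1, ∀ w ∈ ball (0:E) 1, Kf (φ z) (φ w) = Kf z w)
    (honly : ∀ z ∈ closedBall (0:E) 1, φ z = z → z = e) :
    ∀ z ∈ closedBall (0:E) 1, Tendsto (fun n => φ^[n] z) atTop (nhds e) := by
  have z0 : (0:E) ∈ ball (0:E) 1 := mem_ball_self one_pos
  have hno : ∀ z ∈ ball (0:E) 1, φ z ≠ z := by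
    intro z hz h
    have := honly z (ball_subset_closedBall hz) h
    rw [this] at hz
    simp [he] at hz
  have hb1 := orbit_tendsto_norm hm hgm hr hK hno
  have hbb : ∀ n, φ^[n] 0 ∈ ball (0:E) 1 := fun n => hm.iterate n z0
  have hab : ∀ n, g^[n] 0 ∈ ball (0:E) 1 := fun n => hgm.iterate n z0
  have hiter : ∀ n, φ^[n] (g^[n] 0) = 0 := by
    intro n
    induction n with
    | zero => rfl
    | succ n ih =>
      rw [Function.iterate_succ_apply, Function.iterate_succ_apply', hr _ (hab n), ih]
  have hnorm : ∀ n, 1 - ‖g^[n] 0‖^2 = 1 - ‖φ^[n] 0‖^2 := by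
    intro n
    have := iter_inv hm hK n _ (hab n) 0 z0
    rw [hiter, Kf_symm, Kf_zero, Kf_zero] at this
    exact (inv_injective this).symm
  have ha1 : Tendsto (fun n => 1 - ‖g^[n] 0‖^2) atTop (nhds 0) := by
    simp only [hnorm]; exact hb1
  have hb : Tendsto (fun n => φ^[n] 0) atTop (nhds e) := by
    refine conv_of hφc honly _ (fun n => φ^[n+1] 0) hbb (fun n => hbb (n+1))
      (fun n => (Function.iterate_succ_apply' φ n 0).symm) (Kf 0 (φ 0)) (fun n => ?_) hb1
    rw [Function.iterate_succ_apply, iter_inv hm hK n _ z0 _ (hm z0)]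
  have ha : Tendsto (fun n => g^[n] 0) atTop (nhds e) := by
    have : Tendsto (fun n => g^[n+1] 0) atTop (nhds e) := by
      refine conv_of hφc honly _ (fun n => g^[n] 0) (fun n => hab (n+1)) hab
        (fun n => ?_) (Kf (g 0) 0) (fun n => ?_) ((tendsto_add_atTop_iff_nat 1).2 ha1)
      · rw [Function.iterate_succ_apply', hr _ (hab n)]
      · induction n with
        | zero => rfl
        | succ n ih =>
          rw [← hK _ (hab _) _ (hab _), Function.iterate_succ_apply', hr _ (hab _),
            Function.iterate_succ_apply' g n, hr _ (hab _)]
          rwa [Function.iterate_succ_apply'] at ih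
    exact (tendsto_add_atTop_iff_nat 1).1 this
  have hid : ∀ n, ∀ z ∈ closedBall (0:E) 1,
      ‖1 - inner ℂ (φ^[n] 0) (φ^[n] z)‖^2 * ‖1 - inner ℂ (g^[n] 0) z‖^2 = (1 - ‖φ^[n] 0‖^2)^2 := by
    intro n
    have hcn : ContinuousOn (φ^[n]) (closedBall (0:E) 1) := hφc.iterate hcm n
    have hEq : Set.EqOn (fun z => ‖1 - inner ℂ (φ^[n] 0) (φ^[n] z)‖^2 * ‖1 - inner ℂ (g^[n] 0) z‖^2)
        (fun _ => (1 - ‖φ^[n] 0‖^2)^2) (ball (0:E) 1) := by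
      intro z hz
      have hφz : φ^[n] z ∈ ball (0:E) 1 := hm.iterate n hz
      have h1 := iter_inv hm hK n z hz 0 z0
      have h2 := iter_inv hm hK n z hz _ (hab n)
      have p1 := one_sub_pos hz
      have p2 := one_sub_pos hφz
      have p3 := one_sub_pos (hbb n)
      rw [hiter, Kf_zero, Kf, hnorm] at h2
      rw [Kf_zero, Kf] at h1
      field_simp at h1 h2
      simp only
      have : (1 - ‖z‖^2) * (1 - ‖φ^[n] z‖^2) ≠ 0 := by positivity
      apply mul_left_cancel₀ this
      linear_combination (‖1 - inner ℂ (g^[n] 0) z‖^2 * (1 - ‖φ^[n] z‖^2)) * h1 -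
        (1 - ‖φ^[n] z‖^2) * (1 - ‖φ^[n] 0‖^2) * h2
    have := hEq.of_subset_closure (t := closedBall (0:E) 1) (by fun_prop) (by fun_prop)
      ball_subset_closedBall (by rw [closure_ball _ one_ne_zero])
    exact this
  intro z hz
  by_cases hze : z = e
  · subst hze
    simp only [Function.iterate_fixed hfix]
    exact tendsto_const_nhds
  have hec : e ∈ closedBall (0:E) 1 := by simp [he]
  have hden : Tendsto (fun n => ‖1 - inner ℂ (g^[n] 0) z‖) atTop (nhds ‖1 - inner ℂ e z‖) :=
    (tendsto_const_nhds.sub (ha.inner tendsto_const_nhds)).norm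
  have hd0 : ‖1 - inner ℂ e z‖ ≠ 0 := by
    intro h
    have := norm_sub_sq_le hz hec
    rw [h, mul_zero] at this
    have : ‖z - e‖ = 0 := by nlinarith [norm_nonneg (z - e)]
    exact hze (sub_eq_zero.1 (norm_eq_zero.1 this))
  have hq : Tendsto (fun n => 2 * ((1 - ‖φ^[n] 0‖^2) / ‖1 - inner ℂ (g^[n] 0) z‖)) atTop (nhds 0) := by
    simpa using (hb1.div hden hd0).const_mul 2
  have hsq : Tendsto (fun n => ‖φ^[n] z - φ^[n] 0‖^2) atTop (nhds 0) := by
    refine squeeze_zero (fun n => by positivity) (fun n => ?_) hq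
    refine (norm_sub_sq_le (hcm.iterate n hz) (ball_subset_closedBall (hbb n))).trans (le_of_eq ?_)
    congr 1
    have hnz : ‖1 - inner ℂ (g^[n] 0) z‖ ≠ 0 := by
      rw [norm_one_sub_inner_symm]
      exact norm_ne_zero_iff.2 (one_sub_inner_ne (hab n) hz)
    rw [eq_div_iff hnz]
    have p3 := one_sub_pos (hbb n)
    refine (pow_left_inj₀ (by positivity) p3.le two_ne_zero).1 ?_
    rw [mul_pow, hid n z hz]
  have hn : Tendsto (fun n => ‖φ^[n] z - φ^[n] 0‖) atTop (nhds 0) := by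
    have := (Real.continuous_sqrt.tendsto 0).comp hsq
    simpa [Function.comp_def] using this
  have := (tendsto_zero_iff_norm_tendsto_zero.2 hn).add hb
  simpa using this

end dyn

lemma prod_bound [ProperSpace E] {φ : E → E} {e : E} {ψ : E → ℂ}
    (hφc : ContinuousOn φ (closedBall 0 1))
    (hcm : Set.MapsTo φ (closedBall (0:E) 1) (closedBall 0 1))
    (hec : e ∈ closedBall (0:E) 1)
    (hψc : ContinuousOn ψ (closedBall 0 1))
    (hit : ∀ z ∈ closedBall (0:E) 1, Tendsto (fun n => φ^[n] z) atTop (nhds e))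
    (c : ℝ) (hc : ‖ψ e‖ < c) :
    ∃ D : ℝ, 0 < D ∧ ∀ n, ∀ z ∈ closedBall (0:E) 1,
      ‖∏ j ∈ Finset.range n, ψ (φ^[j] z)‖ ≤ D * c^n := by
  have hc0 : 0 < c := (norm_nonneg _).trans_lt hc
  set P : ℕ → E → ℂ := fun n z => ∏ j ∈ Finset.range n, ψ (φ^[j] z) with hP
  have hPc : ∀ n, ContinuousOn (P n) (closedBall (0:E) 1) := fun n =>
    continuousOn_finsetProd _ fun j _ => hψc.comp (hφc.iterate hcm j) (hcm.iterate j)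
  have hPadd : ∀ m n z, P (m + n) z = P m z * P n (φ^[m] z) := by
    intro m n z
    simp only [hP]
    rw [Finset.prod_range_add]
    congr 1
    refine Finset.prod_congr rfl fun j _ => ?_
    rw [← Function.iterate_add_apply, add_comm]
  have hpt : ∀ z ∈ closedBall (0:E) 1, ∃ n, 1 ≤ n ∧ ‖P n z‖ < c^n := by
    intro z hz
    obtain ⟨d, hd1, hd2⟩ := exists_between hc
    have hd0 : 0 < d := (norm_nonneg _).trans_lt hd1
    have ht : Tendsto (fun n => ‖ψ (φ^[n] z)‖) atTop (nhds ‖ψ e‖) := by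
      have : Tendsto (fun n => φ^[n] z) atTop (nhdsWithin e (closedBall 0 1)) :=
        tendsto_nhdsWithin_iff.2 ⟨hit z hz, Eventually.of_forall fun n => hcm.iterate n hz⟩
      exact ((hψc e hec).tendsto.comp this).norm
    obtain ⟨N, hN⟩ := eventually_atTop.1 (ht.eventually_lt_const hd1)
    have hb : ∀ k, ‖P (N + k) z‖ ≤ ‖P N z‖ * d^k := by
      intro k
      induction k with
      | zero => simp
      | succ k ih =>
        have : P (N + (k+1)) z = P (N + k) z * ψ (φ^[N+k] z) := by
          simp only [hP]; rw [← add_assoc, Finset.prod_range_succ]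
        rw [this, norm_mul, pow_succ, ← mul_assoc]
        gcongr
        exact (hN _ (by omega)).le
    have hlim : Tendsto (fun k : ℕ => ‖P N z‖ * (d/c)^k) atTop (nhds 0) := by
      simpa using (tendsto_pow_atTop_nhds_zero_of_lt_one (by positivity)
        ((div_lt_one hc0).2 hd2)).const_mul ‖P N z‖
    obtain ⟨k, hk, hk1⟩ := ((hlim.eventually_lt_const (show 0 < c^N by positivity)).and
      (eventually_ge_atTop 1)).exists
    refine ⟨N + k, by omega, (hb k).trans_lt ?_⟩
    rw [div_pow, mul_div_assoc', div_lt_iff₀ (by positivity)] at hk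
    rwa [pow_add]
  obtain ⟨M, hM⟩ : ∃ M : ℕ, ∀ z ∈ closedBall (0:E) 1, ∃ n, 1 ≤ n ∧ n ≤ M ∧ ‖P n z‖ < c^n := by
    apply (isCompact_closedBall (0:E) 1).induction_on
      (p := fun S => ∃ M : ℕ, ∀ z ∈ S, ∃ n, 1 ≤ n ∧ n ≤ M ∧ ‖P n z‖ < c^n)
    · exact ⟨0, fun z hz => absurd hz (Set.notMem_empty _)⟩
    · rintro s t hst ⟨M, hM⟩
      exact ⟨M, fun z hz => hM z (hst hz)⟩
    · rintro s t ⟨L, hL⟩ ⟨L', hL'⟩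
      refine ⟨max L L', fun z h => ?_⟩
      rcases h with h | h
      · obtain ⟨k, h1, h2, h3⟩ := hL z h
        exact ⟨k, h1, h2.trans (le_max_left _ _), h3⟩
      · obtain ⟨k, h1, h2, h3⟩ := hL' z h
        exact ⟨k, h1, h2.trans (le_max_right _ _), h3⟩
    · intro y hy
      obtain ⟨n, h1, h2⟩ := hpt y hy
      exact ⟨{z | ‖P n z‖ < c^n}, ((hPc n) y hy).norm.eventually_lt_const h2,
        n, fun z hz => ⟨n, h1, le_rfl, hz⟩⟩
  obtain ⟨B, hB⟩ := (isCompact_closedBall (0:E) 1).exists_bound_of_continuousOn hψc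
  set B' := max B c with hB'
  have hB'c : c ≤ B' := le_max_right _ _
  have hB0 : 0 < B' := hc0.trans_le hB'c
  have hPB : ∀ n, ∀ z ∈ closedBall (0:E) 1, ‖P n z‖ ≤ B'^n := by
    intro n z hz
    simp only [hP, norm_prod]
    calc _ ≤ ∏ j ∈ Finset.range n, B' := Finset.prod_le_prod (fun _ _ => norm_nonneg _)
          fun j _ => (hB _ (hcm.iterate j hz)).trans (le_max_left _ _)
      _ = _ := by simp
  have hBc : 1 ≤ B' / c := (one_le_div hc0).2 hB'c
  refine ⟨(B'/c)^M, by positivity, fun n => ?_⟩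
  induction n using Nat.strong_induction_on with
  | _ n ih =>
    intro z hz
    change ‖P n z‖ ≤ _
    by_cases hnM : n ≤ M
    · calc ‖P n z‖ ≤ B'^n := hPB n z hz
        _ = (B'/c)^n * c^n := by rw [← mul_pow]; field_simp
        _ ≤ (B'/c)^M * c^n := by gcongr
    · obtain ⟨k, h1, h2, h3⟩ := hM z hz
      have e1 : n = k + (n - k) := by omega
      have h4 : ‖P (n-k) (φ^[k] z)‖ ≤ (B'/c)^M * c^(n-k) := ih (n-k) (by omega) _ (hcm.iterate k hz)
      rw [e1, hPadd, norm_mul]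
      calc _ ≤ c^k * ((B'/c)^M * c^(n-k)) := by gcongr
        _ = _ := by rw [pow_add]; ring

end aux

/-- Let `φ` be an automorphism of `𝔹_N` fixing only `e₁` (in the closed ball), and let `ψ` be
continuous on the closed ball, holomorphic on the ball and bounded away from zero. With
`ψ_{(n)} = ∏_{j=0}^{n-1} ψ ∘ φ_j`, one has `lim_n ‖ψ_{(n)}‖_∞^{1/n} = |ψ(e₁)|`. -/
theorem stmt15 {N : ℕ}
    (φ φinv : EuclideanSpace ℂ (Fin (N + 1)) → EuclideanSpace ℂ (Fin (N + 1)))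
    (e₁ : EuclideanSpace ℂ (Fin (N + 1))) (he₁ : e₁ = EuclideanSpace.single 0 1)
    (hφc : ContinuousOn φ (closedBall 0 1))
    (hφ : DifferentiableOn ℂ φ (ball 0 1))
    (hφinv : DifferentiableOn ℂ φinv (ball 0 1))
    (hφm : Set.MapsTo φ (ball 0 1) (ball 0 1))
    (hφinvm : Set.MapsTo φinv (ball 0 1) (ball 0 1))
    (hhomeo : Set.BijOn φ (closedBall 0 1) (closedBall 0 1))
    (hleft : ∀ z ∈ ball (0 : EuclideanSpace ℂ (Fin (N + 1))) 1, φinv (φ z) = z)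
    (hright : ∀ z ∈ ball (0 : EuclideanSpace ℂ (Fin (N + 1))) 1, φ (φinv z) = z)
    (hfix : φ e₁ = e₁)
    (honly : ∀ z ∈ closedBall (0 : EuclideanSpace ℂ (Fin (N + 1))) 1, φ z = z → z = e₁)
    (ψ : EuclideanSpace ℂ (Fin (N + 1)) → ℂ)
    (hψc : ContinuousOn ψ (closedBall 0 1))
    (hψ : DifferentiableOn ℂ ψ (ball 0 1))
    (hψ0 : ∃ ε > (0 : ℝ), ∀ z ∈ ball (0 : EuclideanSpace ℂ (Fin (N + 1))) 1, ε ≤ ‖ψ z‖) :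
    Tendsto
      (fun n : ℕ =>
        (sSup ((fun z => ‖∏ j ∈ Finset.range n, ψ (φ^[j] z)‖) ''
          closedBall (0 : EuclideanSpace ℂ (Fin (N + 1))) 1)) ^ (1 / (n : ℝ)))
      atTop (nhds ‖ψ e₁‖) := by
  have hK : ∀ z ∈ ball (0 : EuclideanSpace ℂ (Fin (N + 1))) 1,
      ∀ w ∈ ball (0 : EuclideanSpace ℂ (Fin (N + 1))) 1, Kf (φ z) (φ w) = Kf z w := by
    intro z hz w hw
    refine le_antisymm (schwarz_pick_s15 hφ hφm hz hw) ?_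
    have := schwarz_pick_s15 hφinv hφinvm (hφm hz) (hφm hw)
    rwa [hleft z hz, hleft w hw] at this
  have he : ‖e₁‖ = 1 := by rw [he₁]; simp
  have hec : e₁ ∈ closedBall (0 : EuclideanSpace ℂ (Fin (N + 1))) 1 := by simp [he]
  have hit := iter_tendsto he hfix hφc hhomeo.mapsTo hφm hφinvm hright hK honly
  have hfixn : ∀ n, ‖∏ j ∈ Finset.range n, ψ (φ^[j] e₁)‖ = ‖ψ e₁‖^n := by
    intro n
    simp [Function.iterate_fixed hfix]
  have hbound := prod_bound hφc hhomeo.mapsTo hec hψc hit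
  set s : ℕ → ℝ := fun n => sSup ((fun z => ‖∏ j ∈ Finset.range n, ψ (φ^[j] z)‖) ''
          closedBall (0 : EuclideanSpace ℂ (Fin (N + 1))) 1) with hs
  have hlow : ∀ n, ‖ψ e₁‖^n ≤ s n := by
    intro n
    obtain ⟨D, hD0, hD⟩ := hbound (‖ψ e₁‖ + 1) (by linarith)
    rw [← hfixn n]
    refine le_csSup ⟨D * (‖ψ e₁‖ + 1)^n, ?_⟩ ⟨e₁, hec, rfl⟩
    rintro _ ⟨z, hz, rfl⟩
    exact hD n z hz
  change Tendsto (fun n : ℕ => s n ^ (1 / (n:ℝ))) atTop (nhds ‖ψ e₁‖)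
  have hroot : ∀ (x : ℝ), 0 ≤ x → ∀ n : ℕ, 1 ≤ n → (x^n) ^ (1 / (n:ℝ)) = x := by
    intro x hx n hn
    rw [one_div, Real.pow_rpow_inv_natCast hx (by omega)]
  rw [tendsto_order]
  constructor
  · intro a ha
    filter_upwards [eventually_ge_atTop 1] with n hn
    refine ha.trans_le ?_
    rw [← hroot _ (norm_nonneg (ψ e₁)) n hn]
    exact Real.rpow_le_rpow (by positivity) (hlow n) (by positivity)
  · intro a ha
    obtain ⟨c, hc1, hc2⟩ := exists_between ha
    have hc0 : 0 ≤ c := (norm_nonneg _).trans hc1.le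
    obtain ⟨D, hD0, hD⟩ := hbound c hc1
    have hup : ∀ n, s n ≤ D * c^n := by
      intro n
      refine csSup_le ⟨_, e₁, hec, rfl⟩ ?_
      rintro _ ⟨z, hz, rfl⟩
      exact hD n z hz
    have hlim : Tendsto (fun n : ℕ => D ^ (1 / (n:ℝ)) * c) atTop (nhds c) := by
      have h1 : Tendsto (fun n : ℕ => D ^ (1 / (n:ℝ))) atTop (nhds (D ^ (0:ℝ))) :=
        tendsto_const_nhds.rpow tendsto_one_div_atTop_nhds_zero_nat (Or.inl hD0.ne')
      simpa using h1.mul_const c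
    filter_upwards [eventually_ge_atTop 1, hlim.eventually_lt_const hc2] with n hn h
    refine lt_of_le_of_lt ?_ h
    calc s n ^ (1 / (n:ℝ)) ≤ (D * c^n) ^ (1 / (n:ℝ)) :=
          Real.rpow_le_rpow ((by positivity : (0:ℝ) ≤ ‖ψ e₁‖^n).trans (hlow n)) (hup n) (by positivity)
      _ = _ := by rw [Real.mul_rpow hD0.le (by positivity), hroot c hc0 n hn]
end

section
/- Let $\varphi$ be a hyperbolic automorphism of $\mathbb{D}$ with attracting fixed point $a$ and repelling fixed point $b$ on $\partial\mathbb{D}$, and let $\psi$ be holomorphic on $\mathbb{D}$, continuous on $\overline{\mathbb{D}}$, and bounded away from zero. Then the spectrum of $C_{\psi,\varphi}$ on the Hardy space $H^2(\mathbb{D})$ is the annulus $\{\lambda \in \mathbb{C} : \min(|\psi(a)|\rho^{1/2}, |\psi(b)|\rho^{-1/2}) \leq |\lambda| \leq \max(|\psi(a)|\rho^{1/2}, |\psi(b)|\rho^{-1/2})\}$, where $\rho = \varphi'(a)^{-1} = \varphi'(b) > 1$. -/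
open Metric Filter

/-- The Hardy space `H²(𝔻)`, modelled as the space of square-summable Taylor coefficient
sequences. -/
abbrev H2 : Type := lp (fun _ : ℕ => ℂ) 2

/-- The holomorphic function on the unit disc associated to an element of `H²(𝔻)`. -/
noncomputable def H2.toFun (f : H2) (z : ℂ) : ℂ := ∑' n : ℕ, f n * z ^ n


section HardyBasics

open scoped ComplexConjugate InnerProductSpace

/-- Auxiliary: circle restriction. -/
noncomputable def hsCirc (c : ℕ → ℂ) (r : ℝ) : C(AddCircle (1 : ℝ), ℂ) :=
  ∑' n : ℕ, (c n * (r : ℂ) ^ n) • fourier (T := (1 : ℝ)) (n : ℤ)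

lemma hsCirc_summable {c : ℕ → ℂ} {r : ℝ} (h : Summable fun n => c n * (r : ℂ) ^ n) :
    Summable fun n : ℕ => (c n * (r : ℂ) ^ n) • fourier (T := (1 : ℝ)) (n : ℤ) := by
  refine Summable.of_norm ?_
  refine h.norm.congr fun n => ?_
  rw [norm_smul, fourier_norm, mul_one]

lemma hsCirc_apply {c : ℕ → ℂ} {r : ℝ} (h : Summable fun n => c n * (r : ℂ) ^ n)
    (t : AddCircle (1 : ℝ)) :
    HasSum (fun n => c n * ((r : ℂ) * (AddCircle.toCircle t : ℂ)) ^ n) (hsCirc c r t) := by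
  have := (hsCirc_summable h).hasSum
  have h2 := this.map (ContinuousMap.evalCLM ℂ t) (ContinuousMap.evalCLM ℂ t).continuous
  have e : (fun n => c n * ((r : ℂ) * (AddCircle.toCircle t : ℂ)) ^ n) =
      (⇑(ContinuousMap.evalCLM ℂ t) ∘ fun n : ℕ => (c n * (r : ℂ) ^ n) • fourier (T := (1 : ℝ)) (n : ℤ)) := by
    funext n
    simp [mul_pow, fourier_apply, AddCircle.toCircle_nsmul, mul_assoc]
  rw [e]; exact h2

lemma hsCirc_norm {c : ℕ → ℂ} {r : ℝ} (h : Summable fun n => c n * (r : ℂ) ^ n) :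
    HasSum (fun n => ‖c n * (r : ℂ) ^ n‖ ^ 2)
      (‖ContinuousMap.toLp (E := ℂ) 2 (AddCircle.haarAddCircle (T := (1 : ℝ))) ℂ (hsCirc c r)‖ ^ 2) := by
  have := (hsCirc_summable h).hasSum
  set A := ContinuousMap.toLp (E := ℂ) 2 (AddCircle.haarAddCircle (T := (1 : ℝ))) ℂ
  have h2 := this.map A A.continuous
  have h3 : Tendsto (fun s : Finset ℕ => ‖∑ n ∈ s, A ((c n * (r : ℂ) ^ n) • fourier (T := (1 : ℝ)) (n : ℤ))‖ ^ 2)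
      atTop (nhds (‖A (hsCirc c r)‖ ^ 2)) := (h2.norm).pow 2
  refine h3.congr fun s => ?_
  have ho : Orthonormal ℂ (fun n : ℕ => fourierLp (T := (1 : ℝ)) 2 (n : ℤ)) :=
    orthonormal_fourier.comp _ Nat.cast_injective
  have e : ∀ n : ℕ, A ((c n * (r : ℂ) ^ n) • fourier (T := (1 : ℝ)) (n : ℤ)) =
      (c n * (r : ℂ) ^ n) • fourierLp (T := (1 : ℝ)) 2 (n : ℤ) := fun n => by
    rw [map_smul]
  simp_rw [e]
  rw [@norm_sq_eq_re_inner ℂ, ho.inner_sum, map_sum]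
  refine Finset.sum_congr rfl fun n _ => ?_
  rw [RCLike.conj_mul]
  norm_cast

lemma hs_norm_sq (f : H2) : HasSum (fun n => ‖f n‖ ^ 2) (‖f‖ ^ 2) := by
  have := lp.hasSum_norm (p := 2) (by norm_num) f
  simpa using this

lemma hs_coeff_le (f : H2) (n : ℕ) : ‖f n‖ ≤ ‖f‖ := lp.norm_apply_le_norm (by norm_num) f n

lemma hs_hasSum (f : H2) {z : ℂ} (hz : z ∈ ball (0 : ℂ) 1) :
    HasSum (fun n => f n * z ^ n) (f.toFun z) := by
  have hz' : ‖z‖ < 1 := by simpa using hz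
  refine Summable.hasSum ?_
  refine Summable.of_norm_bounded (g := fun n => ‖f‖ * ‖z‖ ^ n)
    ((summable_geometric_of_lt_one (norm_nonneg _) hz').mul_left _) fun n => ?_
  rw [norm_mul, norm_pow]
  gcongr
  exact hs_coeff_le f n

lemma hs_mem_eball {y : ℂ} : y ∈ Metric.eball (0 : ℂ) 1 ↔ y ∈ ball (0 : ℂ) 1 := by
  rw [Metric.mem_eball, edist_dist, mem_ball, ← ENNReal.ofReal_one,
    ENNReal.ofReal_lt_ofReal_iff one_pos]

lemma hs_powSeries {c : ℕ → ℂ} {F : ℂ → ℂ}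
    (h : ∀ z ∈ ball (0 : ℂ) 1, HasSum (fun n => c n * z ^ n) (F z)) :
    HasFPowerSeriesOnBall F (FormalMultilinearSeries.ofScalars ℂ c) 0 1 := by
  refine ⟨?_, by norm_num, ?_⟩
  · refine ENNReal.le_of_forall_nnreal_lt fun r hr => ?_
    have hr1 : (r : ℝ) < 1 := by exact_mod_cast hr
    apply FormalMultilinearSeries.le_radius_of_summable
    have := (h (r : ℝ) (by simpa using hr1)).summable.norm
    refine this.congr fun n => ?_
    simp
  · intro y hy
    have := h y (hs_mem_eball.1 hy)
    simpa [FormalMultilinearSeries.ofScalars_apply_eq, smul_eq_mul, mul_comm] using this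

lemma hs_diff (f : H2) : DifferentiableOn ℂ f.toFun (ball 0 1) := by
  have := (hs_powSeries fun z hz => hs_hasSum f hz).differentiableOn
  refine this.mono ?_
  intro y hy
  exact hs_mem_eball.2 hy

lemma hs_ext {f g : H2} (h : ∀ z ∈ ball (0 : ℂ) 1, f.toFun z = g.toFun z) : f = g := by
  have h1 := (hs_powSeries fun z hz => hs_hasSum f hz)
  have h2 := (hs_powSeries (F := f.toFun) fun z hz => (h z hz) ▸ hs_hasSum g hz)
  have h3 := h1.hasFPowerSeriesAt.eq_formalMultilinearSeries h2.hasFPowerSeriesAt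
  have h4 := FormalMultilinearSeries.ofScalars_series_injective ℂ ℂ h3
  exact lp.ext h4

lemma hs_of_bound {c : ℕ → ℂ} {K : ℝ} (hK : 0 ≤ K)
    (h : ∀ r : ℝ, 0 < r → r < 1 → ∀ s : Finset ℕ, ∑ n ∈ s, ‖c n * (r : ℂ) ^ n‖ ^ 2 ≤ K ^ 2) :
    ∃ f : H2, (∀ n, f n = c n) ∧ ‖f‖ ≤ K := by
  have key : ∀ s : Finset ℕ, ∑ n ∈ s, ‖c n‖ ^ 2 ≤ K ^ 2 := by
    intro s
    have hc : ContinuousAt (fun r : ℝ => ∑ n ∈ s, ‖c n * (r : ℂ) ^ n‖ ^ 2) 1 := by fun_prop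
    have h1 : Tendsto (fun r : ℝ => ∑ n ∈ s, ‖c n * (r : ℂ) ^ n‖ ^ 2) (nhdsWithin 1 (Set.Iio 1))
        (nhds (∑ n ∈ s, ‖c n‖ ^ 2)) := by
      have := hc.tendsto.mono_left (nhdsWithin_le_nhds (s := Set.Iio 1))
      simpa using this
    refine le_of_tendsto h1 ?_
    filter_upwards [self_mem_nhdsWithin, mem_nhdsWithin_of_mem_nhds (lt_mem_nhds zero_lt_one)] with r hr hr0
    exact h r hr0 hr s
  have hm : Memℓp c 2 := memℓp_gen' (C := K ^ 2) (by simpa using key)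
  refine ⟨⟨c, hm⟩, fun _ => rfl, ?_⟩
  refine lp.norm_le_of_forall_sum_le (by norm_num) hK ?_
  simpa using key

/-- multiplication by a bounded holomorphic function, vector version -/
lemma hs_mul {g : ℂ → ℂ} {B : ℝ} (hg : DifferentiableOn ℂ g (ball 0 1))
    (hB : ∀ z ∈ ball (0 : ℂ) 1, ‖g z‖ ≤ B) (f : H2) :
    ∃ F : H2, (∀ z ∈ ball (0 : ℂ) 1, F.toFun z = g z * f.toFun z) ∧ ‖F‖ ≤ B * ‖f‖ := by
  have hB0 : 0 ≤ B := (norm_nonneg _).trans (hB 0 (by simp))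
  have hd : DifferentiableOn ℂ (fun z => g z * f.toFun z) (ball 0 1) := hg.mul (hs_diff f)
  set c : ℕ → ℂ := fun n => ((n.factorial : ℂ))⁻¹ * iteratedDeriv n (fun z => g z * f.toFun z) 0
  have hc : ∀ z ∈ ball (0 : ℂ) 1, HasSum (fun n => c n * z ^ n) (g z * f.toFun z) := by
    intro z hz
    have := Complex.hasSum_taylorSeries_on_ball hd hz
    refine this.congr_fun ?_ |> fun h => h
    intro n
    simp [c]; ring
  obtain ⟨F, hF, hn⟩ := hs_of_bound (c := c) (K := B * ‖f‖) (by positivity) (by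
    intro r hr0 hr1 s
    have hrb : (r : ℂ) ∈ ball (0 : ℂ) 1 := by simpa [abs_of_pos hr0] using hr1
    have s1 := (hc r hrb).summable
    have s2 := (hs_hasSum f hrb).summable
    have n1 := hsCirc_norm s1
    have n2 := hsCirc_norm s2
    refine (sum_le_hasSum s (fun _ _ => by positivity) n1).trans ?_
    have h1 : ‖ContinuousMap.toLp (E := ℂ) 2 (AddCircle.haarAddCircle (T := (1 : ℝ))) ℂ (hsCirc c r)‖
        ≤ B * ‖ContinuousMap.toLp (E := ℂ) 2 (AddCircle.haarAddCircle (T := (1 : ℝ))) ℂ (hsCirc f r)‖ := by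
      refine MeasureTheory.Lp.norm_le_mul_norm_of_ae_le_mul ?_
      filter_upwards [ContinuousMap.coeFn_toLp (p := 2) (𝕜 := ℂ) (AddCircle.haarAddCircle (T := (1 : ℝ))) (hsCirc c r),
        ContinuousMap.coeFn_toLp (p := 2) (𝕜 := ℂ) (AddCircle.haarAddCircle (T := (1 : ℝ))) (hsCirc f r)] with t h1 h2
      rw [h1, h2]
      have hz : ((r : ℂ) * (AddCircle.toCircle t : ℂ)) ∈ ball (0 : ℂ) 1 := by
        rw [mem_ball_zero_iff, norm_mul, Circle.norm_coe, mul_one]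
        simpa using hrb
      rw [(hsCirc_apply s1 t).unique (hc _ hz), (hsCirc_apply s2 t).unique (hs_hasSum f hz), norm_mul]
      gcongr
      exact hB _ hz
    have h2 : ‖ContinuousMap.toLp (E := ℂ) 2 (AddCircle.haarAddCircle (T := (1 : ℝ))) ℂ (hsCirc f r)‖ ≤ ‖f‖ := by
      refine (sq_le_sq₀ (norm_nonneg _) (norm_nonneg _)).1 ?_
      refine hasSum_le (fun n => ?_) n2 (hs_norm_sq f)
      rw [norm_mul, norm_pow]
      gcongr
      refine mul_le_of_le_one_right (norm_nonneg _) (pow_le_one₀ (norm_nonneg _) ?_)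
      simpa [abs_of_pos hr0] using hr1.le
    gcongr
    exact h1.trans (by gcongr))
  refine ⟨F, fun z hz => ?_, hn⟩
  have := hs_hasSum F hz
  simp_rw [hF] at this
  exact this.unique (hc z hz)

/-- the reproducing kernel -/
noncomputable def hsK (z : ℂ) : H2 :=
  if h : ‖z‖ < 1 then
    ⟨fun n => (conj z) ^ n, by
      refine memℓp_gen ?_
      have : Summable fun n : ℕ => (‖z‖ ^ 2) ^ n :=
        summable_geometric_of_lt_one (by positivity) (by nlinarith [norm_nonneg z])
      refine this.congr fun n => ?_
      simp [← pow_mul, mul_comm]⟩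
  else 0

lemma hsK_apply {z : ℂ} (h : z ∈ ball (0 : ℂ) 1) (n : ℕ) : hsK z n = (conj z) ^ n := by
  have h' : ‖z‖ < 1 := by simpa using h
  simp [hsK, h']

lemma hsK_inner {z : ℂ} (h : z ∈ ball (0 : ℂ) 1) (f : H2) : inner ℂ (hsK z) f = f.toFun z := by
  have := lp.hasSum_inner (𝕜 := ℂ) (hsK z) f
  refine this.unique ?_
  have e : (fun n => inner ℂ (hsK z n) (f n)) = fun n => f n * z ^ n := by
    funext n
    rw [hsK_apply h]
    simp
  rw [e]
  exact hs_hasSum f h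

lemma hsK_toFun {z w : ℂ} (h : z ∈ ball (0 : ℂ) 1) (hw : w ∈ ball (0 : ℂ) 1) :
    (hsK z).toFun w = (1 - conj z * w)⁻¹ := by
  have := hs_hasSum (hsK z) hw
  refine this.unique ?_
  have h1 : ‖conj z * w‖ < 1 := by
    have h' : ‖z‖ < 1 := by simpa using h
    have hw' : ‖w‖ < 1 := by simpa using hw
    rw [norm_mul, RCLike.norm_conj]
    nlinarith [norm_nonneg z, norm_nonneg w]
  have e : (fun n => hsK z n * w ^ n) = fun n => (conj z * w) ^ n := by
    funext n
    rw [hsK_apply h, mul_pow]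
  rw [e]
  exact hasSum_geometric_of_norm_lt_one h1

lemma hs_add (f g : H2) {z : ℂ} (hz : z ∈ ball (0 : ℂ) 1) :
    (f + g).toFun z = f.toFun z + g.toFun z := by
  simp only [← hsK_inner hz, inner_add_right]

lemma hs_sub (f g : H2) {z : ℂ} (hz : z ∈ ball (0 : ℂ) 1) :
    (f - g).toFun z = f.toFun z - g.toFun z := by
  simp only [← hsK_inner hz, inner_sub_right]

lemma hs_smul (c : ℂ) (f : H2) {z : ℂ} (hz : z ∈ ball (0 : ℂ) 1) :
    (c • f).toFun z = c * f.toFun z := by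
  simp only [← hsK_inner hz, inner_smul_right]

lemma hs_norm_toFun_le (f : H2) {z : ℂ} (hz : z ∈ ball (0 : ℂ) 1) :
    ‖f.toFun z‖ ≤ ‖hsK z‖ * ‖f‖ := by
  rw [← hsK_inner hz]; exact norm_inner_le_norm _ _

lemma hs_one : ∃ f : H2, ∀ z ∈ ball (0 : ℂ) 1, f.toFun z = 1 :=
  ⟨hsK 0, fun z hz => by rw [hsK_toFun (by simp) hz]; simp⟩

/-- multiplication operator -/
lemma hs_mulOp {g : ℂ → ℂ} {B : ℝ} (hg : DifferentiableOn ℂ g (ball 0 1))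
    (hB : ∀ z ∈ ball (0 : ℂ) 1, ‖g z‖ ≤ B) :
    ∃ M : H2 →L[ℂ] H2, (∀ f : H2, ∀ z ∈ ball (0 : ℂ) 1, (M f).toFun z = g z * f.toFun z) ∧
      ‖M‖ ≤ B := by
  have hB0 : 0 ≤ B := (norm_nonneg _).trans (hB 0 (by simp))
  choose M hM hn using hs_mul hg hB
  let L : H2 →ₗ[ℂ] H2 :=
    { toFun := M
      map_add' := fun x y => hs_ext fun z hz => by
        rw [hM _ z hz, hs_add _ _ hz, hs_add _ _ hz, hM _ z hz, hM _ z hz]; ring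
      map_smul' := fun c x => hs_ext fun z hz => by
        rw [hM _ z hz, RingHom.id_apply, hs_smul _ _ hz, hs_smul _ _ hz, hM _ z hz]; ring }
  exact ⟨L.mkContinuous B hn, fun f z hz => hM f z hz, L.mkContinuous_norm_le hB0 _⟩

end HardyBasics

section Mobius

open scoped ComplexConjugate

lemma mb_den {p z : ℂ} (hp : ‖p‖ < 1) (hz : ‖z‖ ≤ 1) : 1 - conj p * z ≠ 0 := by
  intro h
  have h1 : conj p * z = 1 := by linear_combination -h
  have h2 : ‖conj p * z‖ = 1 := by rw [h1]; simp
  rw [norm_mul, RCLike.norm_conj] at h2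
  nlinarith [norm_nonneg p, norm_nonneg z]

/-- disc Mobius map -/
noncomputable def mbM (p z : ℂ) : ℂ := (z - p) / (1 - conj p * z)

lemma mb_maps {p z : ℂ} (hp : ‖p‖ < 1) (hz : ‖z‖ < 1) : ‖mbM p z‖ < 1 := by
  have hd := mb_den hp hz.le
  rw [mbM, norm_div, div_lt_one (norm_pos_iff.2 hd)]
  refine lt_of_pow_lt_pow_left₀ 2 (norm_nonneg _) ?_
  have e : ‖1 - conj p * z‖ ^ 2 - ‖z - p‖ ^ 2 = (1 - ‖p‖ ^ 2) * (1 - ‖z‖ ^ 2) := by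
    simp only [Complex.sq_norm, Complex.normSq_apply, Complex.sub_re, Complex.sub_im,
      Complex.mul_re, Complex.mul_im, Complex.conj_re, Complex.conj_im, Complex.one_re,
      Complex.one_im]
    ring
  have : 0 < (1 - ‖p‖ ^ 2) * (1 - ‖z‖ ^ 2) := by
    apply mul_pos <;> nlinarith [norm_nonneg p, norm_nonneg z]
  linarith

lemma mb_inv {p z : ℂ} (hp : ‖p‖ < 1) (hz : ‖z‖ < 1) : mbM (-p) (mbM p z) = z := by
  have hd := mb_den hp hz.le
  have hd2 : 1 - conj p * p ≠ 0 := mb_den hp hp.le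
  set D := 1 - conj p * z with hD
  have h3 : 1 - conj (-p) * ((z - p) / D) = (1 - conj p * p) / D := by
    rw [eq_div_iff hd, sub_mul, mul_assoc, div_mul_cancel₀ _ hd, map_neg, hD]
    ring
  have h4 : (z - p) / D - -p = z * (1 - conj p * p) / D := by
    rw [eq_div_iff hd, sub_mul, div_mul_cancel₀ _ hd, hD]
    ring
  unfold mbM
  rw [← hD, h3, h4, div_div_div_cancel_right₀ hd, mul_div_cancel_right₀ _ hd2]

lemma mb_diff {p : ℂ} (hp : ‖p‖ < 1) : DifferentiableOn ℂ (mbM p) (ball 0 1) := by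
  unfold mbM
  refine DifferentiableOn.div (by fun_prop) (by fun_prop) fun z hz => mb_den hp ?_
  exact (mem_ball_zero_iff.1 hz).le

lemma mb_auto (φ φinv : ℂ → ℂ)
    (hφ : DifferentiableOn ℂ φ (ball 0 1))
    (hφinv : DifferentiableOn ℂ φinv (ball 0 1))
    (hφm : Set.MapsTo φ (ball 0 1) (ball 0 1))
    (hφinvm : Set.MapsTo φinv (ball 0 1) (ball 0 1))
    (hleft : ∀ z ∈ ball (0 : ℂ) 1, φinv (φ z) = z)
    (hright : ∀ z ∈ ball (0 : ℂ) 1, φ (φinv z) = z) :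
    ∃ p ζ : ℂ, ‖p‖ < 1 ∧ ‖ζ‖ = 1 ∧ ∀ z ∈ ball (0 : ℂ) 1, φ z = ζ * mbM p z := by
  set p := φinv 0 with hpdef
  have h0 : (0 : ℂ) ∈ ball (0 : ℂ) 1 := by simp
  have hp : ‖p‖ < 1 := mem_ball_zero_iff.1 (hφinvm h0)
  have hp' : ‖-p‖ < 1 := by simpa using hp
  have m1 : Set.MapsTo (mbM p) (ball 0 1) (ball 0 1) := fun z hz =>
    mem_ball_zero_iff.2 (mb_maps hp (mem_ball_zero_iff.1 hz))
  have m2 : Set.MapsTo (mbM (-p)) (ball 0 1) (ball 0 1) := fun z hz =>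
    mem_ball_zero_iff.2 (mb_maps hp' (mem_ball_zero_iff.1 hz))
  set F : ℂ → ℂ := fun z => φ (mbM (-p) z) with hF
  set G : ℂ → ℂ := fun z => mbM p (φinv z) with hG
  have F0 : F 0 = 0 := by
    have : mbM (-p) 0 = p := by simp [mbM]
    simp only [hF]
    rw [this]
    exact hright 0 h0
  have G0 : G 0 = 0 := by simp [hG, mbM, ← hpdef]
  have Fd : DifferentiableOn ℂ F (ball 0 1) := hφ.comp (mb_diff hp') m2
  have Gd : DifferentiableOn ℂ G (ball 0 1) := (mb_diff hp).comp hφinv hφinvm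
  have Fm : Set.MapsTo F (ball 0 1) (ball 0 1) := hφm.comp m2
  have Gm : Set.MapsTo G (ball 0 1) (ball 0 1) := m1.comp hφinvm
  have GF : ∀ z ∈ ball (0 : ℂ) 1, G (F z) = z := fun z hz => by
    simp only [hF, hG]
    rw [hleft _ (m2 hz)]
    have := mb_inv (p := -p) hp' (mem_ball_zero_iff.1 hz)
    simpa using this
  have hh : ((1 / 2 : ℝ) : ℂ) ∈ ball (0 : ℂ) 1 := by
    rw [mem_ball_zero_iff, Complex.norm_real]; norm_num
  have hn : ‖F ((1 / 2 : ℝ) : ℂ)‖ = 1 / 2 := by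
    apply le_antisymm
    · have := Complex.norm_le_norm_of_mapsTo_ball Fd (Fm.mono_right ball_subset_closedBall) F0 (mem_ball_zero_iff.1 hh)
      refine this.trans ?_
      rw [Complex.norm_real]; norm_num
    · have := Complex.norm_le_norm_of_mapsTo_ball Gd (Gm.mono_right ball_subset_closedBall) G0 (mem_ball_zero_iff.1 (Fm hh))
      rw [GF _ hh] at this
      refine le_trans ?_ this
      rw [Complex.norm_real]; norm_num
  have hne : ((1 / 2 : ℝ) : ℂ) ≠ 0 := by norm_num
  obtain ⟨C, hC, hE⟩ := Complex.affine_of_mapsTo_ball_of_exists_norm_dslope_eq_div' (R₂ := 1) Fd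
    (by rw [F0]; exact Fm.mono_right ball_subset_closedBall) ⟨_, hh, by
      rw [dslope_of_ne _ hne, slope_def_field, F0, sub_zero, sub_zero, norm_div, hn,
        Complex.norm_real]; norm_num⟩
  refine ⟨p, C, hp, by simpa using hC, fun z hz => ?_⟩
  have := hE (m1 hz)
  rw [F0] at this
  simp only [hF] at this
  rw [mb_inv hp (mem_ball_zero_iff.1 hz)] at this
  rw [this]
  simp [mul_comm]

/-- all facts about the symbol used later -/
lemma mb_facts (φ φinv : ℂ → ℂ)
    (hφc : ContinuousOn φ (closedBall 0 1))
    (hφ : DifferentiableOn ℂ φ (ball 0 1))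
    (hφinv : DifferentiableOn ℂ φinv (ball 0 1))
    (hφm : Set.MapsTo φ (ball 0 1) (ball 0 1))
    (hφinvm : Set.MapsTo φinv (ball 0 1) (ball 0 1))
    (hleft : ∀ z ∈ ball (0 : ℂ) 1, φinv (φ z) = z)
    (hright : ∀ z ∈ ball (0 : ℂ) 1, φ (φinv z) = z)
    (a b : ℂ) (ha : ‖a‖ = 1) (hb : ‖b‖ = 1) (hab : a ≠ b)
    (hfixa : φ a = a) (hfixb : φ b = b)
    (ρ : ℝ) (hρ : 1 < ρ)
    (hderiva : deriv φ a = ((ρ : ℂ))⁻¹) :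
    ∃ k : ℂ → ℂ, ContinuousOn k (closedBall 0 1) ∧ DifferentiableOn ℂ k (ball 0 1) ∧
      (∀ z ∈ closedBall (0 : ℂ) 1, k z ≠ 0) ∧
      (∀ z ∈ ball (0 : ℂ) 1, ∀ w ∈ ball (0 : ℂ) 1,
        k z * conj (k w) * (1 - conj w * z) = 1 - conj (φ w) * φ z) ∧
      ‖k a‖ = (Real.sqrt ρ)⁻¹ ∧ ‖k b‖ = Real.sqrt ρ ∧
      (∀ z ∈ ball (0 : ℂ) 1, (φ z - b) * (z - a) = ρ * (z - b) * (φ z - a)) := by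
  obtain ⟨p, ζ, hp, hζ, hform⟩ := mb_auto φ φinv hφ hφinv hφm hφinvm hleft hright
  have hden : ∀ z ∈ closedBall (0 : ℂ) 1, 1 - conj p * z ≠ 0 := fun z hz =>
    mb_den hp (mem_closedBall_zero_iff.1 hz)
  have hcf : ContinuousOn (fun z => ζ * mbM p z) (closedBall 0 1) := by
    unfold mbM
    exact continuousOn_const.mul (ContinuousOn.div (by fun_prop) (by fun_prop) hden)
  have hform' : ∀ z ∈ closedBall (0 : ℂ) 1, φ z = ζ * mbM p z := by
    have hcl : closure (ball (0 : ℂ) 1) = closedBall 0 1 := closure_ball 0 one_ne_zero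
    have : Set.EqOn φ (fun z => ζ * mbM p z) (closedBall (0 : ℂ) 1) := by
      refine Set.EqOn.of_subset_closure (s := ball (0 : ℂ) 1) hform hφc hcf ball_subset_closedBall ?_
      rw [hcl]
    exact this
  have hac : a ∈ closedBall (0 : ℂ) 1 := by simp [ha]
  have hbc : b ∈ closedBall (0 : ℂ) 1 := by simp [hb]
  have hmul : ∀ z ∈ closedBall (0 : ℂ) 1, φ z * (1 - conj p * z) = ζ * (z - p) := fun z hz => by
    rw [hform' z hz, mbM, mul_assoc, div_mul_cancel₀ _ (hden z hz)]
  have da := hden a hac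
  have db := hden b hbc
  have fa : a * (1 - conj p * a) = ζ * (a - p) := by
    have := hmul a hac
    rwa [hfixa] at this
  have fb : b * (1 - conj p * b) = ζ * (b - p) := by
    have := hmul b hbc
    rwa [hfixb] at this
  have hab' : a - b ≠ 0 := sub_ne_zero.2 hab
  -- E = (1-p̄a)(1-p̄b)
  have hE : ζ * (1 - conj p * p) = (1 - conj p * a) * (1 - conj p * b) := by
    apply mul_left_cancel₀ hab'
    linear_combination (-(1 - conj p * b)) * fa + (1 - conj p * a) * fb
  have hρ0 : (ρ : ℂ) ≠ 0 := by
    have : ρ ≠ 0 := by linarith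
    exact_mod_cast this
  -- derivative at a
  have hda : HasDerivAt φ ((ρ : ℂ)⁻¹) a := by
    rw [← hderiva]
    refine (differentiableAt_of_deriv_ne_zero ?_).hasDerivAt
    rw [hderiva]; exact inv_ne_zero hρ0
  have hdm : HasDerivAt (fun z => ζ * mbM p z)
      (ζ * ((1 * (1 - conj p * a) - (a - p) * (-(conj p * 1))) / (1 - conj p * a) ^ 2)) a := by
    unfold mbM
    refine HasDerivAt.const_mul ζ ?_
    refine HasDerivAt.div ((hasDerivAt_id a).sub_const p) ?_ da
    exact ((hasDerivAt_id a).const_mul (conj p)).const_sub 1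
  have hu : UniqueDiffWithinAt ℂ (closedBall (0 : ℂ) 1) a := by
    have := uniqueDiffWithinAt_convex (convex_closedBall (0 : ℂ) 1) (x := a)
      (by rw [interior_closedBall _ one_ne_zero]; exact ⟨0, by simp⟩)
      (by rw [closure_closedBall]; exact hac)
    exact this.mono_field
  have hdeq : (ρ : ℂ)⁻¹ = ζ * ((1 * (1 - conj p * a) - (a - p) * (-(conj p * 1))) / (1 - conj p * a) ^ 2) := by
    have h1 := hda.hasDerivWithinAt (s := closedBall (0 : ℂ) 1)
    have h2 := hdm.hasDerivWithinAt (s := closedBall (0 : ℂ) 1)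
    have h3 := h2.congr (f₁ := φ) hform' (hform' a hac)
    exact hu.eq_deriv _ h1 h3
  have hκ : 1 - conj p * a = ρ * (1 - conj p * b) := by
    field_simp at hdeq
    have h1 : (1 - conj p * a) * (1 - conj p * a) = (1 - conj p * a) * (ρ * (1 - conj p * b)) := by
      linear_combination hdeq + ρ * hE
    exact mul_left_cancel₀ da h1
  set s : ℝ := Real.sqrt (1 - ‖p‖ ^ 2) with hs
  have hs0 : 0 < 1 - ‖p‖ ^ 2 := by nlinarith [norm_nonneg p]
  have hspos : 0 < s := Real.sqrt_pos.2 hs0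
  have hs2 : s ^ 2 = 1 - ‖p‖ ^ 2 := Real.sq_sqrt hs0.le
  have hpp : conj p * p = ((‖p‖ ^ 2 : ℝ) : ℂ) := by
    rw [Complex.conj_mul']; norm_cast
  have hs2c : (s : ℂ) * s = 1 - conj p * p := by
    rw [hpp]
    rw [← Complex.ofReal_mul, ← pow_two, hs2]; push_cast; ring
  have hζζ : conj ζ * ζ = 1 := by rw [Complex.conj_mul', hζ]; simp
  -- norms at a and b
  have hprod : s ^ 2 = ‖1 - conj p * a‖ * ‖1 - conj p * b‖ := by
    have := congrArg norm hE
    rw [norm_mul, norm_mul, hζ, one_mul, ← hs2c, norm_mul, Complex.norm_real, Real.norm_of_nonneg hspos.le] at this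
    rw [pow_two]; exact this
  have hnab : ‖1 - conj p * a‖ = ρ * ‖1 - conj p * b‖ := by
    rw [hκ, norm_mul, Complex.norm_real, Real.norm_of_nonneg (by linarith)]
  have hρp : 0 < ρ := by linarith
  have hsr : Real.sqrt ρ ^ 2 = ρ := Real.sq_sqrt hρp.le
  have hsrp : 0 < Real.sqrt ρ := Real.sqrt_pos.2 hρp
  have hnb : 0 < ‖1 - conj p * b‖ := norm_pos_iff.2 db
  have hsb : s = Real.sqrt ρ * ‖1 - conj p * b‖ := by
    refine (sq_eq_sq₀ hspos.le (by positivity)).1 ?_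
    rw [hprod, hnab, mul_pow, hsr]; ring
  refine ⟨fun z => s / (1 - conj p * z), ?_, ?_, ?_, ?_, ?_, ?_, ?_⟩
  · exact ContinuousOn.div (by fun_prop) (by fun_prop) hden
  · exact DifferentiableOn.div (by fun_prop) (by fun_prop) fun z hz => hden z (ball_subset_closedBall hz)
  · intro z hz
    exact div_ne_zero (by exact_mod_cast hspos.ne') (hden z hz)
  · intro z hz w hw
    have dz := hden z (ball_subset_closedBall hz)
    have dw := hden w (ball_subset_closedBall hw)
    have dw' : 1 - p * conj w ≠ 0 := by
      have := (map_ne_zero (starRingEnd ℂ)).2 dw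
      simpa using this
    rw [hform z hz, hform w hw, mbM, mbM]
    simp only [map_div₀, map_sub, map_mul, Complex.conj_conj, map_one, Complex.conj_ofReal]
    field_simp
    linear_combination (1 - conj w * z) * hs2c + (conj w - conj p) * (z - p) * hζζ
  · rw [norm_div, Complex.norm_real, Real.norm_of_nonneg hspos.le, hnab, hsb]
    rw [div_eq_iff (by positivity), inv_mul_eq_div, eq_div_iff hsrp.ne']
    linear_combination ‖1 - conj p * b‖ * hsr
  · rw [norm_div, Complex.norm_real, Real.norm_of_nonneg hspos.le, hsb]
    field_simp
  · intro z hz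
    have dz := hden z (ball_subset_closedBall hz)
    have hz1 : (φ z - b) * (1 - conj p * z) * (1 - conj p * b) = (z - b) * (ζ * (1 - conj p * p)) := by
      have := hmul z (ball_subset_closedBall hz)
      linear_combination (1 - conj p * b) * this - (1 - conj p * z) * fb
    have hz2 : (φ z - a) * (1 - conj p * z) * (1 - conj p * a) = (z - a) * (ζ * (1 - conj p * p)) := by
      have := hmul z (ball_subset_closedBall hz)
      linear_combination (1 - conj p * a) * this - (1 - conj p * z) * fa
    have hnz : (1 - conj p * z) * (1 - conj p * b) ≠ 0 := mul_ne_zero dz db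
    apply mul_right_cancel₀ hnz
    rw [hκ] at hz2
    linear_combination (z - a) * hz1 - (z - b) * hz2

end Mobius

section Dynamics

open scoped ComplexConjugate

/-- bundled facts on the symbol -/
structure HSym (φ k : ℂ → ℂ) (a b : ℂ) (ρ : ℝ) : Prop where
  ha : ‖a‖ = 1
  hb : ‖b‖ = 1
  hab : a ≠ b
  hρ : 1 < ρ
  hφ : DifferentiableOn ℂ φ (ball 0 1)
  hφm : Set.MapsTo φ (ball 0 1) (ball 0 1)
  hsurj : ∀ w ∈ ball (0 : ℂ) 1, ∃ z ∈ ball (0 : ℂ) 1, φ z = w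
  kc : ContinuousOn k (closedBall 0 1)
  kd : DifferentiableOn ℂ k (ball 0 1)
  k0 : ∀ z ∈ closedBall (0 : ℂ) 1, k z ≠ 0
  kid : ∀ z ∈ ball (0 : ℂ) 1, ∀ w ∈ ball (0 : ℂ) 1,
        k z * conj (k w) * (1 - conj w * z) = 1 - conj (φ w) * φ z
  ka : ‖k a‖ = (Real.sqrt ρ)⁻¹
  kb : ‖k b‖ = Real.sqrt ρ
  cross : ∀ z ∈ ball (0 : ℂ) 1, (φ z - b) * (z - a) = ρ * (z - b) * (φ z - a)

lemma hd_ne {a z : ℂ} (ha : ‖a‖ = 1) (hz : z ∈ ball (0 : ℂ) 1) : z - a ≠ 0 := by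
  intro h
  have : z = a := sub_eq_zero.1 h
  rw [mem_ball_zero_iff, this, ha] at hz
  exact lt_irrefl _ hz

variable {φ k : ℂ → ℂ} {a b : ℂ} {ρ : ℝ}

lemma HSym.iter (H : HSym φ k a b ρ) (n : ℕ) {z : ℂ} (hz : z ∈ ball (0 : ℂ) 1) :
    φ^[n] z ∈ ball (0 : ℂ) 1 := H.hφm.iterate n hz

lemma HSym.ratio (H : HSym φ k a b ρ) {z : ℂ} (hz : z ∈ ball (0 : ℂ) 1) :
    (φ z - b) / (φ z - a) = ρ * ((z - b) / (z - a)) := by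
  have h1 := hd_ne H.ha hz
  have h2 := hd_ne H.ha (H.hφm hz)
  rw [← mul_div_assoc, div_eq_div_iff h2 h1]
  exact H.cross z hz

lemma HSym.ratio_iter (H : HSym φ k a b ρ) {z : ℂ} (hz : z ∈ ball (0 : ℂ) 1) (n : ℕ) :
    (φ^[n] z - b) / (φ^[n] z - a) = (ρ : ℂ) ^ n * ((z - b) / (z - a)) := by
  induction n with
  | zero => simp
  | succ n ih =>
    rw [Function.iterate_succ_apply', H.ratio (H.iter n hz), ih]; ring

lemma hd_count {ρ R t : ℝ} (hρ : 1 < ρ) (hR : 0 < R) (ht : 0 ≤ t) {N : ℕ} (hN : R ^ 2 ≤ ρ ^ N)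
    (n : ℕ) : ((Finset.range n).filter fun j => 1 / R < ρ ^ j * t ∧ ρ ^ j * t < R).card ≤ N := by
  set S := (Finset.range n).filter fun j => 1 / R < ρ ^ j * t ∧ ρ ^ j * t < R with hS
  rcases S.eq_empty_or_nonempty with h | h
  · simp [h]
  · set j0 := S.min' h
    have hj0 : j0 ∈ S := S.min'_mem h
    have hsub : S ⊆ Finset.Ico j0 (j0 + N) := by
      intro j hj
      have hle : j0 ≤ j := S.min'_le j hj
      rw [Finset.mem_Ico]
      refine ⟨hle, ?_⟩
      have h1 := (Finset.mem_filter.1 hj0).2.1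
      have h2 := (Finset.mem_filter.1 hj).2.2
      obtain ⟨d, rfl⟩ := Nat.exists_eq_add_of_le hle
      have h3 : ρ ^ d < ρ ^ N := by
        refine lt_of_lt_of_le ?_ hN
        rw [pow_add] at h2
        rw [div_lt_iff₀ hR] at h1
        have hd : 0 < ρ ^ d := by positivity
        have h4 : ρ ^ d < ρ ^ d * (ρ ^ j0 * t * R) := by nlinarith
        have h5 : ρ ^ d * (ρ ^ j0 * t * R) = (ρ ^ j0 * ρ ^ d * t) * R := by ring
        nlinarith
      have := (pow_lt_pow_iff_right₀ hρ).1 h3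
      omega
    simpa using Finset.card_le_card hsub

lemma HSym.prod_bound (H : HSym φ k a b ρ) {h : ℂ → ℝ} (hc : ContinuousOn h (closedBall 0 1))
    (h0 : ∀ z ∈ closedBall (0 : ℂ) 1, 0 ≤ h z) {M : ℝ} (hMa : h a < M) (hMb : h b < M) :
    ∃ C : ℝ, 0 < C ∧ ∀ n : ℕ, ∀ z ∈ ball (0 : ℂ) 1,
      ∏ j ∈ Finset.range n, h (φ^[j] z) ≤ C * M ^ n := by
  have hac : a ∈ closedBall (0 : ℂ) 1 := by simp [H.ha]
  have hbc : b ∈ closedBall (0 : ℂ) 1 := by simp [H.hb]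
  have hM : 0 < M := (h0 a hac).trans_lt hMa
  obtain ⟨δ1, hδ1, hh1⟩ : ∃ δ > 0, ∀ z ∈ closedBall (0 : ℂ) 1, dist z a < δ → h z < M := by
    have := (hc a hac).eventually (gt_mem_nhds hMa)
    rw [Metric.nhdsWithin_basis_ball.eventually_iff] at this
    obtain ⟨δ, h1, h2⟩ := this
    exact ⟨δ, h1, fun z hz hd => h2 ⟨hd, hz⟩⟩
  obtain ⟨δ2, hδ2, hh2⟩ : ∃ δ > 0, ∀ z ∈ closedBall (0 : ℂ) 1, dist z b < δ → h z < M := by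
    have := (hc b hbc).eventually (gt_mem_nhds hMb)
    rw [Metric.nhdsWithin_basis_ball.eventually_iff] at this
    obtain ⟨δ, h1, h2⟩ := this
    exact ⟨δ, h1, fun z hz hd => h2 ⟨hd, hz⟩⟩
  obtain ⟨B, hB⟩ := (isCompact_closedBall (0 : ℂ) 1).exists_bound_of_continuousOn hc
  set R := 3 / min δ1 δ2 with hR
  have hδ : 0 < min δ1 δ2 := lt_min hδ1 hδ2
  have hR0 : 0 < R := by positivity
  have hR2 : 2 / R < min δ1 δ2 := by
    rw [hR, div_div_eq_mul_div, div_lt_iff₀ (by norm_num)]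
    linarith
  obtain ⟨N, hN⟩ := pow_unbounded_of_one_lt (R ^ 2) H.hρ
  set Q := max (B / M) 1 with hQ
  have hQ1 : 1 ≤ Q := le_max_right _ _
  refine ⟨Q ^ N, by positivity, fun n z hz => ?_⟩
  set t := ‖(z - b) / (z - a)‖ with ht
  have hρ0 : 0 < ρ := by linarith [H.hρ]
  have key : ∀ j ∈ Finset.range n, h (φ^[j] z) ≤
      M * (if 1 / R < ρ ^ j * t ∧ ρ ^ j * t < R then Q else 1) := by
    intro j _
    have hw := H.iter j hz
    have hwc := ball_subset_closedBall hw
    have hwn : ‖φ^[j] z‖ ≤ 1 := mem_closedBall_zero_iff.1 hwc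
    have hr : ‖φ^[j] z - b‖ / ‖φ^[j] z - a‖ = ρ ^ j * t := by
      rw [← norm_div, H.ratio_iter hz, norm_mul, norm_pow, Complex.norm_real,
        Real.norm_of_nonneg hρ0.le]
    have hda : 0 < ‖φ^[j] z - a‖ := norm_pos_iff.2 (hd_ne H.ha hw)
    have hna : ‖φ^[j] z - a‖ ≤ 2 := (norm_sub_le _ _).trans (by rw [H.ha]; linarith)
    have hnb : ‖φ^[j] z - b‖ ≤ 2 := (norm_sub_le _ _).trans (by rw [H.hb]; linarith)
    split_ifs with hif
    · have h1 := (le_abs_self _).trans (hB _ hwc)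
      have h2 : B / M ≤ Q := le_max_left _ _
      rw [div_le_iff₀ hM] at h2
      linarith
    · rw [mul_one]
      rw [not_and_or, not_lt, not_lt] at hif
      rcases hif with hif | hif
      · refine (hh2 _ hwc ?_).le
        rw [dist_eq_norm]
        refine lt_of_le_of_lt ?_ (hR2.trans_le (min_le_right _ _))
        rw [← hr, div_le_iff₀ hda] at hif
        refine hif.trans ?_
        rw [div_mul_eq_mul_div, one_mul]
        gcongr
      · refine (hh1 _ hwc ?_).le
        rw [dist_eq_norm]
        refine lt_of_le_of_lt ?_ (hR2.trans_le (min_le_left _ _))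
        rw [← hr, le_div_iff₀ hda] at hif
        rw [le_div_iff₀ hR0]
        linarith
  refine (Finset.prod_le_prod (fun j _ => h0 _ (ball_subset_closedBall (H.iter j hz))) key).trans ?_
  rw [Finset.prod_mul_distrib, Finset.prod_const, Finset.card_range, ← Finset.prod_filter,
    Finset.prod_const, mul_comm]
  gcongr
  exact hd_count H.hρ hR0 (norm_nonneg _) hN.le n

/-- half-plane constant -/
noncomputable def hdc (a b : ℂ) : ℂ := a * conj b - 1

lemma hd_re {a b z : ℂ} (ha : ‖a‖ = 1) (hb : ‖b‖ = 1) :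
    (hdc a b * (z - b) * conj (z - a)).re = ‖a - b‖ ^ 2 / 2 * (1 - ‖z‖ ^ 2) := by
  have h1 : a.re * a.re + a.im * a.im = 1 := by
    rw [← Complex.normSq_apply, ← Complex.sq_norm, ha]; norm_num
  have h2 : b.re * b.re + b.im * b.im = 1 := by
    rw [← Complex.normSq_apply, ← Complex.sq_norm, hb]; norm_num
  simp only [hdc, Complex.sq_norm, Complex.normSq_apply, Complex.sub_re, Complex.sub_im,
    Complex.mul_re, Complex.mul_im, Complex.conj_re, Complex.conj_im, Complex.one_re,
    Complex.one_im]
  linear_combination h1*((z.re*z.re+z.im*z.im)/2 - (b.re*z.re+b.im*z.im) + (b.re*b.re+b.im*b.im - 1/2)) + h2*((z.re*z.re+z.im*z.im)/2 - (a.re*z.re+a.im*z.im) + 1/2)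

lemma HSym.re_pos (H : HSym φ k a b ρ) {z : ℂ} (hz : z ∈ ball (0 : ℂ) 1) :
    0 < (hdc a b * ((z - b) / (z - a))).re := by
  have h1 := hd_ne H.ha hz
  have e : hdc a b * ((z - b) / (z - a)) =
      ((‖z - a‖ ^ 2)⁻¹ : ℝ) * (hdc a b * (z - b) * conj (z - a)) := by
    have : ((‖z - a‖ ^ 2 : ℝ) : ℂ) = (z - a) * conj (z - a) := by
      rw [Complex.mul_conj']; norm_cast
    have h2 : conj (z - a) ≠ 0 := (map_ne_zero _).2 h1
    rw [Complex.ofReal_inv, this]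
    field_simp
  rw [e, Complex.re_ofReal_mul, hd_re H.ha H.hb]
  have h3 : 0 < ‖z - a‖ := norm_pos_iff.2 h1
  have h4 : 0 < ‖a - b‖ := norm_pos_iff.2 (sub_ne_zero.2 H.hab)
  have h5 : ‖z‖ < 1 := mem_ball_zero_iff.1 hz
  have h6 : 0 < 1 - ‖z‖ ^ 2 := by nlinarith [norm_nonneg z]
  positivity

lemma HSym.D_ne (H : HSym φ k a b ρ) {t : ℝ} (ht : 0 < t) {z : ℂ} (hz : z ∈ closedBall (0 : ℂ) 1) :
    (z - a) + t * hdc a b * (z - b) ≠ 0 := by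
  intro h
  have hn : ‖z‖ ≤ 1 := mem_closedBall_zero_iff.1 hz
  have h1 : (z - a) * conj (z - a) + t * (hdc a b * (z - b) * conj (z - a)) = 0 := by
    linear_combination conj (z - a) * h
  have h2 := congrArg Complex.re h1
  rw [Complex.add_re, Complex.re_ofReal_mul, hd_re H.ha H.hb, Complex.mul_conj'] at h2
  have h3 : (((‖z - a‖ : ℂ)) ^ 2).re = ‖z - a‖ ^ 2 := by norm_cast
  rw [h3] at h2
  have h6 : 0 ≤ 1 - ‖z‖ ^ 2 := by nlinarith [norm_nonneg z]
  have h7 : 0 ≤ t * (‖a - b‖ ^ 2 / 2 * (1 - ‖z‖ ^ 2)) := by positivity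
  have h8 : ‖z - a‖ ^ 2 = 0 := by
    have : (0 : ℂ).re = 0 := rfl
    rw [this] at h2
    nlinarith [sq_nonneg ‖z - a‖]
  have h9 : z = a := by simpa [sub_eq_zero] using h8
  rw [h9, sub_self, zero_add] at h
  have hab' : a - b ≠ 0 := sub_ne_zero.2 H.hab
  have ht' : (t : ℂ) ≠ 0 := by exact_mod_cast ht.ne'
  have hc : hdc a b = 0 := by
    simpa [ht', hab'] using h
  have hbb : conj b * b = 1 := by rw [Complex.conj_mul', H.hb]; simp
  apply H.hab
  rw [hdc] at hc
  linear_combination b * hc - a * hbb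

lemma HSym.exists_V (H : HSym φ k a b ρ) : ∃ V W r : ℂ → ℂ,
    (ContinuousOn V (closedBall 0 1) ∧ ContinuousOn W (closedBall 0 1) ∧
      ContinuousOn r (closedBall 0 1)) ∧
    (DifferentiableOn ℂ V (ball 0 1) ∧ DifferentiableOn ℂ W (ball 0 1) ∧
      DifferentiableOn ℂ r (ball 0 1)) ∧
    (∀ z ∈ closedBall (0 : ℂ) 1, r z ≠ 0) ∧ (∀ z ∈ ball (0 : ℂ) 1, V z ≠ 0 ∧ W z ≠ 0) ∧
    (∀ z ∈ ball (0 : ℂ) 1, V (φ z) = r z * V z) ∧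
    (∀ z ∈ ball (0 : ℂ) 1, W (φ z) = ρ * r z * W z) ∧
    ‖r a‖ = ρ⁻¹ ∧ ‖r b‖ = 1 := by
  have hρ0 : 0 < ρ := by linarith [H.hρ]
  have hρc : (ρ : ℂ) ≠ 0 := by exact_mod_cast hρ0.ne'
  set c := hdc a b
  have D1 : ∀ z ∈ closedBall (0 : ℂ) 1, (z - a) + c * (z - b) ≠ 0 := fun z hz => by
    simpa using H.D_ne one_pos hz
  have D2 : ∀ z ∈ closedBall (0 : ℂ) 1, (z - a) + ρ * c * (z - b) ≠ 0 := fun z hz => H.D_ne hρ0 hz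
  have D1' : ∀ z ∈ ball (0 : ℂ) 1, (z - a) + c * (z - b) ≠ 0 := fun z hz =>
    D1 z (ball_subset_closedBall hz)
  have D2' : ∀ z ∈ ball (0 : ℂ) 1, (z - a) + ρ * c * (z - b) ≠ 0 := fun z hz =>
    D2 z (ball_subset_closedBall hz)
  have hab' : a - b ≠ 0 := sub_ne_zero.2 H.hab
  have hac : a ∈ closedBall (0 : ℂ) 1 := by simp [H.ha]
  have hbc : b ∈ closedBall (0 : ℂ) 1 := by simp [H.hb]
  have key : ∀ z ∈ ball (0 : ℂ) 1, ((φ z - a) + c * (φ z - b)) * (z - a) =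
      (φ z - a) * ((z - a) + ρ * c * (z - b)) := fun z hz => by
    linear_combination c * H.cross z hz
  refine ⟨fun z => (z - a) / ((z - a) + c * (z - b)), fun z => (z - b) / ((z - a) + c * (z - b)),
    fun z => ((z - a) + c * (z - b)) / ((z - a) + ρ * c * (z - b)), ⟨?_, ?_, ?_⟩, ⟨?_, ?_, ?_⟩,
    ?_, ?_, ?_, ?_, ?_, ?_⟩
  · exact ContinuousOn.div (by fun_prop) (by fun_prop) D1
  · exact ContinuousOn.div (by fun_prop) (by fun_prop) D1
  · exact ContinuousOn.div (by fun_prop) (by fun_prop) D2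
  · exact DifferentiableOn.div (by fun_prop) (by fun_prop) D1'
  · exact DifferentiableOn.div (by fun_prop) (by fun_prop) D1'
  · exact DifferentiableOn.div (by fun_prop) (by fun_prop) D2'
  · exact fun z hz => div_ne_zero (D1 z hz) (D2 z hz)
  · exact fun z hz => ⟨div_ne_zero (hd_ne H.ha hz) (D1' z hz), div_ne_zero (hd_ne H.hb hz) (D1' z hz)⟩
  · intro z hz
    show (φ z - a) / ((φ z - a) + c * (φ z - b)) = _
    rw [div_mul_div_cancel₀' (D1' z hz), div_eq_div_iff (D1' _ (H.hφm hz)) (D2' z hz)]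
    linear_combination -(key z hz)
  · intro z hz
    show (φ z - b) / ((φ z - a) + c * (φ z - b)) = _
    rw [mul_assoc, div_mul_div_cancel₀' (D1' z hz), ← mul_div_assoc, div_eq_div_iff (D1' _ (H.hφm hz)) (D2' z hz)]
    linear_combination H.cross z hz
  · have := D2 a hac
    simp only [sub_self, zero_add] at this ⊢
    have hc : c * (a - b) ≠ 0 := by
      intro h; apply this; rw [mul_assoc, h, mul_zero]
    rw [mul_assoc, div_mul_cancel_right₀ hc, norm_inv, Complex.norm_real, Real.norm_of_nonneg hρ0.le]
  · have : b - a ≠ 0 := sub_ne_zero.2 H.hab.symm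
    simp [this]

lemma HSym.exists_u (H : HSym φ k a b ρ) : ∃ u : ℂ → ℂ, DifferentiableOn ℂ u (ball 0 1) ∧
    (∀ z ∈ ball (0 : ℂ) 1, |(u z).im| ≤ 2) ∧
    (∀ z ∈ ball (0 : ℂ) 1, u (φ z) = u z + Real.log ρ) := by
  have hρ0 : 0 < ρ := by linarith [H.hρ]
  refine ⟨fun z => Complex.log (hdc a b * ((z - b) / (z - a))), ?_, ?_, ?_⟩
  · refine DifferentiableOn.clog ?_ fun z hz => Or.inl (H.re_pos hz)
    exact DifferentiableOn.const_mul (DifferentiableOn.div (by fun_prop) (by fun_prop)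
      fun z hz => hd_ne H.ha hz) _
  · intro z hz
    rw [Complex.log_im]
    have := Complex.abs_arg_le_pi_div_two_iff.2 (H.re_pos hz).le
    linarith [Real.pi_le_four]
  · intro z hz
    have hne : hdc a b * ((z - b) / (z - a)) ≠ 0 := by
      intro h
      have := H.re_pos hz
      rw [h] at this
      simp at this
    show Complex.log _ = _
    rw [H.ratio hz, mul_left_comm, Complex.log_ofReal_mul hρ0 hne, add_comm]

lemma HSym.exists_h (H : HSym φ k a b ρ) (θ : ℝ) : ∃ (h h' : ℂ → ℂ) (B : ℝ),
    DifferentiableOn ℂ h (ball 0 1) ∧ DifferentiableOn ℂ h' (ball 0 1) ∧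
    (∀ z ∈ ball (0 : ℂ) 1, ‖h z‖ ≤ B) ∧ (∀ z ∈ ball (0 : ℂ) 1, ‖h' z‖ ≤ B) ∧
    (∀ z ∈ ball (0 : ℂ) 1, h z * h' z = 1) ∧
    (∀ z ∈ ball (0 : ℂ) 1, h (φ z) = Complex.exp (θ * Complex.I) * h z) := by
  obtain ⟨u, hu, him, hφu⟩ := H.exists_u
  have hL : 0 < Real.log ρ := Real.log_pos H.hρ
  have hb : ∀ (s : ℝ) (w : ℂ), |w.im| ≤ 2 → ‖Complex.exp (Complex.I * s * w)‖ ≤ Real.exp (|s| * 2) := by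
    intro s w hw
    rw [Complex.norm_exp]
    refine Real.exp_le_exp.2 ?_
    have : (Complex.I * s * w).re = -(s * w.im) := by simp
    rw [this]
    calc -(s * w.im) ≤ |s * w.im| := neg_le_abs _
      _ = |s| * |w.im| := abs_mul _ _
      _ ≤ _ := by gcongr
  refine ⟨fun z => Complex.exp (Complex.I * (θ / Real.log ρ : ℝ) * u z),
    fun z => Complex.exp (Complex.I * (-(θ / Real.log ρ) : ℝ) * u z),
    Real.exp (|θ / Real.log ρ| * 2), ?_, ?_, ?_, ?_, ?_, ?_⟩
  · exact (hu.const_mul _).cexp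
  · exact (hu.const_mul _).cexp
  · exact fun z hz => hb _ _ (him z hz)
  · intro z hz
    have := hb (-(θ / Real.log ρ)) _ (him z hz)
    rwa [abs_neg] at this
  · intro z hz
    rw [← Complex.exp_add, ← Complex.exp_zero]
    congr 1
    push_cast
    ring
  · intro z hz
    simp only [hφu z hz]
    rw [← Complex.exp_add]
    congr 1
    have : (Real.log ρ : ℂ) ≠ 0 := by exact_mod_cast hL.ne'
    push_cast
    field_simp
    ring

lemma HSym.exists_g (H : HSym φ k a b ρ) : ∃ (g : ℂ → ℂ) (B : ℝ),
    DifferentiableOn ℂ g (ball 0 1) ∧ (∀ z ∈ ball (0 : ℂ) 1, ‖g z‖ ≤ B) ∧ g 0 ≠ 0 ∧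
    (∀ n : ℕ, 1 ≤ n → g (φ^[n] 0) = 0) ∧
    (∀ n : ℕ, 1 ≤ n → ∀ w ∈ ball (0 : ℂ) 1, φ^[n] w = 0 → g w = 0) := by
  obtain ⟨u, hu, him, hφu⟩ := H.exists_u
  have hL : 0 < Real.log ρ := Real.log_pos H.hρ
  set L := Real.log ρ
  have hLc : (L : ℂ) ≠ 0 := by exact_mod_cast hL.ne'
  have hun : ∀ (n : ℕ), ∀ z ∈ ball (0 : ℂ) 1, u (φ^[n] z) = u z + n * L := by
    intro n z hz
    induction n with
    | zero => simp
    | succ n ih =>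
      rw [Function.iterate_succ_apply', hφu _ (H.iter n hz), ih]; push_cast; ring
  have h0 : (0 : ℂ) ∈ ball (0 : ℂ) 1 := by simp
  set S : ℂ → ℂ := fun x => Complex.sin ((Real.pi / L : ℝ) * x) with hS
  have hSd : Differentiable ℂ S := by
    simp only [hS]; fun_prop
  have hS0 : S 0 = 0 := by simp [hS]
  have hder : deriv S 0 = (Real.pi / L : ℝ) := by
    have h1 : HasDerivAt (fun x : ℂ => ((Real.pi / L : ℝ) : ℂ) * x) ((Real.pi / L : ℝ) : ℂ) 0 := by
      simpa using (hasDerivAt_id (0 : ℂ)).const_mul ((Real.pi / L : ℝ) : ℂ)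
    have := h1.csin.deriv
    simpa [hS] using this
  set s : ℂ → ℂ := dslope S 0 with hs
  have hsd : Differentiable ℂ s := by
    have := (Complex.differentiableOn_dslope (s := Set.univ) (c := (0 : ℂ)) (f := S) univ_mem).2 hSd.differentiableOn
    exact differentiableOn_univ.1 this
  have hsz : ∀ n : ℕ, 1 ≤ n → s (n * L) = 0 ∧ s (-(n * L)) = 0 := by
    intro n hn
    have hn' : (n : ℂ) ≠ 0 := by exact_mod_cast (by omega : n ≠ 0)
    have hne : (n : ℂ) * L ≠ 0 := mul_ne_zero hn' hLc
    have e1 : S (n * L) = 0 := by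
      simp only [hS]
      rw [← Complex.sin_nat_mul_pi n]
      congr 1
      push_cast
      field_simp
    have e2 : S (-(n * L)) = 0 := by
      have : S (-(n * L)) = -S (n * L) := by
        simp only [hS]
        rw [mul_neg, Complex.sin_neg]
      rw [this, e1, neg_zero]
    constructor
    · rw [hs, dslope_of_ne _ hne, slope_def_field, e1, hS0]; simp
    · rw [hs, dslope_of_ne _ (neg_ne_zero.2 hne), slope_def_field, e2, hS0]; simp
  -- bound on the strip
  obtain ⟨B1, hB1⟩ := (isCompact_closedBall (0 : ℂ) 1).exists_bound_of_continuousOn hsd.continuous.continuousOn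
  have hbound : ∀ x : ℂ, |x.im| ≤ 4 → ‖s x‖ ≤ max B1 (Real.exp ((Real.pi / L) * 4)) := by
    intro x hx
    by_cases hx1 : ‖x‖ ≤ 1
    · exact (hB1 x (by simpa using hx1)).trans (le_max_left _ _)
    · refine le_trans ?_ (le_max_right _ _)
      push Not at hx1
      have hx0 : x ≠ 0 := by
        intro h; rw [h] at hx1; simp at hx1; linarith
      rw [hs, dslope_of_ne _ hx0, slope_def_field, hS0, sub_zero, sub_zero, norm_div]
      refine (div_le_self (norm_nonneg _) hx1.le).trans ?_
      simp only [hS, Complex.sin]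
      have hpL : 0 < Real.pi / L := div_pos Real.pi_pos hL
      set y : ℂ := ((Real.pi / L : ℝ) : ℂ) * x with hy
      have hyim : |y.im| ≤ Real.pi / L * 4 := by
        rw [hy, Complex.im_ofReal_mul, abs_mul, abs_of_pos hpL]
        gcongr
      have n1 : ‖Complex.exp (-y * Complex.I)‖ ≤ Real.exp (Real.pi / L * 4) := by
        rw [Complex.norm_exp]
        refine Real.exp_le_exp.2 ?_
        simp only [Complex.mul_re, Complex.neg_re, Complex.neg_im, Complex.I_re, Complex.I_im]
        linarith [le_abs_self y.im]
      have n2 : ‖Complex.exp (y * Complex.I)‖ ≤ Real.exp (Real.pi / L * 4) := by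
        rw [Complex.norm_exp]
        refine Real.exp_le_exp.2 ?_
        simp only [Complex.mul_re, Complex.I_re, Complex.I_im]
        linarith [neg_le_abs y.im]
      rw [norm_div, norm_mul, Complex.norm_I, mul_one, Complex.norm_two]
      have := norm_sub_le (Complex.exp (-y * Complex.I)) (Complex.exp (y * Complex.I))
      linarith
  refine ⟨fun z => s (u z - u 0), max B1 (Real.exp ((Real.pi / L) * 4)), ?_, ?_, ?_, ?_, ?_⟩
  · exact hsd.comp_differentiableOn (hu.sub_const _)
  · intro z hz
    refine hbound _ ?_
    rw [Complex.sub_im]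
    refine (abs_sub _ _).trans ?_
    linarith [him z hz, him 0 h0]
  · simp only [sub_self, hs, dslope_same, hder]
    exact_mod_cast (div_pos Real.pi_pos hL).ne'
  · intro n hn
    simp only [hun n 0 h0, add_sub_cancel_left]
    exact (hsz n hn).1
  · intro n hn w hw hw0
    have := hun n w hw
    rw [hw0] at this
    have e : u w - u 0 = -(n * L) := by rw [this]; ring
    simp only [e]
    exact (hsz n hn).2

end Dynamics

section Ops

open scoped ComplexConjugate

/-- admissible weights -/
structure AdmW (v : ℂ → ℂ) : Prop where
  c : ContinuousOn v (closedBall 0 1)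
  d : DifferentiableOn ℂ v (ball 0 1)
  n : ∀ z ∈ closedBall (0 : ℂ) 1, v z ≠ 0

lemma AdmW.inv {v : ℂ → ℂ} (h : AdmW v) : AdmW (fun z => (v z)⁻¹) :=
  ⟨h.c.inv₀ h.n, h.d.inv fun z hz => h.n z (ball_subset_closedBall hz),
    fun z hz => inv_ne_zero (h.n z hz)⟩

lemma AdmW.mul {v w : ℂ → ℂ} (h : AdmW v) (h' : AdmW w) : AdmW (fun z => v z * w z) :=
  ⟨h.c.mul h'.c, h.d.mul h'.d, fun z hz => mul_ne_zero (h.n z hz) (h'.n z hz)⟩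

lemma AdmW.pow {v : ℂ → ℂ} (h : AdmW v) (s : ℕ) : AdmW (fun z => v z ^ s) :=
  ⟨h.c.pow s, h.d.pow s, fun z hz => pow_ne_zero s (h.n z hz)⟩

lemma AdmW.const_mul {v : ℂ → ℂ} (h : AdmW v) {c : ℂ} (hc : c ≠ 0) : AdmW (fun z => c * v z) :=
  ⟨h.c.const_mul c, h.d.const_mul c, fun z hz => mul_ne_zero hc (h.n z hz)⟩

lemma hs_mulOp_c {v : ℂ → ℂ} (hc : ContinuousOn v (closedBall 0 1))
    (hd : DifferentiableOn ℂ v (ball 0 1)) :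
    ∃ M : H2 →L[ℂ] H2, ∀ f z, z ∈ ball (0 : ℂ) 1 → (M f).toFun z = v z * f.toFun z := by
  obtain ⟨B, hB⟩ := (isCompact_closedBall (0 : ℂ) 1).exists_bound_of_continuousOn hc
  obtain ⟨M, hM, _⟩ := hs_mulOp hd fun z hz => hB z (ball_subset_closedBall hz)
  exact ⟨M, hM⟩

lemma op_ext {A B : H2 →L[ℂ] H2}
    (h : ∀ f : H2, ∀ z ∈ ball (0 : ℂ) 1, (A f).toFun z = (B f).toFun z) : A = B :=
  ContinuousLinearMap.ext fun f => hs_ext (h f)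

variable {φ k : ℂ → ℂ} {a b : ℂ} {ρ : ℝ}

lemma HSym.exists_U (H : HSym φ k a b ρ) (U : H2 →L[ℂ] H2)
    (hU : ∀ f : H2, ∀ z ∈ ball (0 : ℂ) 1, (U f).toFun z = k z * f.toFun (φ z)) :
    ∃ U' : H2 →L[ℂ] H2, U * U' = 1 ∧ U' * U = 1 ∧ ‖U‖ ≤ 1 ∧ ‖U'‖ ≤ 1 := by
  set U' : H2 →L[ℂ] H2 := ContinuousLinearMap.adjoint U with hU'
  have hK : ∀ z ∈ ball (0 : ℂ) 1, U' (hsK z) = conj (k z) • hsK (φ z) := by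
    intro z hz
    refine ext_inner_right ℂ fun f => ?_
    rw [hU', ContinuousLinearMap.adjoint_inner_left, hsK_inner hz, hU f z hz, inner_smul_left,
      hsK_inner (H.hφm hz), Complex.conj_conj]
  have h1 : ∀ f : H2, U (U' f) = f := by
    intro f
    refine hs_ext fun z hz => ?_
    -- by duality with kernels
    have hUK : ∀ w ∈ ball (0 : ℂ) 1, U (U' (hsK w)) = hsK w := by
      intro w hw
      refine hs_ext fun x hx => ?_
      rw [hU _ x hx, hK w hw, hs_smul _ _ (H.hφm hx), hsK_toFun (H.hφm hw) (H.hφm hx),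
        hsK_toFun hw hx]
      have hid := H.kid x hx w hw
      have hne : ∀ p ∈ ball (0 : ℂ) 1, ∀ q ∈ ball (0 : ℂ) 1, 1 - conj p * q ≠ 0 := by
        intro p hp q hq h0
        have : ‖conj p * q‖ = 1 := by rw [← sub_eq_zero.1 h0]; simp
        rw [norm_mul, RCLike.norm_conj] at this
        have hp' : ‖p‖ < 1 := mem_ball_zero_iff.1 hp
        have hq' : ‖q‖ < 1 := mem_ball_zero_iff.1 hq
        nlinarith [norm_nonneg p, norm_nonneg q]
      have n1 := hne w hw x hx
      have n2 := hne _ (H.hφm hw) _ (H.hφm hx)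
      rw [← hid] at n2 ⊢
      field_simp
      have hk : k x ≠ 0 := H.k0 x (ball_subset_closedBall hx)
      have hk' : conj (k w) ≠ 0 := (map_ne_zero _).2 (H.k0 w (ball_subset_closedBall hw))
      field_simp
    rw [← hsK_inner hz, ← hsK_inner hz, ← ContinuousLinearMap.adjoint_inner_left, ← hU',
      hU', ContinuousLinearMap.adjoint_inner_right, ← hU', hUK z hz]
  have hUU : U * U' = 1 := ContinuousLinearMap.ext h1
  have hinj : Function.Injective U := by
    intro f g hfg
    refine hs_ext fun w hw => ?_
    obtain ⟨z, hz, rfl⟩ := H.hsurj w hw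
    have h2 := hU f z hz
    rw [hfg, hU g z hz] at h2
    exact (mul_left_cancel₀ (H.k0 z (ball_subset_closedBall hz)) h2).symm
  have hUU' : U' * U = 1 := ContinuousLinearMap.ext fun f => hinj (h1 (U f))
  have hn : ‖U'‖ ≤ 1 := by
    refine ContinuousLinearMap.opNorm_le_bound _ zero_le_one fun f => ?_
    have : inner ℂ (U' f) (U' f) = inner ℂ f f := by
      conv_lhs => rw [hU', ContinuousLinearMap.adjoint_inner_left, ← hU', h1]
    have h3 : ‖U' f‖ ^ 2 = ‖f‖ ^ 2 := by
      rw [← inner_self_eq_norm_sq (𝕜 := ℂ), this, inner_self_eq_norm_sq]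
    rw [one_mul]
    exact (sq_le_sq₀ (norm_nonneg _) (norm_nonneg _)).1 h3.le
  refine ⟨U', hUU, hUU', ?_, hn⟩
  rw [← ContinuousLinearMap.adjoint.norm_map U]
  exact hn

lemma HSym.weight (H : HSym φ k a b ρ) {U U' : H2 →L[ℂ] H2}
    (hU : ∀ f : H2, ∀ z ∈ ball (0 : ℂ) 1, (U f).toFun z = k z * f.toFun (φ z))
    (h1 : U * U' = 1) (h2 : U' * U = 1) (n1 : ‖U‖ ≤ 1) (n2 : ‖U'‖ ≤ 1)
    {v : ℂ → ℂ} (hv : AdmW v) : ∃ τ : (H2 →L[ℂ] H2)ˣ,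
      (∀ f : H2, ∀ z ∈ ball (0 : ℂ) 1,
        ((τ : H2 →L[ℂ] H2) f).toFun z = v z * k z * f.toFun (φ z)) ∧
      (∀ M : ℝ, ‖v a‖ < M → ‖v b‖ < M →
        ∃ C : ℝ, 0 < C ∧ ∀ n : ℕ, ‖(τ : H2 →L[ℂ] H2) ^ n‖ ≤ C * M ^ n) ∧
      (∀ m : ℝ, 0 < m → m < ‖v a‖ → m < ‖v b‖ →
        ∃ C : ℝ, 0 < C ∧ ∀ n : ℕ, ‖((τ⁻¹ : (H2 →L[ℂ] H2)ˣ) : H2 →L[ℂ] H2) ^ n‖ ≤ C * m⁻¹ ^ n) := by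
  have hit : ∀ {n : ℕ} {z : ℂ}, z ∈ ball (0 : ℂ) 1 → φ^[n] z ∈ ball (0 : ℂ) 1 := fun hz => H.iter _ hz
  have hitd : ∀ n : ℕ, DifferentiableOn ℂ φ^[n] (ball 0 1) := by
    intro n
    induction n with
    | zero => exact differentiableOn_id
    | succ n ih =>
      rw [Function.iterate_succ']
      exact H.hφ.comp ih fun z hz => H.iter n hz
  obtain ⟨Mv, hMv⟩ := hs_mulOp_c hv.c hv.d
  obtain ⟨Mi, hMi⟩ := hs_mulOp_c hv.inv.c hv.inv.d
  have e1 : Mv * Mi = 1 := op_ext fun f z hz => by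
    simp [hMv _ z hz, hMi _ z hz, hv.n z (ball_subset_closedBall hz)]
  have e2 : Mi * Mv = 1 := op_ext fun f z hz => by
    simp [hMv _ z hz, hMi _ z hz, hv.n z (ball_subset_closedBall hz)]
  let τ : (H2 →L[ℂ] H2)ˣ := ⟨Mv * U, U' * Mi,
    by rw [mul_assoc, ← mul_assoc U, h1, one_mul, e1],
    by rw [mul_assoc, ← mul_assoc Mi, e2, one_mul, h2]⟩
  have hτ : ∀ f : H2, ∀ z ∈ ball (0 : ℂ) 1,
        ((τ : H2 →L[ℂ] H2) f).toFun z = v z * k z * f.toFun (φ z) := by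
    intro f z hz
    show ((Mv * U) f).toFun z = _
    rw [ContinuousLinearMap.mul_apply, hMv _ z hz, hU _ z hz, mul_assoc]
  clear_value τ
  have hpow : ∀ n : ℕ, ∀ f : H2, ∀ z ∈ ball (0 : ℂ) 1, (((τ : H2 →L[ℂ] H2) ^ n) f).toFun z =
      (∏ j ∈ Finset.range n, v (φ^[j] z)) * ((U ^ n) f).toFun z := by
    intro n f
    induction n with
    | zero => intro z hz; simp
    | succ n ih =>
      intro z hz
      rw [pow_succ', pow_succ', ContinuousLinearMap.mul_apply, ContinuousLinearMap.mul_apply,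
        hτ _ z hz, hU _ z hz, ih _ (H.hφm hz), Finset.prod_range_succ']
      simp only [Function.iterate_succ_apply, Function.iterate_zero, id]
      ring
  have hd1 : ∀ (u : ℂ → ℂ), DifferentiableOn ℂ u (ball 0 1) → ∀ n : ℕ, DifferentiableOn ℂ
      (fun z => ∏ j ∈ Finset.range n, u (φ^[j] z)) (ball 0 1) := by
    intro u hu n
    refine DifferentiableOn.fun_finsetProd fun j _ => hu.comp (hitd j) fun z hz => H.iter j hz
  have np1 : ∀ n : ℕ, ‖U ^ n‖ ≤ 1 := fun n => by
    induction n with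
    | zero => rw [pow_zero]; exact ContinuousLinearMap.norm_id_le
    | succ n ih =>
      rw [pow_succ]
      exact (norm_mul_le _ _).trans (mul_le_one₀ ih (norm_nonneg _) n1)
  have np2 : ∀ n : ℕ, ‖U' ^ n‖ ≤ 1 := fun n => by
    induction n with
    | zero => rw [pow_zero]; exact ContinuousLinearMap.norm_id_le
    | succ n ih =>
      rw [pow_succ]
      exact (norm_mul_le _ _).trans (mul_le_one₀ ih (norm_nonneg _) n2)
  refine ⟨τ, hτ, ?_, ?_⟩
  · intro M hMa hMb
    obtain ⟨C, hC, hb⟩ := H.prod_bound (h := fun z => ‖v z‖) hv.c.norm (fun z _ => norm_nonneg _) hMa hMb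
    refine ⟨C, hC, fun n => ?_⟩
    obtain ⟨P, hP, hPn⟩ := hs_mulOp (hd1 v hv.d n) (B := C * M ^ n) (fun z hz => by
      rw [norm_prod]; exact hb n z hz)
    have : (τ : H2 →L[ℂ] H2) ^ n = P * U ^ n := op_ext fun f z hz => by
      rw [hpow n f z hz, ContinuousLinearMap.mul_apply, hP _ z hz]
    rw [this]
    refine (norm_mul_le _ _).trans ((mul_le_of_le_one_right (norm_nonneg _) (np1 n)).trans hPn)
  · intro m hm hma hmb
    have hlt : ∀ {x : ℂ}, m < ‖v x‖ → ‖(v x)⁻¹‖ < m⁻¹ := fun {x} hx => by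
      rw [norm_inv]; exact inv_strictAnti₀ hm hx
    obtain ⟨C, hC, hb⟩ := H.prod_bound (h := fun z => ‖(v z)⁻¹‖) hv.inv.c.norm
      (fun z _ => norm_nonneg _) (hlt hma) (hlt hmb)
    refine ⟨C, hC, fun n => ?_⟩
    obtain ⟨P, hP, hPn⟩ := hs_mulOp (hd1 _ hv.inv.d n) (B := C * m⁻¹ ^ n) (fun z hz => by
      rw [norm_prod]; exact hb n z hz)
    have huu : U ^ n * U' ^ n = 1 := by
      have : Commute U U' := by rw [Commute, SemiconjBy, h1, h2]
      rw [← this.mul_pow, h1, one_pow]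
    have e3 : (τ : H2 →L[ℂ] H2) ^ n * (U' ^ n * P) = 1 := op_ext fun f z hz => by
      rw [ContinuousLinearMap.mul_apply, hpow n _ z hz, ← ContinuousLinearMap.mul_apply,
        ← mul_assoc, huu, one_mul, hP _ z hz, ← mul_assoc, ← Finset.prod_mul_distrib,
        Finset.prod_eq_one, one_mul]
      · rfl
      · intro j _
        exact mul_inv_cancel₀ (hv.n _ (ball_subset_closedBall (H.iter j hz)))
    have e4 : ((τ⁻¹ : (H2 →L[ℂ] H2)ˣ) : H2 →L[ℂ] H2) ^ n = U' ^ n * P := by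
      have : ((τ⁻¹ ^ n : (H2 →L[ℂ] H2)ˣ) : H2 →L[ℂ] H2) * (τ : H2 →L[ℂ] H2) ^ n = 1 := by
        rw [← Units.val_pow_eq_pow_val, ← Units.val_mul]; simp
      rw [← Units.val_pow_eq_pow_val]
      calc _ = ((τ⁻¹ ^ n : (H2 →L[ℂ] H2)ˣ) : H2 →L[ℂ] H2) * ((τ : H2 →L[ℂ] H2) ^ n * (U' ^ n * P)) := by
            rw [e3, mul_one]
        _ = _ := by rw [← mul_assoc, this, one_mul]
    rw [e4]
    refine (norm_mul_le _ _).trans ((mul_le_of_le_one_left (norm_nonneg _) (np2 n)).trans hPn)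

/-- the abstract two-sided sequence argument -/
lemma two_sided {τ : (H2 →L[ℂ] H2)ˣ} {lam : ℂ} {x y : H2} (δ : H2 →L[ℂ] ℂ)
    (hy : lam • y - (τ : H2 →L[ℂ] H2) y = x) (hl : lam ≠ 0)
    (hx0 : δ x ≠ 0)
    (hx1 : ∀ n : ℕ, 1 ≤ n → δ (((τ : H2 →L[ℂ] H2) ^ n) x) = 0)
    (hx2 : ∀ n : ℕ, 1 ≤ n → δ ((((τ⁻¹ : (H2 →L[ℂ] H2)ˣ) : H2 →L[ℂ] H2) ^ n) x) = 0)
    {C M C' m : ℝ} (hM : M < ‖lam‖) (hM0 : 0 ≤ M) (hm : ‖lam‖ < m)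
    (hb1 : ∀ n : ℕ, ‖δ (((τ : H2 →L[ℂ] H2) ^ n) y)‖ ≤ C * M ^ n)
    (hb2 : ∀ n : ℕ, ‖δ ((((τ⁻¹ : (H2 →L[ℂ] H2)ˣ) : H2 →L[ℂ] H2) ^ n) y)‖ ≤ C' * m⁻¹ ^ n) :
    False := by
  set T : H2 →L[ℂ] H2 := (τ : H2 →L[ℂ] H2)
  set S : H2 →L[ℂ] H2 := ((τ⁻¹ : (H2 →L[ℂ] H2)ˣ) : H2 →L[ℂ] H2)
  have hST : S * T = 1 := τ.inv_mul
  have hl0 : 0 < ‖lam‖ := norm_pos_iff.2 hl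
  have r1 : ∀ n : ℕ, lam * δ ((T ^ n) y) - δ ((T ^ (n + 1)) y) = δ ((T ^ n) x) := by
    intro n
    rw [← hy, map_sub, map_sub, map_smul, map_smul, pow_succ, ContinuousLinearMap.mul_apply, smul_eq_mul]
  have r2 : ∀ n : ℕ, lam * δ ((S ^ (n + 1)) y) - δ ((S ^ n) y) = δ ((S ^ (n + 1)) x) := by
    intro n
    have : (S ^ (n + 1)) (T y) = (S ^ n) y := by
      rw [← ContinuousLinearMap.mul_apply, pow_succ, mul_assoc, hST, mul_one]
    rw [← hy, map_sub, map_sub, map_smul, map_smul, this, smul_eq_mul]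
  have s1 : ∀ n : ℕ, δ ((T ^ (n + 1)) y) = lam ^ n * δ ((T ^ 1) y) := by
    intro n
    induction n with
    | zero => simp
    | succ n ih =>
      have := r1 (n + 1)
      rw [hx1 _ (by omega), ih] at this
      rw [pow_succ lam]
      linear_combination -this
  have s2 : ∀ n : ℕ, δ y = lam ^ n * δ ((S ^ n) y) := by
    intro n
    induction n with
    | zero => simp
    | succ n ih =>
      have := r2 n
      rw [hx2 _ (by omega)] at this
      rw [pow_succ]
      linear_combination ih - lam ^ n * this
  have z1 : δ ((T ^ 1) y) = 0 := by
    have hlim : Tendsto (fun n : ℕ => C * M * (M / ‖lam‖) ^ n) atTop (nhds 0) := by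
      simpa using (tendsto_pow_atTop_nhds_zero_of_lt_one (by positivity)
        ((div_lt_one hl0).2 hM)).const_mul (C * M)
    have : ‖δ ((T ^ 1) y)‖ ≤ 0 := by
      refine ge_of_tendsto' hlim fun n => ?_
      have := hb1 (n + 1)
      rw [s1, norm_mul, norm_pow] at this
      rw [div_pow, ← mul_div_assoc, le_div_iff₀ (by positivity)]
      calc _ = _ := mul_comm _ _
        _ ≤ _ := this
        _ = _ := by ring
    exact norm_le_zero_iff.1 this
  have z2 : δ y = 0 := by
    have hm0 : 0 < m := hl0.trans hm
    have hlim : Tendsto (fun n : ℕ => C' * (‖lam‖ / m) ^ n) atTop (nhds 0) := by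
      simpa using (tendsto_pow_atTop_nhds_zero_of_lt_one (by positivity)
        ((div_lt_one hm0).2 hm)).const_mul C'
    have : ‖δ y‖ ≤ 0 := by
      refine ge_of_tendsto' hlim fun n => ?_
      rw [s2 n, norm_mul, norm_pow, div_eq_mul_inv, mul_pow]
      calc _ ≤ ‖lam‖ ^ n * (C' * m⁻¹ ^ n) := by gcongr; exact hb2 n
        _ = _ := by ring
    exact norm_le_zero_iff.1 this
  apply hx0
  have := r1 0
  simp only [zero_add, z1, pow_zero, ContinuousLinearMap.one_apply, z2, mul_zero, sub_zero] at this
  exact this.symm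

end Ops

section Spec

open scoped ComplexConjugate

variable {φ k : ℂ → ℂ} {a b : ℂ} {ρ : ℝ}

/-- `T` is the weighted composition operator with symbol `v k` -/
def IsWC (φ k v : ℂ → ℂ) (T : H2 →L[ℂ] H2) : Prop :=
  ∀ f : H2, ∀ z ∈ ball (0 : ℂ) 1, (T f).toFun z = v z * k z * f.toFun (φ z)

/-- multiplication operator -/
def IsMul (q : ℂ → ℂ) (Q : H2 →L[ℂ] H2) : Prop :=
  ∀ f : H2, ∀ z ∈ ball (0 : ℂ) 1, (Q f).toFun z = q z * f.toFun z

lemma HSym.semi (H : HSym φ k a b ρ) {v v' q : ℂ → ℂ} {T T' Q : H2 →L[ℂ] H2}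
    (hT : IsWC φ k v T) (hT' : IsWC φ k v' T') (hQ : IsMul q Q)
    (h : ∀ z ∈ ball (0 : ℂ) 1, q z * v z = v' z * q (φ z)) : SemiconjBy Q T T' := by
  refine op_ext fun f z hz => ?_
  show (Q (T f)).toFun z = (T' (Q f)).toFun z
  rw [hQ _ z hz, hT _ z hz, hT' _ z hz, hQ _ _ (H.hφm hz)]
  linear_combination (k z * f.toFun (φ z)) * h z hz

lemma HSym.pow_form (H : HSym φ k a b ρ) {v : ℂ → ℂ} (hv : AdmW v) {T : H2 →L[ℂ] H2}
    (hT : IsWC φ k v T) (n : ℕ) : ∀ z ∈ ball (0 : ℂ) 1, ∃ p : ℂ, p ≠ 0 ∧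
      ∀ f : H2, ((T ^ n) f).toFun z = p * f.toFun (φ^[n] z) := by
  induction n with
  | zero => exact fun z hz => ⟨1, one_ne_zero, fun f => by simp⟩
  | succ n ih =>
    intro z hz
    obtain ⟨p, hp, h⟩ := ih _ (H.hφm hz)
    have hzc := ball_subset_closedBall hz
    refine ⟨v z * k z * p, mul_ne_zero (mul_ne_zero (hv.n z hzc) (H.k0 z hzc)) hp, fun f => ?_⟩
    rw [pow_succ']
    show (T ((T ^ n) f)).toFun z = _
    rw [hT _ z hz, h, Function.iterate_succ_apply]; ring

lemma HSym.surj_iter (H : HSym φ k a b ρ) (n : ℕ) : ∀ w ∈ ball (0 : ℂ) 1,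
    ∃ z ∈ ball (0 : ℂ) 1, φ^[n] z = w := by
  induction n with
  | zero => exact fun w hw => ⟨w, hw, rfl⟩
  | succ n ih =>
    intro w hw
    obtain ⟨z, hz, h⟩ := H.hsurj w hw
    obtain ⟨y, hy, h'⟩ := ih z hz
    exact ⟨y, hy, by rw [Function.iterate_succ_apply', h', h]⟩

lemma HSym.fwd_zero (H : HSym φ k a b ρ) {v g : ℂ → ℂ} (hv : AdmW v) {T : H2 →L[ℂ] H2}
    (hT : IsWC φ k v T) (hg : ∀ n : ℕ, 1 ≤ n → g (φ^[n] 0) = 0) {x : H2}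
    (hx : ∀ z ∈ ball (0 : ℂ) 1, g z = 0 → x.toFun z = 0) (n : ℕ) (hn : 1 ≤ n) :
    ((T ^ n) x).toFun 0 = 0 := by
  have h0 : (0 : ℂ) ∈ ball (0 : ℂ) 1 := by simp
  obtain ⟨p, hp, h⟩ := H.pow_form hv hT n 0 h0
  rw [h, hx _ (H.iter n h0) (hg n hn), mul_zero]

lemma HSym.bwd_zero (H : HSym φ k a b ρ) {v g : ℂ → ℂ} (hv : AdmW v) {τ : (H2 →L[ℂ] H2)ˣ}
    (hT : IsWC φ k v (τ : H2 →L[ℂ] H2))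
    (hg : ∀ n : ℕ, 1 ≤ n → ∀ w ∈ ball (0 : ℂ) 1, φ^[n] w = 0 → g w = 0) {x : H2}
    (hx : ∀ z ∈ ball (0 : ℂ) 1, g z = 0 → x.toFun z = 0) (n : ℕ) (hn : 1 ≤ n) :
    ((((τ⁻¹ : (H2 →L[ℂ] H2)ˣ) : H2 →L[ℂ] H2) ^ n) x).toFun 0 = 0 := by
  have h0 : (0 : ℂ) ∈ ball (0 : ℂ) 1 := by simp
  obtain ⟨w, hw, hw0⟩ := H.surj_iter n 0 h0
  obtain ⟨p, hp, h⟩ := H.pow_form hv hT n w hw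
  have e : ((τ : H2 →L[ℂ] H2) ^ n) ((((τ⁻¹ : (H2 →L[ℂ] H2)ˣ) : H2 →L[ℂ] H2) ^ n) x) = x := by
    have : (τ : H2 →L[ℂ] H2) ^ n * ((τ⁻¹ : (H2 →L[ℂ] H2)ˣ) : H2 →L[ℂ] H2) ^ n = 1 := by
      rw [← Units.val_pow_eq_pow_val, ← Units.val_pow_eq_pow_val, ← Units.val_mul]; simp
    have h2 := congrArg (fun A : H2 →L[ℂ] H2 => A x) this
    exact h2
  have h3 := h ((((τ⁻¹ : (H2 →L[ℂ] H2)ˣ) : H2 →L[ℂ] H2) ^ n) x)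
  rw [e, hw0, hx w hw (hg n hn w hw hw0)] at h3
  exact (mul_eq_zero.1 h3.symm).resolve_left hp

lemma semi_inv {Q : H2 →L[ℂ] H2} {τ τ' : (H2 →L[ℂ] H2)ˣ}
    (h : SemiconjBy Q (τ : H2 →L[ℂ] H2) (τ' : H2 →L[ℂ] H2)) :
    SemiconjBy Q ((τ⁻¹ : (H2 →L[ℂ] H2)ˣ) : H2 →L[ℂ] H2) ((τ'⁻¹ : (H2 →L[ℂ] H2)ˣ) : H2 →L[ℂ] H2) :=
  h.units_inv_right

/-- bound for vectors in the range of an intertwiner -/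
lemma bound_range (δ : H2 →L[ℂ] ℂ) {Q R T T' : H2 →L[ℂ] H2} (h : SemiconjBy Q T' T)
    (hR : Commute R T) {x e : H2} (hx : x = Q e) {C M : ℝ} 
    (hb : ∀ n : ℕ, ‖T' ^ n‖ ≤ C * M ^ n) (n : ℕ) :
    ‖δ ((T ^ n) (R x))‖ ≤ (‖δ‖ * ‖R‖ * ‖Q‖ * C * ‖e‖) * M ^ n := by
  have h1 : (T ^ n) (R x) = R (Q ((T' ^ n) e)) := by
    have e1 : R * T ^ n = T ^ n * R := (hR.pow_right n)
    have e2 : Q * T' ^ n = T ^ n * Q := (h.pow_right n)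
    have : T ^ n * R * Q = R * (Q * T' ^ n) := by rw [← e1, mul_assoc, e2]
    rw [hx]
    exact congrArg (fun A : H2 →L[ℂ] H2 => A e) this
  rw [h1]
  calc _ ≤ ‖δ‖ * (‖R‖ * (‖Q‖ * ((C * M ^ n) * ‖e‖))) := by
        refine (δ.le_opNorm _).trans ?_
        gcongr
        refine (R.le_opNorm _).trans ?_
        gcongr
        refine (Q.le_opNorm _).trans ?_
        gcongr
        refine ((T' ^ n).le_opNorm _).trans ?_
        gcongr
        exact hb n
    _ = _ := by ring

/-- bound through evaluation of an intertwiner -/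
lemma bound_eval (δ : H2 →L[ℂ] ℂ) {Q T T' : H2 →L[ℂ] H2} (h : SemiconjBy Q T T')
    {c : ℂ} (hc : c ≠ 0) (hδ : ∀ f, δ (Q f) = c * δ f) (y : H2) {C M : ℝ} 
    (hb : ∀ n : ℕ, ‖T' ^ n‖ ≤ C * M ^ n) (n : ℕ) :
    ‖δ ((T ^ n) y)‖ ≤ (‖c‖⁻¹ * ‖δ‖ * C * ‖Q y‖) * M ^ n := by
  have h1 : Q ((T ^ n) y) = (T' ^ n) (Q y) := by
    have e2 : Q * T ^ n = T' ^ n * Q := (h.pow_right n)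
    exact congrArg (fun A : H2 →L[ℂ] H2 => A y) e2
  have h2 := hδ ((T ^ n) y)
  rw [h1] at h2
  have h3 : δ ((T ^ n) y) = c⁻¹ * δ ((T' ^ n) (Q y)) := by rw [h2]; field_simp
  rw [h3, norm_mul, norm_inv]
  calc _ ≤ ‖c‖⁻¹ * (‖δ‖ * ((C * M ^ n) * ‖Q y‖)) := by
        gcongr
        refine (δ.le_opNorm _).trans ?_
        gcongr
        refine ((T' ^ n).le_opNorm _).trans ?_
        gcongr
        exact hb n
    _ = _ := by ring

/-- all that is known about the whole family of weighted operators -/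
def HasW (φ k : ℂ → ℂ) (a b : ℂ) : Prop := ∀ v : ℂ → ℂ, AdmW v → ∃ τ : (H2 →L[ℂ] H2)ˣ,
      IsWC φ k v (τ : H2 →L[ℂ] H2) ∧
      (∀ M : ℝ, ‖v a‖ < M → ‖v b‖ < M →
        ∃ C : ℝ, 0 < C ∧ ∀ n : ℕ, ‖(τ : H2 →L[ℂ] H2) ^ n‖ ≤ C * M ^ n) ∧
      (∀ m : ℝ, 0 < m → m < ‖v a‖ → m < ‖v b‖ →
        ∃ C : ℝ, 0 < C ∧ ∀ n : ℕ, ‖((τ⁻¹ : (H2 →L[ℂ] H2)ˣ) : H2 →L[ℂ] H2) ^ n‖ ≤ C * m⁻¹ ^ n)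

lemma exists_s {ρ L x y : ℝ} (hρ : 1 < ρ) (hL : 0 < L) (hy : 0 < y) :
    ∃ s : ℕ, x * (ρ ^ s)⁻¹ < L ∧ L < y * ρ ^ s := by
  obtain ⟨s, hs⟩ := pow_unbounded_of_one_lt (max (x / L) (L / y)) hρ
  have h1 := (le_max_left _ _).trans_lt hs
  have h2 := (le_max_right _ _).trans_lt hs
  have : 0 < ρ ^ s := by positivity
  refine ⟨s, ?_, ?_⟩
  · rw [← div_eq_mul_inv, div_lt_iff₀ this]
    rw [div_lt_iff₀ hL] at h1
    linarith
  · rw [div_lt_iff₀ hy] at h2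
    linarith

lemma HSym.open_annulus (H : HSym φ k a b ρ) (hW : HasW φ k a b) {v : ℂ → ℂ} (hv : AdmW v)
    {τ : (H2 →L[ℂ] H2)ˣ} (hτ : IsWC φ k v (τ : H2 →L[ℂ] H2)) {lam : ℂ}
    (hlam : (‖v b‖ < ‖lam‖ ∧ ‖lam‖ < ‖v a‖) ∨ (‖v a‖ < ‖lam‖ ∧ ‖lam‖ < ‖v b‖)) :
    lam ∈ spectrum ℂ (τ : H2 →L[ℂ] H2) := by
  have h0 : (0 : ℂ) ∈ ball (0 : ℂ) 1 := by simp
  have hac : a ∈ closedBall (0 : ℂ) 1 := by simp [H.ha]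
  have hbc : b ∈ closedBall (0 : ℂ) 1 := by simp [H.hb]
  have hρ0 : 0 < ρ := by linarith [H.hρ]
  have hρc : (ρ : ℂ) ≠ 0 := by exact_mod_cast hρ0.ne'
  have hva : 0 < ‖v a‖ := norm_pos_iff.2 (hv.n a hac)
  have hvb : 0 < ‖v b‖ := norm_pos_iff.2 (hv.n b hbc)
  have hl0 : 0 < ‖lam‖ := by rcases hlam with h | h <;> linarith [h.1]
  have hl : lam ≠ 0 := norm_pos_iff.1 hl0
  rw [spectrum.mem_iff]
  rintro ⟨R, hR⟩
  obtain ⟨V, W, r, ⟨Vc, Wc, rc⟩, ⟨Vd, Wd, rd⟩, r0, VW0, hVφ, hWφ, hra, hrb⟩ := H.exists_V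
  obtain ⟨g, B, gd, gB, g0, gf, gb⟩ := H.exists_g
  obtain ⟨Mg, hMg, _⟩ := hs_mulOp gd gB
  obtain ⟨e1, he1⟩ := hs_one
  set e := Mg e1 with he
  have hez : ∀ z ∈ ball (0 : ℂ) 1, e.toFun z = g z := fun z hz => by
    rw [he, hMg _ z hz, he1 z hz, mul_one]
  set R' : H2 →L[ℂ] H2 := ((R⁻¹ : (H2 →L[ℂ] H2)ˣ) : H2 →L[ℂ] H2)
  have hcomm : Commute (R : H2 →L[ℂ] H2) (τ : H2 →L[ℂ] H2) := by
    rw [hR]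
    exact Commute.sub_left (Algebra.commutes lam (τ : H2 →L[ℂ] H2)) (Commute.refl _)
  have hc1 : Commute R' (τ : H2 →L[ℂ] H2) := hcomm.units_inv_left
  have hc2 : Commute R' ((τ⁻¹ : (H2 →L[ℂ] H2)ˣ) : H2 →L[ℂ] H2) := hc1.units_inv_right
  have hres : ∀ x : H2, lam • (R' x) - (τ : H2 →L[ℂ] H2) (R' x) = x := by
    intro x
    have : (R : H2 →L[ℂ] H2) * R' = 1 := R.mul_inv
    rw [hR] at this
    have h2 := congrArg (fun A : H2 →L[ℂ] H2 => A x) this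
    simpa [Algebra.algebraMap_eq_smul_one] using h2
  set δ : H2 →L[ℂ] ℂ := innerSL ℂ (hsK 0) with hδ
  have hδe : ∀ f : H2, δ f = f.toFun 0 := fun f => by
    rw [hδ, innerSL_apply_apply, hsK_inner h0]
  have hr : AdmW r := ⟨rc, rd, r0⟩
  rcases hlam with ⟨hl1, hl2⟩ | ⟨hl1, hl2⟩
  · obtain ⟨s, hs1, hs2⟩ := exists_s (x := ‖v a‖) H.hρ hl0 hvb
    obtain ⟨A, hA⟩ := hs_mulOp_c (Vc.pow s) (Vd.pow s)
    obtain ⟨Bo, hBo⟩ := hs_mulOp_c (Wc.pow s) (Wd.pow s)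
    have hv1 : AdmW (fun z => v z * r z ^ s) := hv.mul (hr.pow s)
    have hv2 : AdmW (fun z => v z * (ρ * r z) ^ s) := hv.mul ((hr.const_mul hρc).pow s)
    obtain ⟨τ1, ht1, hg1, -⟩ := hW _ hv1
    obtain ⟨τ2, ht2, -, hg2⟩ := hW _ hv2
    have sA : SemiconjBy A (τ1 : H2 →L[ℂ] H2) (τ : H2 →L[ℂ] H2) := H.semi ht1 hτ hA fun z hz => by
      simp only [Pi.pow_apply]; rw [hVφ z hz]; ring
    have sB : SemiconjBy Bo (τ2 : H2 →L[ℂ] H2) (τ : H2 →L[ℂ] H2) := H.semi ht2 hτ hBo fun z hz => by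
      simp only [Pi.pow_apply]; rw [hWφ z hz]; ring
    have hx : A (Bo e) = Bo (A e) := hs_ext fun z hz => by
      rw [hA _ z hz, hBo _ z hz, hBo _ z hz, hA _ z hz]; ring
    have hxz : ∀ z ∈ ball (0 : ℂ) 1, (A (Bo e)).toFun z = V z ^ s * (W z ^ s * g z) := fun z hz => by
      rw [hA _ z hz, hBo _ z hz, hez z hz]; rfl
    obtain ⟨M, hM1, hM2⟩ : ∃ M, max (‖v a * r a ^ s‖) (‖v b * r b ^ s‖) < M ∧ M < ‖lam‖ := by
      refine exists_between (max_lt ?_ ?_)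
      · rw [norm_mul, norm_pow, hra, inv_pow]; exact hs1
      · rw [norm_mul, norm_pow, hrb, one_pow, mul_one]; exact hl1
    obtain ⟨m, hm1, hm2⟩ : ∃ m, ‖lam‖ < m ∧
        m < min (‖v a * (ρ * r a) ^ s‖) (‖v b * (ρ * r b) ^ s‖) := by
      refine exists_between (lt_min ?_ ?_)
      · rw [norm_mul, norm_pow, norm_mul, hra, Complex.norm_real, Real.norm_of_nonneg hρ0.le,
          mul_inv_cancel₀ hρ0.ne', one_pow, mul_one]; exact hl2
      · rw [norm_mul, norm_pow, norm_mul, hrb, Complex.norm_real, Real.norm_of_nonneg hρ0.le,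
          mul_one]; exact hs2
    obtain ⟨C1, hC1, hb1⟩ := hg1 M ((le_max_left _ _).trans_lt hM1) ((le_max_right _ _).trans_lt hM1)
    obtain ⟨C2, hC2, hb2⟩ := hg2 m (hl0.trans hm1) (hm2.trans_le (min_le_left _ _))
      (hm2.trans_le (min_le_right _ _))
    refine two_sided (x := A (Bo e)) δ (hres _) hl ?_ ?_ ?_ hM2
      ((norm_nonneg _).trans ((le_max_left _ _).trans hM1.le)) hm1
      (bound_range δ sA hc1 rfl hb1) (bound_range δ (semi_inv sB) hc2 hx hb2)
    · rw [hδe, hxz 0 h0]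
      exact mul_ne_zero (pow_ne_zero _ (VW0 0 h0).1) (mul_ne_zero (pow_ne_zero _ (VW0 0 h0).2) g0)
    · intro n hn
      rw [hδe]
      exact H.fwd_zero hv hτ gf (fun z hz h => by rw [hxz z hz, h]; simp) n hn
    · intro n hn
      rw [hδe]
      exact H.bwd_zero hv hτ gb (fun z hz h => by rw [hxz z hz, h]; simp) n hn
  · obtain ⟨s, hs1, hs2⟩ := exists_s (x := ‖v b‖) H.hρ hl0 hva
    obtain ⟨A, hA⟩ := hs_mulOp_c (Vc.pow s) (Vd.pow s)
    obtain ⟨Bo, hBo⟩ := hs_mulOp_c (Wc.pow s) (Wd.pow s)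
    have hv1 : AdmW (fun z => v z * ((ρ * r z) ^ s)⁻¹) := hv.mul ((hr.const_mul hρc).pow s).inv
    have hv2 : AdmW (fun z => v z * (r z ^ s)⁻¹) := hv.mul (hr.pow s).inv
    obtain ⟨τ1, ht1, hg1, -⟩ := hW _ hv1
    obtain ⟨τ2, ht2, -, hg2⟩ := hW _ hv2
    have sB : SemiconjBy Bo (τ : H2 →L[ℂ] H2) (τ1 : H2 →L[ℂ] H2) := H.semi hτ ht1 hBo fun z hz => by
      have := r0 z (ball_subset_closedBall hz)
      simp only [Pi.pow_apply]; rw [hWφ z hz]; field_simp; ring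
    have sA : SemiconjBy A (τ : H2 →L[ℂ] H2) (τ2 : H2 →L[ℂ] H2) := H.semi hτ ht2 hA fun z hz => by
      have := r0 z (ball_subset_closedBall hz)
      simp only [Pi.pow_apply]; rw [hVφ z hz]; field_simp; ring
    obtain ⟨M, hM1, hM2⟩ : ∃ M, max (‖v a * ((ρ * r a) ^ s)⁻¹‖) (‖v b * ((ρ * r b) ^ s)⁻¹‖) < M
        ∧ M < ‖lam‖ := by
      refine exists_between (max_lt ?_ ?_)
      · rw [norm_mul, norm_inv, norm_pow, norm_mul, hra, Complex.norm_real, Real.norm_of_nonneg hρ0.le,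
          mul_inv_cancel₀ hρ0.ne', one_pow, inv_one, mul_one]; exact hl1
      · rw [norm_mul, norm_inv, norm_pow, norm_mul, hrb, Complex.norm_real, Real.norm_of_nonneg hρ0.le,
          mul_one]; exact hs1
    obtain ⟨m, hm1, hm2⟩ : ∃ m, ‖lam‖ < m ∧
        m < min (‖v a * (r a ^ s)⁻¹‖) (‖v b * (r b ^ s)⁻¹‖) := by
      refine exists_between (lt_min ?_ ?_)
      · rw [norm_mul, norm_inv, norm_pow, hra, inv_pow, inv_inv]; exact hs2
      · rw [norm_mul, norm_inv, norm_pow, hrb, one_pow, inv_one, mul_one]; exact hl2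
    obtain ⟨C1, hC1, hb1⟩ := hg1 M ((le_max_left _ _).trans_lt hM1) ((le_max_right _ _).trans_lt hM1)
    obtain ⟨C2, hC2, hb2⟩ := hg2 m (hl0.trans hm1) (hm2.trans_le (min_le_left _ _))
      (hm2.trans_le (min_le_right _ _))
    have hx : ∀ z ∈ ball (0 : ℂ) 1, g z = 0 → e.toFun z = 0 := fun z hz h => by rw [hez z hz, h]
    refine two_sided (x := e) δ (hres _) hl ?_ ?_ ?_ hM2
      ((norm_nonneg _).trans ((le_max_left _ _).trans hM1.le)) hm1
      (bound_eval δ sB (c := W 0 ^ s) (pow_ne_zero _ (VW0 0 h0).2) (fun f => ?_) (R' e) hb1)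
      (bound_eval δ (semi_inv sA) (c := V 0 ^ s) (pow_ne_zero _ (VW0 0 h0).1) (fun f => ?_) (R' e) hb2)
    · rw [hδe, hez 0 h0]
      exact g0
    · intro n hn
      rw [hδe]
      exact H.fwd_zero hv hτ gf hx n hn
    · intro n hn
      rw [hδe]
      exact H.bwd_zero hv hτ gb hx n hn
    · rw [hδe, hδe, hBo _ 0 h0]; rfl
    · rw [hδe, hδe, hA _ 0 h0]; rfl

end Spec

section Final

variable {φ k : ℂ → ℂ} {a b : ℂ} {ρ : ℝ}

lemma spec_le {T : H2 →L[ℂ] H2} {C M : ℝ} (hM : 0 < M) (hb : ∀ n : ℕ, ‖T ^ n‖ ≤ C * M ^ n)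
    {lam : ℂ} (hl : lam ∈ spectrum ℂ T) : ‖lam‖ ≤ M := by
  by_contra! h
  obtain ⟨n, hn⟩ := pow_unbounded_of_one_lt C ((one_lt_div hM).2 h)
  have h1 := spectrum.norm_le_norm_mul_of_mem (spectrum.pow_mem_pow T n hl)
  have h2 : ‖(1 : H2 →L[ℂ] H2)‖ ≤ 1 := ContinuousLinearMap.norm_id_le
  have h3 : ‖lam‖ ^ n ≤ C * M ^ n := by
    rw [← norm_pow]
    exact h1.trans ((mul_le_of_le_one_right (norm_nonneg _) h2).trans (hb n))
  rw [div_pow, lt_div_iff₀ (by positivity)] at hn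
  linarith

lemma HSym.rot (H : HSym φ k a b ρ) {v : ℂ → ℂ} {T : H2 →L[ℂ] H2} (hT : IsWC φ k v T) (θ : ℝ)
    {lam : ℂ} (hl : lam ∈ spectrum ℂ T) : Complex.exp (θ * Complex.I) * lam ∈ spectrum ℂ T := by
  obtain ⟨h, h', B, hd, hd', hB, hB', hh, hφ⟩ := H.exists_h θ
  obtain ⟨A, hA, -⟩ := hs_mulOp hd hB
  obtain ⟨A', hA', -⟩ := hs_mulOp hd' hB'
  have e1 : A * A' = 1 := op_ext fun f z hz => by
    show (A (A' f)).toFun z = f.toFun z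
    rw [hA _ z hz, hA' _ z hz, ← mul_assoc, hh z hz, one_mul]
  have e2 : A' * A = 1 := op_ext fun f z hz => by
    show (A' (A f)).toFun z = f.toFun z
    rw [hA' _ z hz, hA _ z hz, ← mul_assoc, mul_comm (h' z), hh z hz, one_mul]
  set c := Complex.exp (θ * Complex.I) with hc
  have hc0 : c ≠ 0 := Complex.exp_ne_zero _
  have e3 : T * A = c • (A * T) := op_ext fun f z hz => by
    show (T (A f)).toFun z = (c • (A (T f))).toFun z
    rw [hs_smul _ _ hz, hT _ z hz, hA _ _ (H.hφm hz), hA _ z hz, hT _ z hz, hφ z hz]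
    ring
  rw [spectrum.mem_iff] at hl ⊢
  intro hu
  apply hl
  let UA : (H2 →L[ℂ] H2)ˣ := ⟨A, A', e1, e2⟩
  have e4 : algebraMap ℂ (H2 →L[ℂ] H2) lam - T =
      (algebraMap ℂ (H2 →L[ℂ] H2) c⁻¹) * (A' * (algebraMap ℂ (H2 →L[ℂ] H2) (c * lam) - T) * A) := by
    simp only [Algebra.algebraMap_eq_smul_one, mul_sub, sub_mul, mul_assoc, e3]
    simp only [mul_smul_comm, smul_mul_assoc, one_mul, mul_one, e2, smul_smul, ← mul_assoc]
    rw [mul_comm c lam, mul_assoc lam, mul_inv_cancel₀ hc0, mul_one, one_smul]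
  rw [e4]
  refine IsUnit.mul ?_ (IsUnit.mul (IsUnit.mul ?_ hu) ?_)
  · exact (IsUnit.mk0 _ (inv_ne_zero hc0)).map (algebraMap ℂ (H2 →L[ℂ] H2))
  · exact (UA⁻¹).isUnit
  · exact UA.isUnit

lemma hs_nontriv : Nontrivial H2 := by
  obtain ⟨f, hf⟩ := hs_one
  refine ⟨f, 0, fun h => ?_⟩
  have h1 := hf 0 (by simp)
  rw [h] at h1
  simp [H2.toFun] at h1

lemma HSym.spec (H : HSym φ k a b ρ) (hW : HasW φ k a b) {v : ℂ → ℂ} (hv : AdmW v)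
    {T : H2 →L[ℂ] H2} (hT : IsWC φ k v T) :
    spectrum ℂ T = {lam : ℂ | min ‖v a‖ ‖v b‖ ≤ ‖lam‖ ∧ ‖lam‖ ≤ max ‖v a‖ ‖v b‖} := by
  have hac : a ∈ closedBall (0 : ℂ) 1 := by simp [H.ha]
  have hbc : b ∈ closedBall (0 : ℂ) 1 := by simp [H.hb]
  have hva : 0 < ‖v a‖ := norm_pos_iff.2 (hv.n a hac)
  have hvb : 0 < ‖v b‖ := norm_pos_iff.2 (hv.n b hbc)
  obtain ⟨τ, hτ, hg1, hg2⟩ := hW v hv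
  obtain rfl : (τ : H2 →L[ℂ] H2) = T := op_ext fun f z hz => by rw [hτ f z hz, hT f z hz]
  have hsub : ∀ lam ∈ spectrum ℂ (τ : H2 →L[ℂ] H2),
      min ‖v a‖ ‖v b‖ ≤ ‖lam‖ ∧ ‖lam‖ ≤ max ‖v a‖ ‖v b‖ := by
    intro lam hl
    constructor
    · refine le_of_forall_lt fun m hm => ?_
      by_contra! hlm
      obtain ⟨m', h1, h2⟩ := exists_between hm
      have hm' : 0 < m' := (norm_nonneg lam).trans_lt (hlm.trans_lt h1)
      obtain ⟨C, hC, hb⟩ := hg2 m' hm' (h2.trans_le (min_le_left _ _)) (h2.trans_le (min_le_right _ _))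
      have hl0 : lam ≠ 0 := spectrum.ne_zero_of_mem_of_unit hl
      have hli : lam⁻¹ ∈ spectrum ℂ ((τ⁻¹ : (H2 →L[ℂ] H2)ˣ) : H2 →L[ℂ] H2) := by
        have := (spectrum.inv_mem_iff (r := Units.mk0 lam hl0) (a := τ)).1 hl
        simpa using this
      have h3 := spec_le (inv_pos.2 hm') hb hli
      rw [norm_inv] at h3
      have := (inv_le_inv₀ (norm_pos_iff.2 hl0) hm').1 h3
      linarith
    · refine le_of_forall_gt_imp_ge_of_dense fun M hM => ?_
      obtain ⟨C, hC, hb⟩ := hg1 M ((le_max_left _ _).trans_lt hM) ((le_max_right _ _).trans_lt hM)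
      exact spec_le (hva.trans ((le_max_left _ _).trans_lt hM)) hb hl
  refine Set.Subset.antisymm hsub ?_
  rintro lam ⟨h1, h2⟩
  have hmin : 0 < min ‖v a‖ ‖v b‖ := lt_min hva hvb
  have hl0 : 0 < ‖lam‖ := hmin.trans_le h1
  by_cases heq : ‖v a‖ = ‖v b‖
  · haveI := hs_nontriv
    obtain ⟨μ, hμ⟩ := spectrum.nonempty (τ : H2 →L[ℂ] H2)
    obtain ⟨h3, h4⟩ := hsub μ hμ
    have hn : ‖lam‖ = ‖μ‖ := by
      rw [heq, min_self] at h1 h3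
      rw [heq, max_self] at h2 h4
      linarith
    have hμ0 : μ ≠ 0 := norm_pos_iff.1 (hn ▸ hl0)
    have hq : ‖lam / μ‖ = 1 := by rw [norm_div, hn, div_self (norm_ne_zero_iff.2 hμ0)]
    have := H.rot hT (lam / μ).arg hμ
    have e : Complex.exp ((lam / μ).arg * Complex.I) = lam / μ := by
      have := Complex.norm_mul_exp_arg_mul_I (lam / μ)
      rwa [hq, Complex.ofReal_one, one_mul] at this
    rwa [e, div_mul_cancel₀ _ hμ0] at this
  · have hlt : min ‖v a‖ ‖v b‖ < max ‖v a‖ ‖v b‖ := min_lt_max.2 heq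
    have hopen : ∀ t ∈ Set.Ioo (min ‖v a‖ ‖v b‖) (max ‖v a‖ ‖v b‖),
        (t : ℂ) * (lam / ‖lam‖) ∈ spectrum ℂ (τ : H2 →L[ℂ] H2) := by
      rintro t ⟨ht1, ht2⟩
      have hn : ‖(t : ℂ) * (lam / ‖lam‖)‖ = t := by
        rw [norm_mul, norm_div, Complex.norm_real, Complex.norm_real, norm_norm, div_self hl0.ne',
          mul_one, Real.norm_of_nonneg (hmin.trans ht1).le]
      refine H.open_annulus hW hv hT ?_
      rw [hn]
      rcases lt_or_gt_of_ne heq with h | h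
      · right
        rw [min_eq_left h.le] at ht1
        rw [max_eq_right h.le] at ht2
        exact ⟨ht1, ht2⟩
      · left
        rw [min_eq_right h.le] at ht1
        rw [max_eq_left h.le] at ht2
        exact ⟨ht1, ht2⟩
    have hcl : ‖lam‖ ∈ closure (Set.Ioo (min ‖v a‖ ‖v b‖) (max ‖v a‖ ‖v b‖)) := by
      rw [closure_Ioo hlt.ne]
      exact ⟨h1, h2⟩
    have hcont : Continuous (fun t : ℝ => (t : ℂ) * (lam / ‖lam‖)) := by fun_prop
    have := map_mem_closure hcont hcl hopen
    rw [(spectrum.isClosed (τ : H2 →L[ℂ] H2)).closure_eq] at this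
    have hc : (‖lam‖ : ℂ) ≠ 0 := by exact_mod_cast hl0.ne'
    rwa [mul_div_cancel₀ _ hc] at this

end Final

/-- Let `φ` be a hyperbolic automorphism of `𝔻` with attracting fixed point `a` and repelling
fixed point `b` on the boundary, `ρ = φ'(a)⁻¹ = φ'(b) > 1`, and let `ψ` be holomorphic on `𝔻`,
continuous on the closed disc and bounded away from zero. Then the spectrum of the weighted
composition operator `C_{ψ,φ}` on `H²(𝔻)` is the annulus
`{λ : min(|ψ(a)|√ρ, |ψ(b)|/√ρ) ≤ |λ| ≤ max(|ψ(a)|√ρ, |ψ(b)|/√ρ)}`. -/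
theorem stmt17 (φ φinv : ℂ → ℂ)
    (hφc : ContinuousOn φ (closedBall 0 1))
    (hφ : DifferentiableOn ℂ φ (ball 0 1))
    (hφinv : DifferentiableOn ℂ φinv (ball 0 1))
    (hφm : Set.MapsTo φ (ball 0 1) (ball 0 1))
    (hφinvm : Set.MapsTo φinv (ball 0 1) (ball 0 1))
    (hleft : ∀ z ∈ ball (0 : ℂ) 1, φinv (φ z) = z)
    (hright : ∀ z ∈ ball (0 : ℂ) 1, φ (φinv z) = z)
    (a b : ℂ) (ha : ‖a‖ = 1) (hb : ‖b‖ = 1) (hab : a ≠ b)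
    (hfixa : φ a = a) (hfixb : φ b = b)
    (honly : ∀ z ∈ closedBall (0 : ℂ) 1, φ z = z → z = a ∨ z = b)
    (ρ : ℝ) (hρ : 1 < ρ)
    (hderiva : deriv φ a = ((ρ : ℂ))⁻¹) (hderivb : deriv φ b = (ρ : ℂ))
    (hDW : ∀ z ∈ ball (0 : ℂ) 1, Tendsto (fun n => φ^[n] z) atTop (nhds a))
    (ψ : ℂ → ℂ)
    (hψc : ContinuousOn ψ (closedBall 0 1))
    (hψ : DifferentiableOn ℂ ψ (ball 0 1))
    (hψ0 : ∃ ε > (0 : ℝ), ∀ z ∈ ball (0 : ℂ) 1, ε ≤ ‖ψ z‖)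
    (T : H2 →L[ℂ] H2)
    (hT : ∀ f : H2, ∀ z ∈ ball (0 : ℂ) 1, (T f).toFun z = ψ z * f.toFun (φ z)) :
    spectrum ℂ T =
      {lam : ℂ |
        min (‖ψ a‖ * Real.sqrt ρ) (‖ψ b‖ / Real.sqrt ρ) ≤ ‖lam‖ ∧
        ‖lam‖ ≤ max (‖ψ a‖ * Real.sqrt ρ) (‖ψ b‖ / Real.sqrt ρ)} := by
  obtain ⟨k, kc, kd, k0, kid, ka, kb, cross⟩ := mb_facts φ φinv hφc hφ hφinv hφm hφinvm hleft hright
    a b ha hb hab hfixa hfixb ρ hρ hderiva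
  have H : HSym φ k a b ρ := ⟨ha, hb, hab, hρ, hφ, hφm,
    fun w hw => ⟨φinv w, hφinvm hw, hright w hw⟩, kc, kd, k0, kid, ka, kb, cross⟩
  have hψA : AdmW ψ := by
    refine ⟨hψc, hψ, fun z hz => ?_⟩
    obtain ⟨ε, hε, hb'⟩ := hψ0
    have hle : ε ≤ ‖ψ z‖ := by
      have hcl : closure (ball (0 : ℂ) 1) = closedBall 0 1 := closure_ball _ one_ne_zero
      refine le_on_closure (f := fun _ => ε) (g := fun z => ‖ψ z‖) hb' continuousOn_const ?_ (hcl ▸ hz)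
      rw [hcl]
      exact hψc.norm
    exact norm_pos_iff.1 (hε.trans_le hle)
  have hkA : AdmW k := ⟨kc, kd, k0⟩
  obtain ⟨P, hP⟩ := hs_mulOp_c (hkA.mul hψA.inv).c (hkA.mul hψA.inv).d
  have hU : ∀ f : H2, ∀ z ∈ ball (0 : ℂ) 1, ((P * T) f).toFun z = k z * f.toFun (φ z) := by
    intro f z hz
    have := hψA.n z (ball_subset_closedBall hz)
    show (P (T f)).toFun z = _
    rw [hP _ z hz, hT _ z hz]
    field_simp
  obtain ⟨U', u1, u2, n1, n2⟩ := H.exists_U (P * T) hU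
  have hW : HasW φ k a b := fun v hv => H.weight hU u1 u2 n1 n2 hv
  have hTw : IsWC φ k (fun z => ψ z * (k z)⁻¹) T := by
    intro f z hz
    have := k0 z (ball_subset_closedBall hz)
    rw [hT f z hz]
    field_simp
  have hs := H.spec hW (hψA.mul hkA.inv) hTw
  simp only [norm_mul, norm_inv, ka, kb, inv_inv] at hs
  rw [hs]
  simp only [div_eq_mul_inv]
end
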